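/- Suppose d is a square in ℤ_pˣ, and let β : ℕ → ℝ be determined by β(0) = 1, β(1) = (λ−2)/(q−1), and q·β(k+2) − λ·β(k+1) + β(k) = 0 for all k. Then there exists s₀ ∈ ℝ such that for every real s > s₀ the function f_s is integrable on V_d(ℤ_p) and ∫_{V_d(ℤ_p)} f_s = (1/2)·(1−q⁻¹)⁻¹·(1−q⁻²)³·(1−q^{1−2s})⁻¹·(1−(q⁻¹λ²−1)·q^{1−2s}+(q⁻¹λ²−1)·q^{2−4s}−q^{3−6s})⁻¹·(1 + (1+q⁻¹+q^{−2s}−2q⁻¹λ)·q^{1−2s}). -/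

import Mathlib

open Matrix MeasureTheory

noncomputable instance (p : ℕ) [Fact p.Prime] : MeasurableSpace ℚ_[p] := borel _
instance (p : ℕ) [Fact p.Prime] : BorelSpace ℚ_[p] := ⟨rfl⟩
noncomputable instance (p : ℕ) [Fact p.Prime] :
    MeasurableSpace (Matrix (Fin 2) (Fin 2) ℚ_[p]) :=
  inferInstanceAs (MeasurableSpace (Fin 2 → Fin 2 → ℚ_[p]))

/-- `V = M₂(ℚ_p) × M₂(ℚ_p)`. -/
abbrev VV (p : ℕ) [Fact p.Prime] :=
  Matrix (Fin 2) (Fin 2) ℚ_[p] × Matrix (Fin 2) (Fin 2) ℚ_[p]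

/-- `P(x,y) = −det(x·y^ι − y·x^ι)`, where `m^ι` is the adjugate. -/
noncomputable def Pq {p : ℕ} [Fact p.Prime] (v : VV p) : ℚ_[p] :=
  - (v.1 * v.2.adjugate - v.2 * v.1.adjugate).det

/-- The equivariant map `F₁ : V → ℚ_p³`. -/
noncomputable def Fmap1 {p : ℕ} [Fact p.Prime] (v : VV p) : ℚ_[p] × ℚ_[p] × ℚ_[p] :=
  (v.1 0 0 * v.2 0 1 - v.1 0 1 * v.2 0 0,
   (v.1 0 0 * v.2 1 1 - v.1 0 1 * v.2 1 0) + (v.1 1 0 * v.2 0 1 - v.1 1 1 * v.2 0 0),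
   v.1 1 0 * v.2 1 1 - v.1 1 1 * v.2 1 0)

/-- The equivariant map `F₂ : V → ℚ_p³`. -/
noncomputable def Fmap2 {p : ℕ} [Fact p.Prime] (v : VV p) : ℚ_[p] × ℚ_[p] × ℚ_[p] :=
  (v.1 0 0 * v.2 1 0 - v.2 0 0 * v.1 1 0,
   (v.1 0 0 * v.2 1 1 - v.2 0 1 * v.1 1 0) + (v.1 0 1 * v.2 1 0 - v.2 0 0 * v.1 1 1),
   v.1 0 1 * v.2 1 1 - v.2 0 1 * v.1 1 1)

/-- The maximum of the `p`-adic absolute values of the three coordinates. -/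
noncomputable def mcoord {p : ℕ} [Fact p.Prime] (t : ℚ_[p] × ℚ_[p] × ℚ_[p]) : ℝ :=
  max (max ‖t.1‖ ‖t.2.1‖) ‖t.2.2‖

/-- `V_d(ℤ_p)`: integral pairs whose invariant `P` lies in `d·(ℚ_pˣ)²`. -/
def Vd (p : ℕ) [Fact p.Prime] (d : ℤ_[p]) : Set (VV p) :=
  {v | (∀ i j, ‖v.1 i j‖ ≤ 1) ∧ (∀ i j, ‖v.2 i j‖ ≤ 1) ∧
    ∃ c : ℚ_[p], c ≠ 0 ∧ Pq v = (d : ℚ_[p]) * c ^ 2}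

open Classical in
/-- The integrand `f_s`. -/
noncomputable def fs (p : ℕ) [Fact p.Prime] (d : ℤ_[p]) (β : ℕ → ℝ) (s : ℝ)
    (v : VV p) : ℝ :=
  if h : Pq v ≠ 0 ∧
      (∃ l : ℕ, ‖(d : ℚ_[p])‖ * mcoord (Fmap1 v) ^ 2 = ‖Pq v‖ * (p : ℝ) ^ (2 * l)) ∧
      (∃ l : ℕ, ‖(d : ℚ_[p])‖ * mcoord (Fmap2 v) ^ 2 = ‖Pq v‖ * (p : ℝ) ^ (2 * l)) then
    β h.2.1.choose * β h.2.2.choose * ‖Pq v‖ ^ (s - 2)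
  else 0

section partOne
open Metric Set ENNReal

lemma haar_eq_of_one {G : Type*} [AddGroup G] [TopologicalSpace G] [IsTopologicalAddGroup G]
    [LocallyCompactSpace G] [SecondCountableTopology G] [MeasurableSpace G] [BorelSpace G]
    (μ ν : Measure G) [μ.IsAddHaarMeasure] [ν.IsAddHaarMeasure] (K : Set G)
    (h1 : μ K = 1) (h2 : ν K = 1) : μ = ν := by
  have h := Measure.isAddLeftInvariant_eq_smul μ ν
  have h3 : μ K = (μ.addHaarScalarFactor ν : ℝ≥0∞) * ν K := by
    conv_lhs => rw [h]
    rw [Measure.smul_apply, ENNReal.smul_def, smul_eq_mul]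
  rw [h1, h2, mul_one] at h3
  have h4 : μ.addHaarScalarFactor ν = 1 := by exact_mod_cast h3.symm
  rw [h, h4, one_smul]

variable {p : ℕ} [Fact p.Prime]

instance : SecondCountableTopology ℚ_[p] := inferInstance

/-- normalised Haar measure on `ℚ_p` -/
noncomputable def nu (p : ℕ) [Fact p.Prime] : Measure ℚ_[p] :=
  Measure.addHaarMeasure ⟨⟨closedBall 0 1, isCompact_closedBall 0 1⟩,
    ⟨0, ball_subset_interior_closedBall (by simp)⟩⟩

instance : (nu p).IsAddHaarMeasure := by unfold nu; infer_instance
instance : SigmaFinite (nu p) := by unfold nu; infer_instance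

lemma nu_unit : nu p (closedBall 0 1) = 1 := by
  unfold nu
  exact Measure.addHaarMeasure_self (K₀ := ⟨⟨closedBall (0:ℚ_[p]) 1, isCompact_closedBall 0 1⟩,
    ⟨0, ball_subset_interior_closedBall (by simp)⟩⟩)

lemma hp1 : (1:ℝ) < p := by exact_mod_cast (Fact.out : p.Prime).one_lt
lemma hp0 : (0:ℝ) < p := lt_trans one_pos hp1

lemma norm_lt_iff_le (x : ℚ_[p]) (n : ℤ) : ‖x‖ < (p:ℝ) ^ (-n) ↔ ‖x‖ ≤ (p:ℝ) ^ (-(n+1)) := by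
  rw [Padic.norm_le_pow_iff_norm_lt_pow_add_one]
  congr! 2; ring

lemma nu_small : nu p (closedBall 0 (p:ℝ)⁻¹) = ENNReal.ofReal (p:ℝ)⁻¹ := by
  have hU : closedBall (0:ℚ_[p]) 1 = ⋃ k ∈ Finset.range p, (fun x => -(k:ℚ_[p]) + x) ⁻¹' closedBall 0 (p:ℝ)⁻¹ := by
    ext x
    simp only [mem_closedBall, dist_zero_right, mem_iUnion, mem_preimage, Finset.mem_range, exists_prop]
    constructor
    · intro hx
      obtain ⟨X, rfl⟩ : ∃ X : ℤ_[p], (X:ℚ_[p]) = x := ⟨⟨x, hx⟩, rfl⟩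
      obtain ⟨h1, h2⟩ := PadicInt.zmodRepr_spec X
      refine ⟨_, h1, ?_⟩
      have h3 : ‖(X:ℚ_[p]) - (PadicInt.zmodRepr X : ℚ_[p])‖ < 1 := by
        have h4 := PadicInt.norm_sub_zmodRepr_lt_one X
        rw [PadicInt.norm_def, PadicInt.coe_sub, PadicInt.coe_natCast] at h4
        exact h4
      have := (norm_lt_iff_le (p := p) _ 0).1 (by simpa using h3)
      rw [neg_add_eq_sub]
      simpa using this
    · rintro ⟨k, hk, h⟩
      have : x = (k:ℚ_[p]) + (-(k:ℚ_[p]) + x) := by ring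
      rw [this]
      refine (Padic.nonarchimedean _ _).trans (max_le ?_ (h.trans ?_))
      · exact_mod_cast Padic.norm_int_le_one (p := p) (k:ℤ)
      · exact inv_le_one_of_one_le₀ hp1.le
  have hd : (↑(Finset.range p) : Set ℕ).PairwiseDisjoint (fun k : ℕ => (fun x => -(k:ℚ_[p]) + x) ⁻¹' closedBall (0:ℚ_[p]) (p:ℝ)⁻¹) := by
    intro k hk l hl hkl
    rw [Function.onFun, Set.disjoint_left]
    intro x h1 h2
    simp only [mem_closedBall, dist_zero_right, mem_preimage] at h1 h2
    apply hkl
    have h3 : ‖((k:ℤ) - (l:ℤ) : ℤ) • (1:ℚ_[p])‖ < 1 := by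
      have : (((k:ℤ) - (l:ℤ) : ℤ)) • (1:ℚ_[p]) = (-(l:ℚ_[p]) + x) - (-(k:ℚ_[p]) + x) := by
        push_cast; simp; ring
      rw [this]
      rw [sub_eq_add_neg]
      refine (Padic.nonarchimedean _ _).trans_lt (max_lt (h2.trans_lt ?_) ?_)
      · exact inv_lt_one_of_one_lt₀ hp1
      · rw [norm_neg]; exact h1.trans_lt (inv_lt_one_of_one_lt₀ hp1)
    rw [zsmul_one, Padic.norm_intCast_lt_one_iff] at h3
    have hk' : k < p := by simpa using hk
    have hl' : l < p := by simpa using hl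
    have := Int.eq_zero_of_abs_lt_dvd h3 (by rw [abs_lt]; omega)
    omega
  have hm : nu p (closedBall 0 1) = p * nu p (closedBall 0 (p:ℝ)⁻¹) := by
    rw [hU, measure_biUnion_finset hd]
    · simp only [measure_preimage_add, Finset.sum_const, Finset.card_range, nsmul_eq_mul]
    · intro k _
      exact (measurable_const_add _) isClosed_closedBall.measurableSet
  rw [nu_unit] at hm
  rw [ENNReal.ofReal_inv_of_pos hp0, ENNReal.ofReal_natCast]
  exact ENNReal.eq_inv_of_mul_eq_one_left (by rw [mul_comm]; exact hm.symm)

instance isHaar_map_mul (c : ℚ_[p]) [hc : NeZero c] :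
    ((nu p).map (fun x => c * x)).IsAddHaarMeasure := by
  have := (ContinuousLinearEquiv.unitsEquivAut ℚ_[p] (Units.mk0 c hc.out)).isAddHaarMeasure_map (nu p)
  have h2 : (fun x => c * x) = ⇑((ContinuousLinearEquiv.unitsEquivAut ℚ_[p]) (Units.mk0 c hc.out)) := by
    funext x
    simp [mul_comm]
  rw [h2]
  exact this

lemma nu_scale_aux (c : ℚ_[p]) (hc : c ≠ 0) (S : Set ℚ_[p]) (hS : MeasurableSet S) :
    nu p ((fun x => c * x) ⁻¹' S) = nu p ((fun x => c * x) ⁻¹' closedBall 0 1) * nu p S := by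
  have : NeZero c := ⟨hc⟩
  have h := Measure.isAddLeftInvariant_eq_smul ((nu p).map (fun x => c * x)) (nu p)
  set κ := ((nu p).map (fun x => c * x)).addHaarScalarFactor (nu p)
  have h2 : ∀ S, MeasurableSet S → nu p ((fun x => c * x) ⁻¹' S) = κ * nu p S := by
    intro S hS
    rw [← Measure.map_apply (measurable_const_mul c) hS]
    conv_lhs => rw [h]
    rw [Measure.smul_apply, ENNReal.smul_def, smul_eq_mul]
  rw [h2 _ hS, h2 _ isClosed_closedBall.measurableSet, nu_unit, mul_one]

lemma nu_scale_unit (c : ℚ_[p]) (hc : c ≠ 0) :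
    nu p ((fun x => c * x) ⁻¹' closedBall 0 1) = ENNReal.ofReal ‖c‖⁻¹ := by
  set δ : ℚ_[p] → ℝ≥0∞ := fun c => nu p ((fun x => c * x) ⁻¹' closedBall 0 1) with hδ
  have mul : ∀ a b : ℚ_[p], a ≠ 0 → b ≠ 0 → δ (a * b) = δ a * δ b := by
    intro a b ha hb
    have h1 := nu_scale_aux b hb ((fun x => a * x) ⁻¹' closedBall 0 1)
      ((measurable_const_mul a) isClosed_closedBall.measurableSet)
    have h2 : (fun x => b * x) ⁻¹' ((fun x => a * x) ⁻¹' closedBall (0:ℚ_[p]) 1)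
      = (fun x => (a * b) * x) ⁻¹' closedBall 0 1 := by
      ext x; simp [mul_assoc]
    rw [h2] at h1
    rw [hδ]; simp only; rw [h1, mul_comm]
  have hunit : ∀ u : ℚ_[p], ‖u‖ = 1 → δ u = 1 := by
    intro u hu
    have : (fun x => u * x) ⁻¹' closedBall (0:ℚ_[p]) 1 = closedBall 0 1 := by
      ext x; simp [hu]
    rw [hδ]; simp only; rw [this, nu_unit]
  have hpne : (p:ℚ_[p]) ≠ 0 := by exact_mod_cast (Fact.out : p.Prime).ne_zero
  have hpinv : δ ((p:ℚ_[p])⁻¹) = ENNReal.ofReal (p:ℝ)⁻¹ := by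
    rw [← nu_small]
    rw [hδ]; simp only; congr 1
    ext x
    simp only [mem_preimage, mem_closedBall, dist_zero_right, norm_mul, norm_inv, Padic.norm_p, inv_inv]
    rw [← le_inv_mul_iff₀ hp0, mul_one]
  have hprod : δ (p:ℚ_[p]) * δ ((p:ℚ_[p])⁻¹) = 1 := by
    rw [← mul _ _ hpne (inv_ne_zero hpne), mul_inv_cancel₀ hpne]; exact hunit 1 (by simp)
  have hpp : δ (p:ℚ_[p]) = ENNReal.ofReal (p:ℝ) := by
    rw [hpinv] at hprod
    rw [ENNReal.eq_inv_of_mul_eq_one_left hprod, ← ENNReal.ofReal_inv_of_pos (inv_pos.2 hp0), inv_inv]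
  have hz : ∀ n : ℤ, δ ((p:ℚ_[p]) ^ n) = ENNReal.ofReal ((p:ℝ) ^ n) := by
    intro n
    induction n using Int.induction_on with
    | zero => simpa using hunit 1 (by simp)
    | succ n ih =>
      rw [zpow_add_one₀ hpne, mul _ _ (zpow_ne_zero _ hpne) hpne, ih, hpp, zpow_add_one₀ hp0.ne',
        ENNReal.ofReal_mul (by have := hp0 (p := p); positivity)]
    | pred n ih =>
      rw [zpow_sub_one₀ hpne, mul _ _ (zpow_ne_zero _ hpne) (inv_ne_zero hpne), ih, hpinv,
        zpow_sub_one₀ hp0.ne', ENNReal.ofReal_mul (by have := hp0 (p := p); positivity)]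
  obtain ⟨n, hn⟩ := (⟨_, Padic.norm_eq_zpow_neg_valuation hc⟩ : ∃ n : ℤ, ‖c‖ = (p:ℝ) ^ (-n))
  have hcu : c = (p:ℚ_[p]) ^ n * (((p:ℚ_[p]) ^ n)⁻¹ * c) := by
    rw [mul_inv_cancel_left₀ (zpow_ne_zero _ hpne)]
  change δ c = _
  rw [hcu, mul _ _ (zpow_ne_zero _ hpne) (mul_ne_zero (inv_ne_zero (zpow_ne_zero _ hpne)) hc), hz, hunit, ← hcu, hn, mul_one,
    ← _root_.zpow_neg, neg_neg]
  rw [norm_mul, norm_inv, norm_zpow, Padic.norm_p, hn, _root_.inv_zpow, _root_.zpow_neg, inv_inv, mul_inv_cancel₀]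
  exact zpow_ne_zero _ hp0.ne'

lemma nu_scale (c : ℚ_[p]) (hc : c ≠ 0) (S : Set ℚ_[p]) (hS : MeasurableSet S) :
    nu p ((fun x => c * x) ⁻¹' S) = ENNReal.ofReal ‖c‖⁻¹ * nu p S := by
  rw [nu_scale_aux c hc S hS, nu_scale_unit c hc]


lemma meas_sphere (r : ℝ) : MeasurableSet {x : ℚ_[p] | ‖x‖ = r} :=
  measurableSet_eq_fun measurable_norm measurable_const

lemma nu_sphere_one : nu p {x | ‖x‖ = 1} = ENNReal.ofReal (1 - (p:ℝ)⁻¹) := by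
  have h : {x : ℚ_[p] | ‖x‖ = 1} = closedBall 0 1 \ closedBall 0 (p:ℝ)⁻¹ := by
    ext x
    have := norm_lt_iff_le x 0
    simp only [neg_zero, zpow_zero, zero_add, _root_.zpow_neg_one] at this
    simp only [mem_ofPred_eq, mem_sdiff, mem_closedBall, dist_zero_right, ← this, not_lt]
    exact ⟨fun h => ⟨h.le, h.ge⟩, fun h => le_antisymm h.1 h.2⟩
  rw [h, measure_sdiff (closedBall_subset_closedBall (inv_le_one_of_one_le₀ hp1.le))
    isClosed_closedBall.measurableSet.nullMeasurableSet (by rw [nu_small]; exact ENNReal.ofReal_ne_top),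
    nu_unit, nu_small, ENNReal.ofReal_sub _ (inv_nonneg.2 hp0.le), ENNReal.ofReal_one]

lemma pne : (p:ℚ_[p]) ≠ 0 := by exact_mod_cast (Fact.out : p.Prime).ne_zero

lemma norm_p_zpow' (n : ℤ) : ‖(p:ℚ_[p]) ^ n‖ = (p:ℝ) ^ (-n) := Padic.norm_p_zpow n

lemma eq_zneg_iff (a : ℝ) (n : ℤ) : a = (p:ℝ) ^ (-n) ↔ (p:ℝ) ^ n * a = 1 := by
  have h := zpow_ne_zero n (hp0 (p := p)).ne'
  rw [_root_.zpow_neg]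
  exact ⟨fun e => by rw [e, mul_inv_cancel₀ h], fun e => by field_simp; linarith⟩

lemma le_zneg_iff (a : ℝ) (n : ℤ) : a ≤ (p:ℝ) ^ (-n) ↔ (p:ℝ) ^ n * a ≤ 1 := by
  rw [_root_.zpow_neg, ← le_inv_mul_iff₀ (zpow_pos hp0 _), mul_one]

lemma nu_sphere (n : ℤ) : nu p {x | ‖x‖ = (p:ℝ) ^ (-n)} = ENNReal.ofReal ((1 - (p:ℝ)⁻¹) * (p:ℝ) ^ (-n)) := by
  have h : {x : ℚ_[p] | ‖x‖ = (p:ℝ) ^ (-n)} = (fun x => (p:ℚ_[p]) ^ (-n) * x) ⁻¹' {x | ‖x‖ = 1} := by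
    ext x
    simp only [mem_ofPred_eq, mem_preimage, norm_mul, norm_p_zpow', neg_neg]
    exact eq_zneg_iff _ _
  rw [h, nu_scale _ (zpow_ne_zero _ pne) _ (meas_sphere 1), nu_sphere_one, norm_p_zpow', neg_neg,
    ← ENNReal.ofReal_mul (inv_nonneg.2 (zpow_nonneg hp0.le _)), _root_.zpow_neg, mul_comm]

lemma nu_cball (n : ℤ) : nu p {x | ‖x‖ ≤ (p:ℝ) ^ (-n)} = ENNReal.ofReal ((p:ℝ) ^ (-n)) := by
  have h : {x : ℚ_[p] | ‖x‖ ≤ (p:ℝ) ^ (-n)} = (fun x => (p:ℚ_[p]) ^ (-n) * x) ⁻¹' closedBall 0 1 := by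
    ext x
    simp only [mem_ofPred_eq, mem_preimage, norm_mul, norm_p_zpow', neg_neg, mem_closedBall, dist_zero_right]
    exact le_zneg_iff _ _
  rw [h, nu_scale _ (zpow_ne_zero _ pne) _ isClosed_closedBall.measurableSet, nu_unit, norm_p_zpow', neg_neg,
     _root_.zpow_neg, mul_one]

/-! squares -/

lemma isSquare_of_near_one (hp : Odd p) (x : ℚ_[p]) (hx : ‖x - 1‖ < 1) : IsSquare x := by
  have hx1 : ‖x‖ ≤ 1 := by
    have : x = (x - 1) + 1 := by ring
    rw [this]
    exact (Padic.nonarchimedean _ _).trans (max_le hx.le (by simp))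
  obtain ⟨X, rfl⟩ : ∃ X : ℤ_[p], (X:ℚ_[p]) = x := ⟨⟨x, hx1⟩, rfl⟩
  have h2 : ‖(2:ℤ_[p])‖ = 1 := by
    have : ‖((2:ℤ):ℤ_[p])‖ = 1 := by
      rw [PadicInt.norm_intCast_eq_one_iff]
      have := (Nat.coprime_primes Nat.prime_two (Fact.out : p.Prime)).2 (by rintro rfl; exact absurd hp (by decide))
      exact_mod_cast (Nat.isCoprime_iff_coprime.2 this)
    simpa using this
  obtain ⟨z, hz, -⟩ := hensels_lemma (p := p) (R := ℤ_[p]) (F := Polynomial.X ^ 2 - Polynomial.C X) (a := 1) (by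
    simp only [map_sub, map_pow, Polynomial.aeval_X, Polynomial.aeval_C, one_pow, Polynomial.derivative_sub, Polynomial.derivative_X_pow, Polynomial.derivative_C]
    simp [h2]
    rw [norm_sub_rev]
    rw [PadicInt.norm_def]
    exact hx)
  refine ⟨(z:ℚ_[p]), ?_⟩
  have h3 : z ^ 2 = X := by
    simpa [sub_eq_zero] using hz
  have := congrArg (fun t : ℤ_[p] => (t:ℚ_[p])) h3
  simp only [PadicInt.coe_pow] at this
  rw [← this]; ring

lemma isSquare_of_near (hp : Odd p) (x y : ℚ_[p]) (hy : IsSquare y) (h : ‖x - y‖ < ‖y‖) : IsSquare x := by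
  have hy0 : y ≠ 0 := by rintro rfl; simp at h; exact absurd h (not_lt.2 (norm_nonneg _))
  have := isSquare_of_near_one hp (x / y) (by
    rw [div_sub_one hy0, norm_div, div_lt_one (norm_pos_iff.2 hy0)]; exact h)
  have h2 : x = x / y * y := by field_simp
  rw [h2]; exact this.mul hy

lemma exists_nonsq (hp : Odd p) : ∃ g : ℚ_[p], ‖g‖ = 1 ∧ ¬ IsSquare g ∧
    ∀ x : ℚ_[p], ‖x‖ = 1 → ¬ IsSquare x → IsSquare (g * x) := by
  have hp2 : p ≠ 2 := by rintro rfl; exact absurd hp (by decide)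
  have hch : ringChar (ZMod p) ≠ 2 := by rwa [ZMod.ringChar_zmod_n]
  have key : ∀ x : ℤ_[p], ‖x‖ = 1 → IsSquare (PadicInt.toZMod x) → IsSquare (x:ℚ_[p]) := by
    rintro x hx ⟨y, hy⟩
    obtain ⟨w, rfl⟩ := ZMod.ringHom_surjective (PadicInt.toZMod (p := p)) y
    rw [← map_mul, ← sub_eq_zero, ← map_sub, ← RingHom.mem_ker, PadicInt.ker_toZMod,
      IsLocalRing.mem_maximalIdeal, PadicInt.mem_nonunits] at hy
    have h1 : ‖w * w‖ = 1 := by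
      rw [← hx]
      by_contra hne
      have := PadicInt.norm_add_eq_max_of_ne (q := x - w * w) (r := w * w)
      rw [sub_add_cancel, hx] at this
      rw [hx] at hne
      have hle := PadicInt.norm_le_one (w*w)
      have hlt := lt_of_le_of_ne hle hne
      have h5 := PadicInt.nonarchimedean (x - w*w) (w*w)
      rw [sub_add_cancel, hx] at h5
      exact absurd h5 (not_le.2 (max_lt hy hlt))
    refine isSquare_of_near hp (x:ℚ_[p]) ((w * w : ℤ_[p]) : ℚ_[p]) ⟨(w:ℚ_[p]), by simp⟩ ?_
    rw [← PadicInt.coe_sub, ← PadicInt.norm_def, ← PadicInt.norm_def, h1]; exact hy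
  have key2 : ∀ x : ℤ_[p], ‖x‖ = 1 → PadicInt.toZMod x ≠ 0 := by
    intro x hx h0
    rw [← RingHom.mem_ker, PadicInt.ker_toZMod, IsLocalRing.mem_maximalIdeal, PadicInt.mem_nonunits] at h0
    exact absurd hx h0.ne
  obtain ⟨a, ha⟩ := FiniteField.exists_nonsquare hch
  obtain ⟨g, rfl⟩ := ZMod.ringHom_surjective (PadicInt.toZMod (p := p)) a
  have hg1 : ‖g‖ = 1 := by
    by_contra hne
    have : ‖g‖ < 1 := lt_of_le_of_ne (PadicInt.norm_le_one g) hne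
    rw [← PadicInt.mem_nonunits, ← IsLocalRing.mem_maximalIdeal, ← PadicInt.ker_toZMod, RingHom.mem_ker] at this
    apply ha; rw [this]; exact IsSquare.zero
  refine ⟨g, by rw [← PadicInt.norm_def]; exact hg1, ?_, ?_⟩
  · rintro ⟨c, hc⟩
    have hc1 : ‖c‖ ≤ 1 := by
      have : ‖(g:ℚ_[p])‖ = ‖c‖ * ‖c‖ := by rw [hc, norm_mul]
      rw [← PadicInt.norm_def, hg1] at this
      by_contra hh
      push Not at hh
      nlinarith
    apply ha
    obtain ⟨X, rfl⟩ : ∃ X : ℤ_[p], (X:ℚ_[p]) = c := ⟨⟨c, hc1⟩, rfl⟩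
    refine ⟨PadicInt.toZMod X, ?_⟩
    rw [← map_mul]; congr 1; apply Subtype.ext; rw [hc]; exact (PadicInt.coe_mul X X).symm
  · intro x hx hns
    obtain ⟨X, rfl⟩ : ∃ X : ℤ_[p], (X:ℚ_[p]) = x := ⟨⟨x, hx.le⟩, rfl⟩
    rw [← PadicInt.norm_def] at hx
    have := key (g * X) (by rw [norm_mul, hg1, one_mul]; exact hx) (by
      rw [map_mul]
      have h1 : ¬ IsSquare (PadicInt.toZMod X) := fun h => hns (key X hx h)
      rw [← quadraticChar_neg_one_iff_not_isSquare] at h1 ha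
      have hne : PadicInt.toZMod g * PadicInt.toZMod X ≠ 0 := mul_ne_zero (key2 g hg1) (key2 _ hx)
      rw [← quadraticChar_one_iff_isSquare hne, map_mul, h1, ha]; norm_num)
    simpa using this

/-- squares of valuation `2n` -/
def Sq (p : ℕ) [Fact p.Prime] (n : ℤ) : Set ℚ_[p] := {x | IsSquare x ∧ ‖x‖ = (p:ℝ) ^ (-(2*n))}

lemma isOpen_Sq (hp : Odd p) (n : ℤ) : IsOpen (Sq p n) := by
  rw [Metric.isOpen_iff]
  rintro y ⟨hy, hn⟩
  have hpos : 0 < ‖y‖ := by rw [hn]; exact zpow_pos hp0 _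
  refine ⟨‖y‖, hpos, fun x hx => ?_⟩
  rw [mem_ball, dist_eq_norm] at hx
  refine ⟨isSquare_of_near hp x y hy hx, ?_⟩
  rw [← hn]
  have : x = (x - y) + y := by ring
  rw [this, Padic.add_eq_max_of_ne hx.ne, max_eq_right hx.le]

lemma meas_Sq (hp : Odd p) (n : ℤ) : MeasurableSet (Sq p n) := (isOpen_Sq hp n).measurableSet

lemma nu_Sq_zero (hp : Odd p) : nu p (Sq p 0) = ENNReal.ofReal (1/2 * (1 - (p:ℝ)⁻¹)) := by
  obtain ⟨g, hg1, hg, hg2⟩ := exists_nonsq hp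
  have hg0 : g ≠ 0 := by rintro rfl; simp at hg1
  have hU : {x : ℚ_[p] | ‖x‖ = 1} = Sq p 0 ∪ (fun x => g * x) ⁻¹' Sq p 0 := by
    ext x
    simp only [Sq, mem_ofPred_eq, mem_union, mem_preimage, norm_mul, hg1, one_mul, mul_zero, neg_zero, zpow_zero]
    constructor
    · intro h
      by_cases hs : IsSquare x
      · exact Or.inl ⟨hs, h⟩
      · exact Or.inr ⟨hg2 x h hs, h⟩
    · rintro (h | h) <;> exact h.2
  have hD : Disjoint (Sq p 0) ((fun x => g * x) ⁻¹' Sq p 0) := by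
    rw [Set.disjoint_left]
    rintro x ⟨h1, h2⟩ ⟨h3, h4⟩
    apply hg
    have hx0 : x ≠ 0 := by rintro rfl; simp at h2
    have : g = g * x / x := by field_simp
    rw [this]; exact h3.div h1
  have h := nu_sphere_one (p := p)
  rw [hU, measure_union hD ((measurable_const_mul g) (meas_Sq hp 0)), nu_scale g hg0 _ (meas_Sq hp 0), hg1] at h
  simp only [inv_one, ENNReal.ofReal_one, one_mul] at h
  have h1 : (0:ℝ) ≤ 1 - (p:ℝ)⁻¹ := sub_nonneg.2 (inv_le_one_of_one_le₀ hp1.le)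
  have hfin : nu p (Sq p 0) ≠ ⊤ := by
    intro htop; rw [htop] at h; simp at h
  rw [← ENNReal.ofReal_toReal hfin] at h ⊢
  rw [← ENNReal.ofReal_add ENNReal.toReal_nonneg ENNReal.toReal_nonneg,
    ENNReal.ofReal_eq_ofReal_iff (by positivity) h1] at h
  congr 1; linarith

lemma nu_Sq (hp : Odd p) (n : ℤ) : nu p (Sq p n) = ENNReal.ofReal (1/2 * (1 - (p:ℝ)⁻¹) * (p:ℝ) ^ (-(2*n))) := by
  have h : Sq p n = (fun x => (p:ℚ_[p]) ^ (-(2*n)) * x) ⁻¹' Sq p 0 := by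
    ext x
    simp only [Sq, mem_ofPred_eq, mem_preimage, norm_mul, norm_p_zpow', neg_neg, mul_zero, neg_zero, zpow_zero]
    have hsq : IsSquare ((p:ℚ_[p]) ^ (-(2*n))) := ⟨(p:ℚ_[p])^(-n), by rw [← zpow_add₀ pne]; congr 1; ring⟩
    refine and_congr ⟨fun h => hsq.mul h, fun h => ?_⟩ ?_
    · have : x = (p:ℚ_[p]) ^ (-(2*n)) * x / (p:ℚ_[p]) ^ (-(2*n)) := by
        have := zpow_ne_zero (-(2*n)) (pne (p := p)); field_simp
      rw [this]; exact h.div hsq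
    · exact eq_zneg_iff _ _
  rw [h, nu_scale _ (zpow_ne_zero _ pne) _ (meas_Sq hp 0), nu_Sq_zero hp, norm_p_zpow', neg_neg,
    ← ENNReal.ofReal_mul (inv_nonneg.2 (zpow_nonneg hp0.le _)), _root_.zpow_neg, mul_comm]

end partOne

section partTwo
open Metric Set ENNReal
variable {p : ℕ} [Fact p.Prime]

lemma zpow_inj' {a b : ℤ} (h : (p:ℝ) ^ a = (p:ℝ) ^ b) : a = b :=
  zpow_right_injective₀ hp0 hp1.ne' h

lemma norm_eq_of_sub_lt {x y : ℚ_[p]} (h : ‖x - y‖ < ‖y‖) : ‖x‖ = ‖y‖ := by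
  have : x = (x - y) + y := by ring
  rw [this, Padic.add_eq_max_of_ne h.ne, max_eq_right h.le]

lemma norm_eq_of_lt_sub {x y : ℚ_[p]} (h : ‖y‖ < ‖x - y‖) : ‖x‖ = ‖x - y‖ := by
  conv_lhs => rw [show x = (x - y) + y by ring]
  rw [Padic.add_eq_max_of_ne h.ne', max_eq_left h.le]

lemma norm_sub_of_lt {x y : ℚ_[p]} (h : ‖x‖ < ‖y‖) : ‖x - y‖ = ‖y‖ := by
  have : x - y = x + (-y) := by ring
  rw [this, Padic.add_eq_max_of_ne (by rw [norm_neg]; exact h.ne), norm_neg, max_eq_right h.le]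

/-- the density `κ̂` -/
noncomputable def kap (q : ℝ) (N e n : ℕ) : ℝ :=
  if 2 * e < N then (if n = e then (1 - q⁻¹) * q ^ (-(N:ℤ)) else 0)
  else if N < 2 * e then (if N = 2 * n then 1/2 * (1 - q⁻¹) * q ^ (-(N:ℤ)) else 0)
  else if n = e then 1/2 * (1 - q⁻¹) * q ^ (-(N:ℤ)) - q ^ (-((N:ℤ)+1))
  else if e < n then 1/2 * (1 - q⁻¹) * q ^ (-(2*(n:ℤ)))
  else 0

lemma nu_translate (c : ℚ_[p]) (S : Set ℚ_[p]) : nu p ((fun x => x - c) ⁻¹' S) = nu p S := by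
  simp only [sub_eq_add_neg]
  exact measure_preimage_add_right _ _ _

lemma zlt {a b : ℤ} (h : a < b) : (p:ℝ) ^ a < (p:ℝ) ^ b := zpow_lt_zpow_right₀ hp1 h
lemma zlt_iff {a b : ℤ} : (p:ℝ) ^ a < (p:ℝ) ^ b ↔ a < b := zpow_lt_zpow_iff_right₀ hp1
lemma zle_iff {a b : ℤ} : (p:ℝ) ^ a ≤ (p:ℝ) ^ b ↔ a ≤ b := zpow_le_zpow_iff_right₀ hp1

lemma nu_kap (hp : Odd p) (z : ℚ_[p]) (N e n : ℕ) (hz : ‖z‖ = (p:ℝ) ^ (-(e:ℤ))) :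
    nu p {P | ‖P - z ^ 2‖ = (p:ℝ) ^ (-(N:ℤ)) ∧ P ∈ Sq p n} = ENNReal.ofReal (kap p N e n) := by
  have hz2 : ‖z ^ 2‖ = (p:ℝ) ^ (-(2 * (e:ℤ))) := by
    rw [norm_pow, hz, ← zpow_natCast, ← _root_.zpow_mul]; congr 1; push_cast; ring
  have hsq : IsSquare (z ^ 2) := ⟨z, sq z⟩
  unfold kap
  split_ifs with h1 h2 h3 h4 h5 h6
  · -- 2e<N, n = e
    subst h2
    rw [← nu_sphere, ← nu_translate (z ^ 2) {x | ‖x‖ = (p:ℝ) ^ (-(N:ℤ))}]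
    congr 1; ext P
    simp only [mem_ofPred_eq, mem_preimage, and_iff_left_iff_imp]
    intro h
    have hl : ‖P - z ^ 2‖ < ‖z ^ 2‖ := by rw [h, hz2]; exact zlt (by omega)
    exact ⟨isSquare_of_near hp _ _ hsq hl, by rw [norm_eq_of_sub_lt hl, hz2]⟩
  · rw [ENNReal.ofReal_zero]
    refine (congrArg _ (eq_empty_iff_forall_notMem.2 ?_)).trans measure_empty
    rintro P ⟨h, -, h4⟩
    have hl : ‖P - z ^ 2‖ < ‖z ^ 2‖ := by rw [h, hz2]; exact zlt (by omega)
    rw [norm_eq_of_sub_lt hl, hz2] at h4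
    have := zpow_inj' h4
    omega
  · subst h4
    have := nu_Sq hp (n:ℤ)
    push_cast
    rw [← this]
    congr 1; ext P
    simp only [mem_ofPred_eq, and_iff_right_iff_imp]
    rintro ⟨-, h⟩
    rw [norm_sub_rev, norm_sub_of_lt, h]
    rw [h, hz2]; exact zlt (by omega)
  · rw [ENNReal.ofReal_zero]
    refine (congrArg _ (eq_empty_iff_forall_notMem.2 ?_)).trans measure_empty
    rintro P ⟨h, -, h4⟩
    rw [norm_eq_of_lt_sub (y := z ^ 2) (by rw [h, hz2]; exact zlt (by omega)), h] at h4
    have := zpow_inj' h4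
    omega
  · subst h5
    have hN : (N:ℤ) = 2 * n := by omega
    rw [hN]
    have hsub : {P | ‖P - z ^ 2‖ < (p:ℝ) ^ (-(2 * (n:ℤ)))} ⊆ Sq p n := by
      intro P hP
      simp only [mem_ofPred_eq] at hP
      rw [← hz2] at hP
      exact ⟨isSquare_of_near hp _ _ hsq hP, by rw [norm_eq_of_sub_lt hP, hz2]⟩
    have hE : {P | ‖P - z ^ 2‖ = (p:ℝ) ^ (-(2 * (n:ℤ))) ∧ P ∈ Sq p n} =
      Sq p n \ {P | ‖P - z ^ 2‖ < (p:ℝ) ^ (-(2 * (n:ℤ)))} := by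
      ext P
      simp only [mem_ofPred_eq, mem_sdiff, not_lt]
      constructor
      · rintro ⟨h, h'⟩; exact ⟨h', h.ge⟩
      · rintro ⟨h, h'⟩
        refine ⟨le_antisymm ?_ h', h⟩
        rw [sub_eq_add_neg]
        refine (Padic.nonarchimedean _ _).trans (max_le h.2.le ?_)
        rw [norm_neg, hz2]
    have hB : nu p {P | ‖P - z ^ 2‖ < (p:ℝ) ^ (-(2 * (n:ℤ)))} = ENNReal.ofReal ((p:ℝ) ^ (-(2*(n:ℤ)+1))) := by
      rw [← nu_cball, ← nu_translate (z ^ 2) {x | ‖x‖ ≤ (p:ℝ) ^ (-(2*(n:ℤ)+1))}]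
      congr 1; ext P
      simp only [mem_ofPred_eq, mem_preimage]
      exact norm_lt_iff_le _ _
    rw [hE, measure_sdiff hsub _ (by rw [hB]; exact ENNReal.ofReal_ne_top), nu_Sq hp, hB,
      ENNReal.ofReal_sub _ (zpow_nonneg hp0.le _)]
    apply MeasurableSet.nullMeasurableSet
    exact measurableSet_lt (measurable_norm.comp (measurable_id.sub_const _)) measurable_const
  · rw [← nu_Sq hp]
    congr 1; ext P
    simp only [mem_ofPred_eq, and_iff_right_iff_imp]
    rintro ⟨-, h⟩
    rw [norm_sub_of_lt, hz2]
    · congr 1; omega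
    · rw [h, hz2]; exact zlt (by omega)
  · rw [ENNReal.ofReal_zero]
    refine (congrArg _ (eq_empty_iff_forall_notMem.2 ?_)).trans measure_empty
    rintro P ⟨h, -, h4⟩
    have h7 : ‖z ^ 2‖ < ‖P‖ := by rw [h4, hz2]; exact zlt (by omega)
    rw [norm_sub_rev, norm_sub_of_lt h7, h4] at h
    have := zpow_inj' h
    omega

lemma kap_nonneg (hp : Odd p) (N e n : ℕ) : 0 ≤ kap p N e n := by
  have hp3 : (3:ℝ) ≤ p := by
    have h2 := (Fact.out : p.Prime).two_le
    have : 3 ≤ p := by rcases hp with ⟨k, hk⟩; omega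
    exact_mod_cast this
  have h1 : (0:ℝ) ≤ 1 - (p:ℝ)⁻¹ := sub_nonneg.2 (inv_le_one_of_one_le₀ hp1.le)
  have hz : ∀ n : ℤ, 0 < (p:ℝ) ^ n := fun n => zpow_pos hp0 n
  unfold kap
  split_ifs
  · have := hz (-(N:ℤ)); positivity
  · rfl
  · have := hz (-(N:ℤ)); positivity
  · rfl
  · have h3 := hz (-(N:ℤ))
    have h4 : (p:ℝ) ^ (-((N:ℤ)+1)) = (p:ℝ)^(-(N:ℤ)) * (p:ℝ)⁻¹ := by
      rw [neg_add, zpow_add₀ hp0.ne', _root_.zpow_neg_one]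
    rw [h4]
    have h5 : (p:ℝ)⁻¹ ≤ 1/3 := by rw [one_div]; exact inv_anti₀ (by norm_num) hp3
    nlinarith
  · have := hz (-(2*(n:ℤ))); positivity
  · rfl

end partTwo

section partThree
open Metric Set ENNReal
variable {p : ℕ} [Fact p.Prime]

instance borelMat : BorelSpace (Matrix (Fin 2) (Fin 2) ℚ_[p]) :=
  inferInstanceAs (BorelSpace (Fin 2 → Fin 2 → ℚ_[p]))
instance sctMat : SecondCountableTopology (Matrix (Fin 2) (Fin 2) ℚ_[p]) :=
  inferInstanceAs (SecondCountableTopology (Fin 2 → Fin 2 → ℚ_[p]))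

/-- coordinate space -/
abbrev B6 (p : ℕ) [Fact p.Prime] := (ℚ_[p] × ℚ_[p] × ℚ_[p] × ℚ_[p]) × (ℚ_[p] × ℚ_[p])
abbrev CO (p : ℕ) [Fact p.Prime] := (B6 p × ℚ_[p]) × ℚ_[p]

noncomputable def nu6 (p : ℕ) [Fact p.Prime] : Measure (B6 p) :=
  ((nu p).prod ((nu p).prod ((nu p).prod (nu p)))).prod ((nu p).prod (nu p))
noncomputable def nuC (p : ℕ) [Fact p.Prime] : Measure (CO p) := ((nu6 p).prod (nu p)).prod (nu p)

instance : MeasurableAdd (ℚ_[p] × ℚ_[p]) := ContinuousAdd.measurableAdd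
instance : MeasurableAdd (ℚ_[p] × ℚ_[p] × ℚ_[p] × ℚ_[p]) := ContinuousAdd.measurableAdd
instance : MeasurableAdd (ℚ_[p] × ℚ_[p] × ℚ_[p]) := ContinuousAdd.measurableAdd
instance : ((nu p).prod ((nu p).prod (nu p))).IsAddHaarMeasure :=
  Measure.prod.instIsAddHaarMeasure (nu p) ((nu p).prod (nu p))
instance : ((nu p).prod ((nu p).prod ((nu p).prod (nu p)))).IsAddHaarMeasure :=
  Measure.prod.instIsAddHaarMeasure (nu p) ((nu p).prod ((nu p).prod (nu p)))
instance : MeasurableAdd (B6 p) := ContinuousAdd.measurableAdd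
instance : MeasurableAdd (B6 p × ℚ_[p]) := ContinuousAdd.measurableAdd
instance : (nu6 p).IsAddHaarMeasure :=
  Measure.prod.instIsAddHaarMeasure ((nu p).prod ((nu p).prod ((nu p).prod (nu p)))) ((nu p).prod (nu p))
instance : SigmaFinite (nu6 p) := by unfold nu6; infer_instance
instance : ((nu6 p).prod (nu p)).IsAddHaarMeasure := Measure.prod.instIsAddHaarMeasure (nu6 p) (nu p)
instance : (nuC p).IsAddHaarMeasure := Measure.prod.instIsAddHaarMeasure ((nu6 p).prod (nu p)) (nu p)

lemma fin2_add_ne (a : Fin 2) : a + 1 ≠ a := by revert a; decide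
lemma fin2_ne {a b : Fin 2} (h : b ≠ a) : b = a + 1 := by revert a b; decide

/-- coordinates relative to a pivot -/
def eC (ρ κ : Fin 2) : VV p ≃+ CO p where
  toFun v := ((((v.1 ρ κ, v.1 ρ (κ+1), v.1 (ρ+1) κ, v.2 ρ κ), (v.2 ρ (κ+1), v.2 (ρ+1) κ)),
    v.1 (ρ+1) (κ+1)), v.2 (ρ+1) (κ+1))
  invFun u :=
    (fun i j => if i = ρ then (if j = κ then u.1.1.1.1 else u.1.1.1.2.1)
        else (if j = κ then u.1.1.1.2.2.1 else u.1.2),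
     fun i j => if i = ρ then (if j = κ then u.1.1.1.2.2.2 else u.1.1.2.1)
        else (if j = κ then u.1.1.2.2 else u.2))
  left_inv v := by
    ext i j
    all_goals
      by_cases hi : i = ρ <;> by_cases hj : j = κ
      · simp [hi, hj]
      · obtain rfl := fin2_ne hj; simp [hi, fin2_add_ne]
      · obtain rfl := fin2_ne hi; simp [hj, fin2_add_ne]
      · obtain rfl := fin2_ne hi; obtain rfl := fin2_ne hj; simp [fin2_add_ne]
  right_inv u := by simp [fin2_add_ne]
  map_add' v w := rfl

lemma eC_cont (ρ κ : Fin 2) : Continuous (eC (p := p) ρ κ) := by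
  have h : ∀ i j, Continuous (fun v : VV p => v.1 i j) := fun i j => by fun_prop
  have h' : ∀ i j, Continuous (fun v : VV p => v.2 i j) := fun i j => by fun_prop
  change Continuous (fun v : VV p => ((((v.1 ρ κ, v.1 ρ (κ+1), v.1 (ρ+1) κ, v.2 ρ κ), (v.2 ρ (κ+1), v.2 (ρ+1) κ)),
    v.1 (ρ+1) (κ+1)), v.2 (ρ+1) (κ+1)))
  fun_prop

lemma eC_symm_cont (ρ κ : Fin 2) : Continuous (eC (p := p) ρ κ).symm := by
  change Continuous (fun u : CO p => ((fun i j => if i = ρ then (if j = κ then u.1.1.1.1 else u.1.1.1.2.1)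
        else (if j = κ then u.1.1.1.2.2.1 else u.1.2),
     fun i j => if i = ρ then (if j = κ then u.1.1.1.2.2.2 else u.1.1.2.1)
        else (if j = κ then u.1.1.2.2 else u.2)) : (Fin 2 → Fin 2 → ℚ_[p]) × (Fin 2 → Fin 2 → ℚ_[p])))
  refine Continuous.prodMk ?_ ?_
  · refine continuous_pi fun i => continuous_pi fun j => ?_
    split_ifs <;> fun_prop
  · refine continuous_pi fun i => continuous_pi fun j => ?_
    split_ifs <;> fun_prop

lemma eC_mp (ρ κ : Fin 2) (μ : Measure (VV p)) [μ.IsAddHaarMeasure]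
    (hμ : μ {v : VV p | (∀ i j, ‖v.1 i j‖ ≤ 1) ∧ (∀ i j, ‖v.2 i j‖ ≤ 1)} = 1) :
    MeasurePreserving (eC (p := p) ρ κ) μ (nuC p) := by
  refine ⟨(eC_cont ρ κ).measurable, ?_⟩
  have hH := (eC (p := p) ρ κ).isAddHaarMeasure_map μ (eC_cont ρ κ) (eC_symm_cont ρ κ)
  have hb : MeasurableSet (closedBall (0:ℚ_[p]) 1) := isClosed_closedBall.measurableSet
  refine haar_eq_of_one _ _ (((((closedBall 0 1) ×ˢ (closedBall 0 1) ×ˢ (closedBall 0 1) ×ˢ (closedBall 0 1)) ×ˢ ((closedBall 0 1) ×ˢ (closedBall 0 1))) ×ˢ (closedBall 0 1)) ×ˢ (closedBall 0 1)) ?_ ?_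
  · rw [Measure.map_apply (eC_cont ρ κ).measurable]
    · rw [← hμ]
      congr 1
      ext v
      simp only [mem_preimage, mem_prod, mem_closedBall, dist_zero_right, mem_ofPred_eq]
      change ((((‖v.1 ρ κ‖ ≤ 1 ∧ ‖v.1 ρ (κ+1)‖ ≤ 1 ∧ ‖v.1 (ρ+1) κ‖ ≤ 1 ∧ ‖v.2 ρ κ‖ ≤ 1) ∧ (‖v.2 ρ (κ+1)‖ ≤ 1 ∧ ‖v.2 (ρ+1) κ‖ ≤ 1)) ∧ ‖v.1 (ρ+1) (κ+1)‖ ≤ 1) ∧ ‖v.2 (ρ+1) (κ+1)‖ ≤ 1) ↔ _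
      constructor
      · intro h
        constructor
        all_goals
          intro i j
          by_cases hi : i = ρ <;> by_cases hj : j = κ
          · rw [hi, hj]; tauto
          · obtain rfl := fin2_ne hj; rw [hi]; tauto
          · obtain rfl := fin2_ne hi; rw [hj]; tauto
          · obtain rfl := fin2_ne hi; obtain rfl := fin2_ne hj; tauto
      · rintro ⟨h, h'⟩; simp only [h, h', and_self]
    · exact ((((hb.prod (hb.prod (hb.prod hb))).prod (hb.prod hb))).prod hb).prod hb
  · simp only [nuC, nu6, Measure.prod_prod, nu_unit, mul_one]

/-- shift functions -/
noncomputable def shA (b : ℚ_[p] × ℚ_[p] × ℚ_[p] × ℚ_[p]) : ℚ_[p] × ℚ_[p] :=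
  (b.2.1 / b.1 * b.2.2.2, b.2.2.1 / b.1 * b.2.2.2)
noncomputable def shB (b : B6 p) : ℚ_[p] := b.1.2.1 * b.1.2.2.1 / b.1.1
noncomputable def stepA (b : B6 p) : B6 p := (b.1, b.2 - shA b.1)
noncomputable def stepB (b : B6 p × ℚ_[p]) : B6 p × ℚ_[p] := (stepA b.1, b.2 - shB b.1)
/-- in terms of the new coordinates -/
noncomputable def shD (c : B6 p × ℚ_[p]) : ℚ_[p] :=
  c.2 / c.1.1.1 * c.1.1.2.2.2 + c.1.1.2.2.1 / c.1.1.1 * c.1.2.1 + c.1.1.2.1 / c.1.1.1 * c.1.2.2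
    + c.1.1.2.2.1 / c.1.1.1 * (c.1.1.2.1 / c.1.1.1) * c.1.1.2.2.2
noncomputable def stepC (u : CO p) : CO p := (stepB u.1, u.2 - shD (stepB u.1))

lemma meas_shA : Measurable (shA (p := p)) := by unfold shA; fun_prop
lemma meas_shB : Measurable (shB (p := p)) := by unfold shB; fun_prop
lemma meas_shD : Measurable (shD (p := p)) := by unfold shD; fun_prop

lemma map_sub_eq {G : Type*} [AddGroup G] [MeasurableSpace G] [MeasurableAdd G] (μ : Measure G)
    [μ.IsAddRightInvariant] (c : G) : Measure.map (fun x => x - c) μ = μ := by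
  simp only [sub_eq_add_neg]; exact map_add_right_eq_self μ _

lemma stepA_mp : MeasurePreserving (stepA (p := p)) (nu6 p) (nu6 p) := by
  refine MeasurePreserving.skew_product (f := id) (g := fun b u => u - shA b) (.id _) ?_ ?_
  · exact measurable_snd.sub (meas_shA.comp measurable_fst)
  · exact .of_forall fun b => map_sub_eq _ _

lemma stepB_mp : MeasurePreserving (stepB (p := p)) ((nu6 p).prod (nu p)) ((nu6 p).prod (nu p)) := by
  refine MeasurePreserving.skew_product (f := stepA) (g := fun b u => u - shB b) stepA_mp ?_ ?_
  · exact measurable_snd.sub (meas_shB.comp measurable_fst)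
  · exact .of_forall fun b => map_sub_eq _ _

lemma stepC_mp : MeasurePreserving (stepC (p := p)) (nuC p) (nuC p) := by
  refine MeasurePreserving.skew_product (f := stepB) (g := fun b u => u - shD (stepB b)) stepB_mp ?_ ?_
  · exact measurable_snd.sub ((meas_shD.comp stepB_mp.measurable).comp measurable_fst)
  · exact .of_forall fun b => map_sub_eq _ _

noncomputable def Phi (ρ κ : Fin 2) (v : VV p) : CO p := stepC (eC ρ κ v)

lemma Phi_mp (ρ κ : Fin 2) (μ : Measure (VV p)) [μ.IsAddHaarMeasure]
    (hμ : μ {v : VV p | (∀ i j, ‖v.1 i j‖ ≤ 1) ∧ (∀ i j, ‖v.2 i j‖ ≤ 1)} = 1) :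
    MeasurePreserving (Phi (p := p) ρ κ) μ (nuC p) :=
  stepC_mp.comp (eC_mp ρ κ μ hμ)

lemma prod_fib {α β : Type*} [MeasurableSpace α] [MeasurableSpace β] (μ : Measure α) (ν : Measure β)
    [SFinite μ] [SFinite ν] (T : Set (α × β)) (hT : MeasurableSet T) (A : Set α) (hA : MeasurableSet A)
    (K : ℝ≥0∞) (h1 : ∀ a ∈ A, ν (Prod.mk a ⁻¹' T) = K) (h2 : ∀ x ∈ T, x.1 ∈ A) :
    μ.prod ν T = K * μ A := by
  rw [Measure.prod_apply hT]
  have : (fun x => ν (Prod.mk x ⁻¹' T)) = A.indicator (fun _ => K) := by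
    funext a
    by_cases ha : a ∈ A
    · rw [indicator_of_mem ha, h1 a ha]
    · rw [indicator_of_notMem ha]
      have : Prod.mk a ⁻¹' T = ∅ := by
        rw [eq_empty_iff_forall_notMem]; intro b hb; exact ha (h2 _ hb)
      rw [this, measure_empty]
  rw [this, lintegral_indicator_const hA]

lemma prod_fib_symm {α β : Type*} [MeasurableSpace α] [MeasurableSpace β] (μ : Measure α) (ν : Measure β)
    [SFinite μ] [SFinite ν] (T : Set (α × β)) (hT : MeasurableSet T) (A : Set β) (hA : MeasurableSet A)
    (K : ℝ≥0∞) (h1 : ∀ a ∈ A, μ ((fun x => (x, a)) ⁻¹' T) = K) (h2 : ∀ x ∈ T, x.2 ∈ A) :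
    μ.prod ν T = K * ν A := by
  rw [Measure.prod_apply_symm hT]
  have : (fun y => μ ((fun x => (x, y)) ⁻¹' T)) = A.indicator (fun _ => K) := by
    funext a
    by_cases ha : a ∈ A
    · rw [indicator_of_mem ha, h1 a ha]
    · rw [indicator_of_notMem ha]
      have : (fun x => (x, a)) ⁻¹' T = ∅ := by
        rw [eq_empty_iff_forall_notMem]; intro b hb; exact ha (h2 _ hb)
      rw [this, measure_empty]
  rw [this, lintegral_indicator_const hA]

end partThree

section partFour
open Metric Set ENNReal
variable {p : ℕ} [Fact p.Prime]

/-- the pieces in coordinates -/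
def TT (p : ℕ) [Fact p.Prime] (ρ κ : Fin 2) (a i j k e n : ℕ) : Set (CO p) :=
  {u | ((‖u.1.1.1.1‖ = (p:ℝ) ^ (-(a:ℤ)) ∧ ‖u.1.1.1.2.1‖ ≤ (p:ℝ) ^ (-((a:ℤ) + κ.val)) ∧
      ‖u.1.1.1.2.2.1‖ ≤ (p:ℝ) ^ (-((a:ℤ) + ρ.val)) ∧ ‖u.1.1.1.2.2.2‖ ≤ 1) ∧
    (‖u.1.1.2.1‖ = (p:ℝ) ^ (-(i:ℤ)) ∧ ‖u.1.1.2.2‖ = (p:ℝ) ^ (-(j:ℤ)))) ∧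
    ‖u.2‖ = (p:ℝ) ^ (-(e:ℤ)) ∧ ‖u.1.2‖ = (p:ℝ) ^ (-((a:ℤ) + k)) ∧
    u.2 ^ 2 + 4 * (u.1.2 / u.1.1.1.1) * u.1.1.2.1 * u.1.1.2.2 ∈ Sq p n ∧ ρ.val ≤ k}

lemma meas_TT (hp : Odd p) (ρ κ : Fin 2) (a i j k e n : ℕ) : MeasurableSet (TT p ρ κ a i j k e n) := by
  have hn : ∀ f : CO p → ℚ_[p], Measurable f → ∀ r : ℝ, MeasurableSet {u | ‖f u‖ = r} :=
    fun f hf r => measurableSet_eq_fun hf.norm measurable_const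
  have hl : ∀ f : CO p → ℚ_[p], Measurable f → ∀ r : ℝ, MeasurableSet {u | ‖f u‖ ≤ r} :=
    fun f hf r => measurableSet_le hf.norm measurable_const
  unfold TT
  refine (((hn _ (by fun_prop) _).inter ((hl _ (by fun_prop) _).inter ((hl _ (by fun_prop) _).inter (hl _ (by fun_prop) _)))).inter
    ((hn _ (by fun_prop) _).inter (hn _ (by fun_prop) _))).inter ((hn _ (by fun_prop) _).inter ((hn _ (by fun_prop) _).inter
      (MeasurableSet.inter (s₁ := {u : CO p | u.2 ^ 2 + 4 * (u.1.2 / u.1.1.1.1) * u.1.1.2.1 * u.1.1.2.2 ∈ Sq p n}) ?_ (MeasurableSet.const _))))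
  have : Measurable (fun u : CO p => u.2 ^ 2 + 4 * (u.1.2 / u.1.1.1.1) * u.1.1.2.1 * u.1.1.2.2) := by fun_prop
  exact this (meas_Sq hp n)

lemma norm_two (hp : Odd p) : ‖(2:ℚ_[p])‖ = 1 := by
  have : ‖((2:ℤ):ℚ_[p])‖ = 1 := by
    refine le_antisymm (Padic.norm_int_le_one _) (not_lt.1 fun h => ?_)
    rw [Padic.norm_intCast_lt_one_iff] at h
    have h2 : p ∣ 2 := by exact_mod_cast h
    have := (Nat.prime_dvd_prime_iff_eq (Fact.out : p.Prime) Nat.prime_two).1 h2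
    rw [this] at hp; exact absurd hp (by decide)
  simpa using this

lemma norm_four (hp : Odd p) : ‖(4:ℚ_[p])‖ = 1 := by
  rw [show (4:ℚ_[p]) = 2 * 2 by norm_num, norm_mul, norm_two hp, one_mul]

lemma nu_delta (hp : Odd p) (x w w' z : ℚ_[p]) (a i j k e n : ℕ)
    (hx : ‖x‖ = (p:ℝ) ^ (-(a:ℤ))) (hw : ‖w‖ = (p:ℝ) ^ (-(i:ℤ))) (hw' : ‖w'‖ = (p:ℝ) ^ (-(j:ℤ)))
    (hz : ‖z‖ = (p:ℝ) ^ (-(e:ℤ))) :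
    nu p {δ | ‖δ‖ = (p:ℝ) ^ (-((a:ℤ) + k)) ∧ z ^ 2 + 4 * (δ / x) * w * w' ∈ Sq p n} =
      ENNReal.ofReal ((p:ℝ) ^ ((i:ℤ) + j - a) * kap p (i+j+k) e n) := by
  have hq : ∀ m : ℤ, (p:ℝ) ^ m ≠ 0 := fun m => zpow_ne_zero _ hp0.ne'
  have h0 : ∀ y : ℚ_[p], ∀ m : ℤ, ‖y‖ = (p:ℝ) ^ m → y ≠ 0 := by
    rintro y m h rfl; rw [norm_zero] at h; exact hq m h.symm
  have hx0 := h0 _ _ hx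
  have hw0 := h0 _ _ hw
  have hw0' := h0 _ _ hw'
  have h4 : (4:ℚ_[p]) ≠ 0 := by norm_num
  set c := 4 * w * w' / x with hc
  have hc0 : c ≠ 0 := by rw [hc]; positivity
  have hcn : ‖c‖ = (p:ℝ) ^ (-((i:ℤ) + j - a)) := by
    rw [hc, norm_div, norm_mul, norm_mul, norm_four hp, hw, hw', hx, one_mul, ← zpow_add₀ hp0.ne', ← zpow_sub₀ hp0.ne']
    congr 1; ring
  have hS : {δ | ‖δ‖ = (p:ℝ) ^ (-((a:ℤ) + k)) ∧ z ^ 2 + 4 * (δ / x) * w * w' ∈ Sq p n} =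
      (fun δ => c * δ) ⁻¹' ((fun u => u - (-(z^2))) ⁻¹' {P | ‖P - z ^ 2‖ = (p:ℝ) ^ (-((i+j+k:ℕ):ℤ)) ∧ P ∈ Sq p n}) := by
    ext δ
    simp only [mem_ofPred_eq, mem_preimage]
    refine and_congr ?_ ?_
    · rw [show c * δ - -z ^ 2 - z ^ 2 = c * δ by ring, norm_mul, hcn]
      constructor
      · intro h; rw [h, ← zpow_add₀ hp0.ne']; congr 1; push_cast; ring
      · intro h
        have h5 : ‖δ‖ = ((p:ℝ) ^ (-((i:ℤ) + j - a)))⁻¹ * ((p:ℝ) ^ (-((i:ℤ) + j - a)) * ‖δ‖) := by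
          rw [inv_mul_cancel_left₀ (hq _)]
        rw [h5, h, ← _root_.zpow_neg, ← zpow_add₀ hp0.ne']; congr 1; push_cast; ring
    · rw [show z ^ 2 + 4 * (δ / x) * w * w' = c * δ - -z ^ 2 by rw [hc]; ring]
  have hm : MeasurableSet {P | ‖P - z ^ 2‖ = (p:ℝ) ^ (-((i+j+k:ℕ):ℤ)) ∧ P ∈ Sq p n} :=
    (measurableSet_eq_fun (measurable_id.sub_const _).norm measurable_const).inter (meas_Sq hp n)
  have hm2 : Measurable (fun u : ℚ_[p] => u - (-(z^2))) := by fun_prop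
  rw [hS, nu_scale c hc0 _ (hm2 hm), nu_translate, nu_kap hp z _ e n hz, hcn,
    _root_.zpow_neg, inv_inv, ENNReal.ofReal_mul (zpow_nonneg hp0.le _)]

/-- measure of a piece -/
noncomputable def mT (q : ℝ) (ρ κ : Fin 2) (a i j k e n : ℕ) : ℝ :=
  if ρ.val ≤ k then (1 - q⁻¹) ^ 4 * (q ^ (-4:ℤ)) ^ a * q⁻¹ ^ κ.val * q⁻¹ ^ ρ.val * q⁻¹ ^ e * kap q (i+j+k) e n else 0

lemma nuC_TT (hp : Odd p) (ρ κ : Fin 2) (a i j k e n : ℕ) :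
    nuC p (TT p ρ κ a i j k e n) = ENNReal.ofReal (mT p ρ κ a i j k e n) := by
  have h1 : (0:ℝ) ≤ 1 - (p:ℝ)⁻¹ := sub_nonneg.2 (inv_le_one_of_one_le₀ hp1.le)
  have hz : ∀ n : ℤ, 0 ≤ (p:ℝ) ^ n := fun n => zpow_nonneg hp0.le n
  have hk := kap_nonneg hp (i+j+k) e n
  unfold mT
  split_ifs with hρ
  swap
  · rw [ENNReal.ofReal_zero]
    refine (congrArg _ (eq_empty_iff_forall_notMem.2 ?_)).trans measure_empty
    rintro u ⟨-, -, -, -, h⟩; exact hρ h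
  set A : Set (B6 p) := (({x | ‖x‖ = (p:ℝ) ^ (-(a:ℤ))} ×ˢ {x | ‖x‖ ≤ (p:ℝ) ^ (-((a:ℤ) + κ.val))} ×ˢ
    {x | ‖x‖ ≤ (p:ℝ) ^ (-((a:ℤ) + ρ.val))} ×ˢ {x | ‖x‖ ≤ (p:ℝ) ^ (-(0:ℤ))}) ×ˢ
    ({x | ‖x‖ = (p:ℝ) ^ (-(i:ℤ))} ×ˢ {x | ‖x‖ = (p:ℝ) ^ (-(j:ℤ))})) with hA
  have hAm : MeasurableSet A := by
    have hn : ∀ r : ℝ, MeasurableSet {u : ℚ_[p] | ‖u‖ ≤ r} :=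
      fun r => measurableSet_le measurable_norm measurable_const
    exact ((meas_sphere _).prod ((hn _).prod ((hn _).prod (hn _)))).prod ((meas_sphere _).prod (meas_sphere _))
  have hAmem : ∀ b : B6 p, b ∈ A ↔ ((‖b.1.1‖ = (p:ℝ) ^ (-(a:ℤ)) ∧ ‖b.1.2.1‖ ≤ (p:ℝ) ^ (-((a:ℤ) + κ.val)) ∧
      ‖b.1.2.2.1‖ ≤ (p:ℝ) ^ (-((a:ℤ) + ρ.val)) ∧ ‖b.1.2.2.2‖ ≤ 1) ∧
    (‖b.2.1‖ = (p:ℝ) ^ (-(i:ℤ)) ∧ ‖b.2.2‖ = (p:ℝ) ^ (-(j:ℤ)))) := by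
    intro b; simp only [hA, mem_prod, mem_ofPred_eq, neg_zero, zpow_zero]
  have hAmeas : nu6 p A = ENNReal.ofReal ((1 - (p:ℝ)⁻¹) * (p:ℝ) ^ (-(a:ℤ))) *
      (ENNReal.ofReal ((p:ℝ) ^ (-((a:ℤ) + κ.val))) * (ENNReal.ofReal ((p:ℝ) ^ (-((a:ℤ) + ρ.val))) *
        ENNReal.ofReal ((p:ℝ) ^ (-(0:ℤ))))) * (ENNReal.ofReal ((1 - (p:ℝ)⁻¹) * (p:ℝ) ^ (-(i:ℤ))) *
         ENNReal.ofReal ((1 - (p:ℝ)⁻¹) * (p:ℝ) ^ (-(j:ℤ)))) := by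
    simp only [hA, nu6, Measure.prod_prod, nu_sphere, nu_cball]
  have hTm := meas_TT hp ρ κ a i j k e n
  unfold nuC
  rw [prod_fib_symm _ _ _ hTm {z | ‖z‖ = (p:ℝ) ^ (-(e:ℤ))} (meas_sphere _)
    (ENNReal.ofReal ((p:ℝ) ^ ((i:ℤ) + j - a) * kap p (i+j+k) e n) * nu6 p A) _ (fun x hx => hx.2.1)]
  · rw [nu_sphere, hAmeas]
    simp only [neg_zero, zpow_zero, ENNReal.ofReal_one, mul_one]
    rw [← ENNReal.ofReal_mul (by have := hz (-((a:ℤ) + κ.val)); positivity),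
      ← ENNReal.ofReal_mul (by have := hz (-(a:ℤ)); positivity), ← ENNReal.ofReal_mul (by have := hz (-(i:ℤ)); positivity),
      ← ENNReal.ofReal_mul (by have := hz (-(a:ℤ)); have := hz (-((a:ℤ) + κ.val)); have := hz (-((a:ℤ) + ρ.val)); positivity),
      ← ENNReal.ofReal_mul (by have := hz ((i:ℤ)+j-a); positivity), ← ENNReal.ofReal_mul (by
        have := hz ((i:ℤ)+j-a); have := hz (-(a:ℤ)); have := hz (-((a:ℤ) + κ.val)); have := hz (-((a:ℤ) + ρ.val)); have := hz (-(i:ℤ)); have := hz (-(j:ℤ)); positivity)]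
    congr 1
    have hp0' := (hp0 (p := p)).ne'
    simp only [neg_add, zpow_add₀ hp0', zpow_sub₀ hp0', _root_.zpow_neg, zpow_natCast, inv_pow]
    have h5 : ((p:ℝ) ^ (4:ℤ)) = (p:ℝ) ^ 4 := by norm_cast
    rw [h5, ← pow_mul]
    field_simp
    ring
  · intro z hz'
    have hm2 : Measurable (fun x : B6 p × ℚ_[p] => (x, z)) := by fun_prop
    rw [prod_fib (nu6 p) (nu p) _ (hm2 hTm) A hAm
      (ENNReal.ofReal ((p:ℝ) ^ ((i:ℤ) + j - a) * kap p (i+j+k) e n))]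
    · intro b hb
      have hb' := (hAmem b).1 hb
      rw [← nu_delta hp b.1.1 b.2.1 b.2.2 z a i j k e n hb'.1.1 hb'.2.1 hb'.2.2 hz']
      congr 1
      ext δ
      simp only [mem_preimage, TT, mem_ofPred_eq]
      constructor
      · rintro ⟨-, -, h1, h2, -⟩; exact ⟨h1, h2⟩
      · rintro ⟨h1, h2⟩; exact ⟨hb', hz', h1, h2, hρ⟩
    · intro x hx
      exact (hAmem _).2 hx.1

end partFour

section partFive
open Metric Set ENNReal
variable {p : ℕ} [Fact p.Prime]

lemma Pq_eq (v : VV p) (ρ κ : Fin 2) : Pq v =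
    (v.1 ρ κ * v.2 (ρ+1) (κ+1) - v.1 ρ (κ+1) * v.2 (ρ+1) κ + (v.1 (ρ+1) κ * v.2 ρ (κ+1) - v.1 (ρ+1) (κ+1) * v.2 ρ κ)) ^ 2
    - 4 * (v.1 ρ κ * v.2 ρ (κ+1) - v.1 ρ (κ+1) * v.2 ρ κ) * (v.1 (ρ+1) κ * v.2 (ρ+1) (κ+1) - v.1 (ρ+1) (κ+1) * v.2 (ρ+1) κ) := by
  fin_cases ρ <;> fin_cases κ <;>
  · simp [Pq, Matrix.det_fin_two, Matrix.adjugate_fin_two, Matrix.mul_apply, Fin.sum_univ_two]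
    ring

lemma nrm_neg {a b : ℚ_[p]} (h : a = -b) : ‖a‖ = ‖b‖ := by rw [h, norm_neg]
lemma nrm_pos {a b : ℚ_[p]} (h : a = b) : ‖a‖ = ‖b‖ := by rw [h]
lemma mx_same {A B C A' B' C' : ℝ} (h1 : A = A') (h2 : B = B') (h3 : C = C') :
    max (max A B) C = max (max A' B') C' := by rw [h1, h2, h3]
lemma mx_flip {A B C A' B' C' : ℝ} (h1 : A = C') (h2 : B = B') (h3 : C = A') :
    max (max A B) C = max (max A' B') C' := by
  rw [h1, h2, h3, max_comm A' B', max_comm C' B', max_assoc, max_assoc, max_comm C' A']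

lemma m1_eq (v : VV p) (ρ κ : Fin 2) : mcoord (Fmap1 v) =
    max (max ‖v.1 ρ κ * v.2 ρ (κ+1) - v.1 ρ (κ+1) * v.2 ρ κ‖
    ‖v.1 ρ κ * v.2 (ρ+1) (κ+1) - v.1 ρ (κ+1) * v.2 (ρ+1) κ + (v.1 (ρ+1) κ * v.2 ρ (κ+1) - v.1 (ρ+1) (κ+1) * v.2 ρ κ)‖)
    ‖v.1 (ρ+1) κ * v.2 (ρ+1) (κ+1) - v.1 (ρ+1) (κ+1) * v.2 (ρ+1) κ‖ := by
  have e2 : (1:Fin 2) + 1 = 0 := rfl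
  fin_cases ρ <;> fin_cases κ <;>
    simp only [Fin.zero_eta, Fin.mk_one, zero_add, e2, mcoord, Fmap1]
  · refine mx_same (nrm_neg ?_) (nrm_neg ?_) (nrm_neg ?_) <;> ring
  · refine mx_flip rfl (nrm_pos ?_) rfl; ring
  · refine mx_flip (nrm_neg ?_) (nrm_neg ?_) (nrm_neg ?_) <;> ring

lemma m2_eq (v : VV p) (ρ κ : Fin 2) : mcoord (Fmap2 v) =
    max (max ‖v.1 ρ κ * v.2 (ρ+1) κ - v.2 ρ κ * v.1 (ρ+1) κ‖
    ‖v.1 ρ κ * v.2 (ρ+1) (κ+1) - v.2 ρ (κ+1) * v.1 (ρ+1) κ + (v.1 ρ (κ+1) * v.2 (ρ+1) κ - v.2 ρ κ * v.1 (ρ+1) (κ+1))‖)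
    ‖v.1 ρ (κ+1) * v.2 (ρ+1) (κ+1) - v.2 ρ (κ+1) * v.1 (ρ+1) (κ+1)‖ := by
  have e2 : (1:Fin 2) + 1 = 0 := rfl
  fin_cases ρ <;> fin_cases κ <;>
    simp only [Fin.zero_eta, Fin.mk_one, zero_add, e2, mcoord, Fmap2]
  · refine mx_flip rfl (nrm_pos ?_) rfl; ring
  · refine mx_same (nrm_neg ?_) (nrm_neg ?_) (nrm_neg ?_) <;> ring
  · refine mx_flip (nrm_neg ?_) (nrm_neg ?_) (nrm_neg ?_) <;> ring

lemma shift_le (A B C r : ℚ_[p]) (hr : ‖r‖ ≤ 1) :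
    max (max ‖A‖ ‖B + 2 * r * A‖) ‖C + r * B + r ^ 2 * A‖ ≤ max (max ‖A‖ ‖B‖) ‖C‖ := by
  set m := max (max ‖A‖ ‖B‖) ‖C‖
  have hA : ‖A‖ ≤ m := (le_max_left _ _).trans (le_max_left _ _)
  have hB : ‖B‖ ≤ m := (le_max_right _ _).trans (le_max_left _ _)
  have hC : ‖C‖ ≤ m := le_max_right _ _
  have h2 : ‖(2:ℚ_[p])‖ ≤ 1 := by simpa using Padic.norm_int_le_one (p := p) 2
  have hm : 0 ≤ m := (norm_nonneg A).trans hA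
  have hmul : ∀ x y : ℚ_[p], ‖x‖ ≤ 1 → ‖y‖ ≤ m → ‖x * y‖ ≤ m := by
    intro x y hx hy
    rw [norm_mul]
    calc ‖x‖ * ‖y‖ ≤ 1 * m := mul_le_mul hx hy (norm_nonneg _) zero_le_one
      _ = m := one_mul m
  have hadd : ∀ x y : ℚ_[p], ‖x‖ ≤ m → ‖y‖ ≤ m → ‖x + y‖ ≤ m := fun x y hx hy =>
    (Padic.nonarchimedean _ _).trans (max_le hx hy)
  have h2r : ‖2 * r‖ ≤ 1 := by rw [norm_mul]; exact mul_le_one₀ h2 (norm_nonneg _) hr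
  have hr2 : ‖r ^ 2‖ ≤ 1 := by rw [norm_pow]; exact pow_le_one₀ (norm_nonneg _) hr
  exact max_le (max_le hA (hadd _ _ hB (hmul _ _ h2r hA))) (hadd _ _ (hadd _ _ hC (hmul _ _ hr hB)) (hmul _ _ hr2 hA))

lemma shift_eq (A B C r : ℚ_[p]) (hr : ‖r‖ ≤ 1) :
    max (max ‖A‖ ‖B + 2 * r * A‖) ‖C + r * B + r ^ 2 * A‖ = max (max ‖A‖ ‖B‖) ‖C‖ := by
  refine le_antisymm (shift_le A B C r hr) ?_
  have := shift_le A (B + 2 * r * A) (C + r * B + r ^ 2 * A) (-r) (by rwa [norm_neg])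
  rw [show B + 2 * r * A + 2 * (-r) * A = B by ring,
    show C + r * B + r ^ 2 * A + -r * (B + 2 * r * A) + (-r) ^ 2 * A = C by ring] at this
  exact this

lemma chart (v : VV p) (ρ κ : Fin 2) (hx : v.1 ρ κ ≠ 0) : ∃ x y r r' t w w' z : ℚ_[p],
    x = v.1 ρ κ ∧ y = v.2 ρ κ ∧
    r = v.1 (ρ+1) κ / v.1 ρ κ ∧ r' = v.1 ρ (κ+1) / v.1 ρ κ ∧
    v.1 ρ (κ+1) = x * r' ∧ v.1 (ρ+1) κ = x * r ∧ v.1 (ρ+1) (κ+1) = x * (t + r * r') ∧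
    v.2 ρ (κ+1) = w + r' * y ∧ v.2 (ρ+1) κ = w' + r * y ∧
    v.2 (ρ+1) (κ+1) = z + t * y + r * w + r' * w' + r * r' * y ∧
    Phi ρ κ v = ((((x, x * r', x * r, y), (w, w')), x * t), z) := by
  refine ⟨v.1 ρ κ, v.2 ρ κ, v.1 (ρ+1) κ / v.1 ρ κ, v.1 ρ (κ+1) / v.1 ρ κ,
    (v.1 (ρ+1) (κ+1) - v.1 ρ (κ+1) * v.1 (ρ+1) κ / v.1 ρ κ) / v.1 ρ κ,
    (Phi ρ κ v).1.1.2.1, (Phi ρ κ v).1.1.2.2, (Phi ρ κ v).2, rfl, rfl, rfl, rfl, ?_, ?_, ?_, ?_, ?_, ?_, ?_⟩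
  · field_simp
  · field_simp
  · field_simp; ring
  · change _ = (v.2 ρ (κ+1) - v.1 ρ (κ+1) / v.1 ρ κ * v.2 ρ κ) + _
    ring
  · change _ = (v.2 (ρ+1) κ - v.1 (ρ+1) κ / v.1 ρ κ * v.2 ρ κ) + _
    ring
  · change _ = (v.2 (ρ+1) (κ+1) - ((v.1 (ρ+1) (κ+1) - v.1 ρ (κ+1) * v.1 (ρ+1) κ / v.1 ρ κ) / v.1 ρ κ * v.2 ρ κ
      + v.1 (ρ+1) κ / v.1 ρ κ * (Phi ρ κ v).1.1.2.1 + v.1 ρ (κ+1) / v.1 ρ κ * (Phi ρ κ v).1.1.2.2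
      + v.1 (ρ+1) κ / v.1 ρ κ * (v.1 ρ (κ+1) / v.1 ρ κ) * v.2 ρ κ)) + _ + _ + _ + _
    ring
  · rw [mul_div_cancel₀ _ hx, mul_div_cancel₀ _ hx, mul_div_cancel₀ _ hx]
    rfl

lemma chart_vals (v : VV p) (ρ κ : Fin 2) (x y r r' t w w' z : ℚ_[p]) (h0 : x = v.1 ρ κ) (h1 : y = v.2 ρ κ)
    (h2 : v.1 ρ (κ+1) = x * r') (h3 : v.1 (ρ+1) κ = x * r) (h4 : v.1 (ρ+1) (κ+1) = x * (t + r * r'))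
    (h5 : v.2 ρ (κ+1) = w + r' * y) (h6 : v.2 (ρ+1) κ = w' + r * y)
    (h7 : v.2 (ρ+1) (κ+1) = z + t * y + r * w + r' * w' + r * r' * y)
    (hr : ‖r‖ ≤ 1) (hr' : ‖r'‖ ≤ 1) :
    Pq v = x ^ 2 * (z ^ 2 + 4 * t * w * w') ∧
    mcoord (Fmap1 v) = ‖x‖ * max (max ‖w‖ ‖z‖) ‖t * w'‖ ∧
    mcoord (Fmap2 v) = ‖x‖ * max (max ‖w'‖ ‖z‖) ‖t * w‖ := by
  refine ⟨?_, ?_, ?_⟩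
  · rw [Pq_eq v ρ κ, ← h0, ← h1, h2, h3, h4, h5, h6, h7]; ring
  · rw [m1_eq v ρ κ, ← h0, ← h1, h2, h3, h4, h5, h6, h7]
    rw [mul_max_of_nonneg _ _ (norm_nonneg _), mul_max_of_nonneg _ _ (norm_nonneg _), ← norm_mul, ← norm_mul, ← norm_mul,
      ← norm_neg (x * (t * w')), ← shift_eq (x * w) (x * z) (-(x * (t * w'))) r hr]
    congr 3 <;> ring
  · rw [m2_eq v ρ κ, ← h0, ← h1, h2, h3, h4, h5, h6, h7]
    rw [mul_max_of_nonneg _ _ (norm_nonneg _), mul_max_of_nonneg _ _ (norm_nonneg _), ← norm_mul, ← norm_mul, ← norm_mul,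
      ← norm_neg (x * (t * w)), ← shift_eq (x * w') (x * z) (-(x * (t * w))) r' hr']
    congr 3 <;> ring

end partFive

section partSix
open Metric Set ENNReal
variable {p : ℕ} [Fact p.Prime]

/-- the pieces -/
def SS (p : ℕ) [Fact p.Prime] (ρ κ : Fin 2) (a i j k e n : ℕ) : Set (VV p) :=
  Phi ρ κ ⁻¹' TT p ρ κ a i j k e n

lemma ne_zero_of_norm {x : ℚ_[p]} {m : ℤ} (h : ‖x‖ = (p:ℝ) ^ m) : x ≠ 0 := by
  rintro rfl; rw [norm_zero] at h; exact zpow_ne_zero _ hp0.ne' h.symm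

lemma SS_unpack {ρ κ : Fin 2} {a i j k e n : ℕ} {v : VV p} (hv : v ∈ SS p ρ κ a i j k e n) :
    ∃ x y r r' t w w' z : ℚ_[p],
    x = v.1 ρ κ ∧ y = v.2 ρ κ ∧
    v.1 ρ (κ+1) = x * r' ∧ v.1 (ρ+1) κ = x * r ∧ v.1 (ρ+1) (κ+1) = x * (t + r * r') ∧
    v.2 ρ (κ+1) = w + r' * y ∧ v.2 (ρ+1) κ = w' + r * y ∧
    v.2 (ρ+1) (κ+1) = z + t * y + r * w + r' * w' + r * r' * y ∧
    Phi ρ κ v = ((((x, x * r', x * r, y), (w, w')), x * t), z) ∧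
    ‖x‖ = (p:ℝ) ^ (-(a:ℤ)) ∧ ‖y‖ ≤ 1 ∧ ‖r‖ ≤ (p:ℝ) ^ (-(ρ.val:ℤ)) ∧ ‖r'‖ ≤ (p:ℝ) ^ (-(κ.val:ℤ)) ∧
    ‖t‖ = (p:ℝ) ^ (-(k:ℤ)) ∧ ‖w‖ = (p:ℝ) ^ (-(i:ℤ)) ∧ ‖w'‖ = (p:ℝ) ^ (-(j:ℤ)) ∧ ‖z‖ = (p:ℝ) ^ (-(e:ℤ)) ∧
    z ^ 2 + 4 * t * w * w' ∈ Sq p n ∧ ρ.val ≤ k := by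
  have hx : v.1 ρ κ ≠ 0 := ne_zero_of_norm hv.1.1.1
  obtain ⟨x, y, r, r', t, w, w', z, h0, h1, h2, h3, h4, h5, h6, h7, h8, h9, h10⟩ := chart v ρ κ hx
  refine ⟨x, y, r, r', t, w, w', z, h0, h1, h4, h5, h6, h7, h8, h9, h10, ?_⟩
  have hv' : Phi ρ κ v ∈ TT p ρ κ a i j k e n := hv
  rw [h10] at hv'
  obtain ⟨⟨⟨g1, g2, g3, g4⟩, g5, g6⟩, g7, g8, g9, g10⟩ := hv'
  dsimp only at g1 g2 g3 g4 g5 g6 g7 g8 g9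
  have hx0 : x ≠ 0 := h0 ▸ hx
  have hxn : 0 < ‖x‖ := norm_pos_iff.2 hx0
  rw [mul_div_cancel_left₀ _ hx0] at g9
  rw [norm_mul, neg_add, zpow_add₀ hp0.ne', ← g1] at g2 g3 g8
  exact ⟨g1, g4, le_of_mul_le_mul_left g3 hxn, le_of_mul_le_mul_left g2 hxn, mul_left_cancel₀ hxn.ne' g8, g5, g6, g7, g9, g10⟩

lemma zneg_le_one (n : ℕ) : (p:ℝ) ^ (-(n:ℤ)) ≤ 1 := by
  have := (zle_iff (p := p) (a := -(n:ℤ)) (b := 0)).2 (by omega)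
  simpa using this

lemma nadd {x y : ℚ_[p]} {m : ℝ} (hx : ‖x‖ ≤ m) (hy : ‖y‖ ≤ m) : ‖x + y‖ ≤ m :=
  (Padic.nonarchimedean _ _).trans (max_le hx hy)
lemma nmul {x y : ℚ_[p]} (hx : ‖x‖ ≤ 1) (hy : ‖y‖ ≤ 1) : ‖x * y‖ ≤ 1 := by
  rw [norm_mul]; exact mul_le_one₀ hx (norm_nonneg _) hy

lemma all_of_four {P : Fin 2 → Fin 2 → Prop} (ρ κ : Fin 2) (h1 : P ρ κ) (h2 : P ρ (κ+1)) (h3 : P (ρ+1) κ)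
    (h4 : P (ρ+1) (κ+1)) : ∀ i j, P i j := by
  intro i j
  by_cases hi : i = ρ <;> by_cases hj : j = κ
  · rwa [hi, hj]
  · obtain rfl := fin2_ne hj; rwa [hi]
  · obtain rfl := fin2_ne hi; rwa [hj]
  · obtain rfl := fin2_ne hi; obtain rfl := fin2_ne hj; assumption

lemma max_zpow (a b : ℕ) : max ((p:ℝ) ^ (-(a:ℤ))) ((p:ℝ) ^ (-(b:ℤ))) = (p:ℝ) ^ (-((min a b : ℕ):ℤ)) := by
  rcases le_total a b with h | h
  · rw [min_eq_left h, max_eq_left (zle_iff.2 (by omega))]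
  · rw [min_eq_right h, max_eq_right (zle_iff.2 (by omega))]

lemma SS_Vd {ρ κ : Fin 2} {a i j k e n : ℕ} {v : VV p} (hv : v ∈ SS p ρ κ a i j k e n)
    (d : ℤ_[p]) (hd : ∃ c : ℤ_[p]ˣ, d = (c : ℤ_[p]) ^ 2) : v ∈ Vd p d := by
  obtain ⟨x, y, r, r', t, w, w', z, h0, h1, h2, h3, h4, h5, h6, h7, h8, hx, hy, hr, hr', ht, hw, hw', hz, hP, hk⟩ := SS_unpack hv
  replace hr := hr.trans (zneg_le_one _)
  replace hr' := hr'.trans (zneg_le_one _)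
  have hP1 := (chart_vals v ρ κ x y r r' t w w' z h0 h1 h2 h3 h4 h5 h6 h7 hr hr').1
  have ht := ht.le.trans (zneg_le_one _)
  have hw := hw.le.trans (zneg_le_one _)
  have hw' := hw'.le.trans (zneg_le_one _)
  have hz := hz.le.trans (zneg_le_one _)
  have hx1 := hx.le.trans (zneg_le_one _)
  refine ⟨all_of_four ρ κ (h0 ▸ hx1) ?_ ?_ ?_, all_of_four ρ κ (h1 ▸ hy) ?_ ?_ ?_, ?_⟩
  · rw [h2]; exact nmul hx1 hr'
  · rw [h3]; exact nmul hx1 hr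
  · rw [h4]; exact nmul hx1 (nadd ht (nmul hr hr'))
  · rw [h5]; exact nadd hw (nmul hr' hy)
  · rw [h6]; exact nadd hw' (nmul hr hy)
  · rw [h7]; exact nadd (nadd (nadd (nadd hz (nmul ht hy)) (nmul hr hw)) (nmul hr' hw')) (nmul (nmul hr hr') hy)
  · obtain ⟨c, rfl⟩ := hd
    obtain ⟨⟨g, hg⟩, hn⟩ := hP
    have hg0 : g ≠ 0 := by
      have := ne_zero_of_norm hn
      rw [hg] at this; exact left_ne_zero_of_mul this
    have hc0 : ((c:ℤ_[p]):ℚ_[p]) ≠ 0 := by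
      intro h
      exact c.ne_zero (Subtype.ext h)
    refine ⟨x * g / ((c:ℤ_[p]):ℚ_[p]), div_ne_zero (mul_ne_zero (ne_zero_of_norm hx) hg0) hc0, ?_⟩
    rw [hP1, hg, PadicInt.coe_pow]; field_simp

lemma fs_eq (d : ℤ_[p]) (β : ℕ → ℝ) (s : ℝ) (v : VV p) (l₁ l₂ : ℕ) (hP : Pq v ≠ 0)
    (h1 : ‖(d : ℚ_[p])‖ * mcoord (Fmap1 v) ^ 2 = ‖Pq v‖ * (p : ℝ) ^ (2 * l₁))
    (h2 : ‖(d : ℚ_[p])‖ * mcoord (Fmap2 v) ^ 2 = ‖Pq v‖ * (p : ℝ) ^ (2 * l₂)) :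
    fs p d β s v = β l₁ * β l₂ * ‖Pq v‖ ^ (s - 2) := by
  have h : Pq v ≠ 0 ∧
      (∃ l : ℕ, ‖(d : ℚ_[p])‖ * mcoord (Fmap1 v) ^ 2 = ‖Pq v‖ * (p : ℝ) ^ (2 * l)) ∧
      (∃ l : ℕ, ‖(d : ℚ_[p])‖ * mcoord (Fmap2 v) ^ 2 = ‖Pq v‖ * (p : ℝ) ^ (2 * l)) := ⟨hP, ⟨_, h1⟩, ⟨_, h2⟩⟩
  have huniq : ∀ l l' : ℕ, ‖Pq v‖ * (p : ℝ) ^ (2 * l) = ‖Pq v‖ * (p : ℝ) ^ (2 * l') → l = l' := by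
    intro l l' hh
    have h3 := mul_left_cancel₀ (norm_ne_zero_iff.2 hP) hh
    have := pow_right_injective₀ (hp0 (p := p)) hp1.ne' h3
    omega
  unfold fs
  rw [dif_pos h]
  rw [huniq _ _ (h.2.1.choose_spec.symm.trans h1), huniq _ _ (h.2.2.choose_spec.symm.trans h2)]

lemma SS_fs (hp : Odd p) {ρ κ : Fin 2} {a i j k e n : ℕ} {v : VV p} (hv : v ∈ SS p ρ κ a i j k e n)
    (d : ℤ_[p]) (hd1 : ‖(d:ℚ_[p])‖ = 1) (β : ℕ → ℝ) (s : ℝ) :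
    fs p d β s v = β (n - min (min i e) (j+k)) * β (n - min (min j e) (i+k)) * ((p:ℝ) ^ (-2 * (s-2))) ^ (a + n) := by
  obtain ⟨x, y, r, r', t, w, w', z, h0, h1, h2, h3, h4, h5, h6, h7, h8, hx, hy, hr, hr', ht, hw, hw', hz, hP, hk⟩ := SS_unpack hv
  replace hr := hr.trans (zneg_le_one _)
  replace hr' := hr'.trans (zneg_le_one _)
  obtain ⟨hP1, hm1, hm2⟩ := chart_vals v ρ κ x y r r' t w w' z h0 h1 h2 h3 h4 h5 h6 h7 hr hr'
  have hPn : ‖Pq v‖ = (p:ℝ) ^ (-(2*((a:ℤ)+n))) := by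
    rw [hP1, norm_mul, norm_pow, hx, hP.2, ← zpow_natCast, ← _root_.zpow_mul, ← zpow_add₀ hp0.ne']
    congr 1; push_cast; ring
  have htw' : ‖t * w'‖ = (p:ℝ) ^ (-((j + k : ℕ):ℤ)) := by
    rw [norm_mul, ht, hw', ← zpow_add₀ hp0.ne']; congr 1; push_cast; ring
  have htw : ‖t * w‖ = (p:ℝ) ^ (-((i + k : ℕ):ℤ)) := by
    rw [norm_mul, ht, hw, ← zpow_add₀ hp0.ne']; congr 1; push_cast; ring
  rw [hw, hz, htw', max_zpow, max_zpow, hx, ← zpow_add₀ hp0.ne'] at hm1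
  rw [hw', hz, htw, max_zpow, max_zpow, hx, ← zpow_add₀ hp0.ne'] at hm2
  have hn : min (2*e) (i+j+k) ≤ 2 * n := by
    have h9 := hP.2
    have h10 := Padic.nonarchimedean (z^2) (4 * t * w * w')
    have hz2 : ‖z ^ 2‖ = (p:ℝ) ^ (-((2 * e:ℕ):ℤ)) := by
      rw [norm_pow, hz, ← zpow_natCast, ← _root_.zpow_mul]; congr 1; push_cast; ring
    have h4' : ‖4 * t * w * w'‖ = (p:ℝ) ^ (-((i+j+k:ℕ):ℤ)) := by
      rw [norm_mul, norm_mul, norm_mul, norm_four hp, ht, hw, hw', one_mul, ← zpow_add₀ hp0.ne', ← zpow_add₀ hp0.ne']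
      congr 1; push_cast; ring
    rw [h9, hz2, h4', max_zpow, zle_iff] at h10
    omega
  have hlev : ∀ b : ℕ, b ≤ n → (1:ℝ) * ((p:ℝ) ^ (-(a:ℤ) + -(b:ℤ))) ^ 2 = (p:ℝ) ^ (-(2*((a:ℤ)+n))) * (p:ℝ) ^ (2 * (n - b)) := by
    intro b hb
    rw [one_mul, ← zpow_natCast, ← zpow_natCast, ← _root_.zpow_mul, ← zpow_add₀ hp0.ne']
    congr 1; push_cast [hb]; ring
  have hPne : Pq v ≠ 0 := ne_zero_of_norm hPn
  rw [fs_eq d β s v (n - min (min i e) (j+k)) (n - min (min j e) (i+k)) hPne, hPn]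
  · congr 1
    rw [← Real.rpow_intCast, ← Real.rpow_natCast, ← Real.rpow_mul hp0.le, ← Real.rpow_mul hp0.le]
    congr 1; push_cast; ring
  · rw [hd1, hm1, hPn]; exact hlev _ (by omega)
  · rw [hd1, hm2, hPn]; exact hlev _ (by omega)

end partSix

section partSeven
open Metric Set ENNReal
variable {p : ℕ} [Fact p.Prime]

def Piv (m : Fin 2 → Fin 2 → ℚ_[p]) (ρ κ : Fin 2) : Prop :=
  ‖m ρ (κ+1)‖ ≤ ‖m ρ κ‖ * (p:ℝ) ^ (-(κ.val:ℤ)) ∧ ‖m (ρ+1) κ‖ ≤ ‖m ρ κ‖ * (p:ℝ) ^ (-(ρ.val:ℤ)) ∧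
    ‖m (ρ+1) (κ+1)‖ ≤ ‖m ρ κ‖ * (p:ℝ) ^ (-(ρ.val:ℤ))

lemma lt_to_le {x y : ℚ_[p]} (h : ‖y‖ < ‖x‖) : ‖y‖ ≤ ‖x‖ * (p:ℝ) ^ (-(1:ℤ)) := by
  have hx : 0 < ‖x‖ := (norm_nonneg _).trans_lt h
  have h1 : ‖y / x‖ < (p:ℝ) ^ (0:ℤ) := by rw [norm_div, zpow_zero]; exact (div_lt_one hx).2 h
  have h2 : ‖y / x‖ ≤ (p:ℝ) ^ (-(1:ℤ)) := by
    by_cases hy : y / x = 0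
    · rw [hy, norm_zero]; exact zpow_nonneg hp0.le _
    rw [Padic.norm_eq_zpow_neg_valuation hy] at h1 ⊢
    rw [zlt_iff] at h1; rw [zle_iff]; omega
  rw [norm_div, div_le_iff₀ hx] at h2
  linarith

lemma exists_piv (m : Fin 2 → Fin 2 → ℚ_[p]) : ∃ ρ κ, Piv m ρ κ := by
  by_cases h1 : max ‖m 1 0‖ ‖m 1 1‖ ≤ max ‖m 0 0‖ ‖m 0 1‖
  · by_cases h2 : ‖m 0 1‖ ≤ ‖m 0 0‖
    · rw [max_eq_left h2, max_le_iff] at h1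
      exact ⟨0, 0, by simpa using h2, by simpa using h1.1, by simpa using h1.2⟩
    · push Not at h2
      rw [max_eq_right h2.le, max_le_iff] at h1
      exact ⟨0, 1, by simpa using lt_to_le h2, by simpa using h1.2, by simpa using h1.1⟩
  · push Not at h1
    by_cases h2 : ‖m 1 1‖ ≤ ‖m 1 0‖
    · rw [max_eq_left h2, max_lt_iff] at h1
      exact ⟨1, 0, by simpa using h2, by simpa using lt_to_le h1.1, by simpa using lt_to_le h1.2⟩
    · push Not at h2
      rw [max_eq_right h2.le, max_lt_iff] at h1
      exact ⟨1, 1, by simpa using lt_to_le h2, by simpa using lt_to_le h1.2, by simpa using lt_to_le h1.1⟩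

lemma piv_lt {a b : ℝ} (ha : 0 < a) (h : b ≤ a * (p:ℝ) ^ (-(1:ℤ))) : b < a := by
  have : (p:ℝ) ^ (-(1:ℤ)) < 1 := by
    have := (zlt_iff (p := p) (a := -(1:ℤ)) (b := 0)).2 (by omega)
    simpa using this
  nlinarith

lemma piv_unique (m : Fin 2 → Fin 2 → ℚ_[p]) (ρ κ ρ' κ' : Fin 2) (h : Piv m ρ κ) (h' : Piv m ρ' κ')
    (h0 : m ρ κ ≠ 0) (h0' : m ρ' κ' ≠ 0) : ρ = ρ' ∧ κ = κ' := by
  obtain ⟨a1, a2, a3⟩ := h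
  obtain ⟨b1, b2, b3⟩ := h'
  have c : 0 < ‖m ρ κ‖ := norm_pos_iff.2 h0
  have c' : 0 < ‖m ρ' κ'‖ := norm_pos_iff.2 h0'
  by_contra hcon
  fin_cases ρ <;> fin_cases κ <;> fin_cases ρ' <;> fin_cases κ' <;>
    first
    | exact hcon ⟨rfl, rfl⟩
    | (clear hcon
       simp only [Fin.zero_eta, Fin.mk_one, Fin.isValue, Fin.val_zero, Fin.val_one, Nat.cast_zero, Nat.cast_one,
         neg_zero, zpow_zero, mul_one, zero_add, show (1:Fin 2) + 1 = 0 from rfl] at *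
       have l : ∀ b : ℝ, b ≤ ‖m 0 1‖ * (p:ℝ) ^ (-(1:ℤ)) → 0 < ‖m 0 1‖ → b < ‖m 0 1‖ := fun b h k => piv_lt k h
       have l' : ∀ b : ℝ, b ≤ ‖m 1 0‖ * (p:ℝ) ^ (-(1:ℤ)) → 0 < ‖m 1 0‖ → b < ‖m 1 0‖ := fun b h k => piv_lt k h
       have l'' : ∀ b : ℝ, b ≤ ‖m 1 1‖ * (p:ℝ) ^ (-(1:ℤ)) → 0 < ‖m 1 1‖ → b < ‖m 1 1‖ := fun b h k => piv_lt k h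
       grind)

lemma SS_piv {ρ κ : Fin 2} {a i j k e n : ℕ} {v : VV p} (hv : v ∈ SS p ρ κ a i j k e n) :
    Piv v.1 ρ κ ∧ v.1 ρ κ ≠ 0 := by
  obtain ⟨x, y, r, r', t, w, w', z, h0, h1, h2, h3, h4, h5, h6, h7, h8, hx, hy, hr, hr', ht, hw, hw', hz, hP, hk⟩ := SS_unpack hv
  refine ⟨⟨?_, ?_, ?_⟩, h0 ▸ ne_zero_of_norm hx⟩
  · rw [h2, ← h0, norm_mul]; gcongr
  · rw [h3, ← h0, norm_mul]; gcongr
  · rw [h4, ← h0, norm_mul]; gcongr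
    refine nadd ?_ ?_
    · rw [ht, zle_iff]; omega
    · rw [norm_mul]
      calc ‖r‖ * ‖r'‖ ≤ (p:ℝ) ^ (-(ρ.val:ℤ)) * 1 := by
            gcongr
            exact hr'.trans (zneg_le_one _)
        _ = _ := mul_one _

abbrev JJ := Fin 2 × Fin 2 × ℕ × ℕ × ℕ × ℕ × ℕ × ℕ

def SJ (p : ℕ) [Fact p.Prime] (x : JJ) : Set (VV p) :=
  SS p x.1 x.2.1 x.2.2.1 x.2.2.2.1 x.2.2.2.2.1 x.2.2.2.2.2.1 x.2.2.2.2.2.2.1 x.2.2.2.2.2.2.2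

lemma SJ_disj : Pairwise (Function.onFun Disjoint (SJ p)) := by
  rintro ⟨ρ, κ, a, i, j, k, e, n⟩ ⟨ρ', κ', a', i', j', k', e', n'⟩ hne
  rw [Function.onFun, Set.disjoint_left]
  intro v hv hv'
  apply hne
  simp only [SJ] at hv hv'
  obtain ⟨rfl, rfl⟩ := piv_unique _ _ _ _ _ (SS_piv hv).1 (SS_piv hv').1 (SS_piv hv).2 (SS_piv hv').2
  obtain ⟨⟨⟨g1, g2, g3, g4⟩, g5, g6⟩, g7, g8, g9, g10⟩ := hv
  obtain ⟨⟨⟨f1, f2, f3, f4⟩, f5, f6⟩, f7, f8, f9, f10⟩ := hv'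
  have e1 := zpow_inj' (g1.symm.trans f1)
  have e2 := zpow_inj' (g5.symm.trans f5)
  have e3 := zpow_inj' (g6.symm.trans f6)
  have e4 := zpow_inj' (g7.symm.trans f7)
  have e5 := zpow_inj' (g8.symm.trans f8)
  have e6 := zpow_inj' (g9.2.symm.trans f9.2)
  simp only [Prod.mk.injEq, true_and]
  omega

lemma nat_exp {x : ℚ_[p]} (h0 : x ≠ 0) (m : ℕ) (h : ‖x‖ ≤ (p:ℝ) ^ (-(m:ℤ))) : ∃ n : ℕ, ‖x‖ = (p:ℝ) ^ (-(n:ℤ)) ∧ m ≤ n := by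
  rw [Padic.norm_eq_zpow_neg_valuation h0, zle_iff] at h
  refine ⟨x.valuation.toNat, ?_, by omega⟩
  rw [Padic.norm_eq_zpow_neg_valuation h0]; congr 1; omega

lemma nsub {x y : ℚ_[p]} {m : ℝ} (hx : ‖x‖ ≤ m) (hy : ‖y‖ ≤ m) : ‖x - y‖ ≤ m := by
  rw [sub_eq_add_neg]; exact nadd hx (by rwa [norm_neg])

lemma cover (d : ℤ_[p]) (hd : ∃ c : ℤ_[p]ˣ, d = (c : ℤ_[p]) ^ 2) (v : VV p) (hv : v ∈ Vd p d)
    (hne : ∀ ρ κ, (Phi ρ κ v).1.1.1.1 ≠ 0 ∧ (Phi ρ κ v).1.1.2.1 ≠ 0 ∧ (Phi ρ κ v).1.1.2.2 ≠ 0 ∧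
      (Phi ρ κ v).1.2 ≠ 0 ∧ (Phi ρ κ v).2 ≠ 0) : v ∈ ⋃ x, SJ p x := by
  obtain ⟨ρ, κ, p1, p2, p3⟩ := exists_piv v.1
  have hx : v.1 ρ κ ≠ 0 := (hne ρ κ).1
  obtain ⟨x, y, r, r', t, w, w', z, h0, h1, h2', h3', h4, h5, h6, h7, h8, h9, h10⟩ := chart v ρ κ hx
  obtain ⟨n1, n2, n3, n4, n5⟩ := hne ρ κ
  rw [h10] at n1 n2 n3 n4 n5
  dsimp only at n1 n2 n3 n4 n5
  obtain ⟨hA, hB, c, hc, hPc⟩ := hv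
  have hxp : 0 < ‖x‖ := norm_pos_iff.2 n1
  rw [← h0] at p1 p2 p3
  rw [h4, norm_mul] at p1
  rw [h5, norm_mul] at p2
  rw [h6, norm_mul] at p3
  have hr := le_of_mul_le_mul_left p2 hxp
  have hr' := le_of_mul_le_mul_left p1 hxp
  have htr := le_of_mul_le_mul_left p3 hxp
  have hr1 := hr.trans (zneg_le_one _)
  have hr1' := hr'.trans (zneg_le_one _)
  have ht : ‖t‖ ≤ (p:ℝ) ^ (-(ρ.val:ℤ)) := by
    have : t = (t + r * r') - r * r' := by ring
    rw [this]
    refine nsub htr ?_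
    rw [norm_mul]
    calc ‖r‖ * ‖r'‖ ≤ (p:ℝ) ^ (-(ρ.val:ℤ)) * 1 := by gcongr
      _ = _ := mul_one _
  have ht1 := ht.trans (zneg_le_one _)
  have hy : ‖y‖ ≤ 1 := h1 ▸ hB _ _
  have hw : ‖w‖ ≤ 1 := by
    rw [show w = v.2 ρ (κ+1) - r' * y by rw [h7]; ring]
    exact nsub (hB _ _) (nmul hr1' hy)
  have hw' : ‖w'‖ ≤ 1 := by
    rw [show w' = v.2 (ρ+1) κ - r * y by rw [h8]; ring]
    exact nsub (hB _ _) (nmul hr1 hy)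
  have hz : ‖z‖ ≤ 1 := by
    rw [show z = v.2 (ρ+1) (κ+1) - t * y - r * w - r' * w' - r * r' * y by rw [h9]; ring]
    exact nsub (nsub (nsub (nsub (hB _ _) (nmul ht1 hy)) (nmul hr1 hw)) (nmul hr1' hw')) (nmul (nmul hr1 hr1') hy)
  have hP1 := (chart_vals v ρ κ x y r r' t w w' z h0 h1 h4 h5 h6 h7 h8 h9 hr1 hr1').1
  have hone : ∀ u : ℚ_[p], ‖u‖ ≤ 1 → ‖u‖ ≤ (p:ℝ) ^ (-((0:ℕ):ℤ)) := by intro u hu; simpa using hu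
  obtain ⟨a, ha, -⟩ := nat_exp n1 0 (hone _ (h0 ▸ hA _ _))
  obtain ⟨i, hi, -⟩ := nat_exp n2 0 (hone _ hw)
  obtain ⟨j, hj, -⟩ := nat_exp n3 0 (hone _ hw')
  obtain ⟨e, he, -⟩ := nat_exp n5 0 (hone _ hz)
  obtain ⟨k, hk, hk1⟩ := nat_exp (right_ne_zero_of_mul n4) ρ.val ht
  obtain ⟨c0, rfl⟩ := hd
  set C : ℚ_[p] := ((c0:ℤ_[p]):ℚ_[p]) with hC
  have hc0 : C ≠ 0 := by
    intro h
    exact c0.ne_zero (Subtype.ext h)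
  set g := C * c / x with hg
  have hg0 : g ≠ 0 := div_ne_zero (mul_ne_zero hc0 hc) n1
  have hgg : z ^ 2 + 4 * t * w * w' = g * g := by
    rw [hP1, PadicInt.coe_pow] at hPc
    rw [hg]; field_simp; linear_combination hPc
  have h4n : ‖(4:ℚ_[p])‖ ≤ 1 := by
    have := Padic.norm_int_le_one (p := p) 4
    simpa using this
  have hg1 : ‖g‖ ≤ 1 := by
    have h : ‖g * g‖ ≤ 1 := by
      rw [← hgg, pow_two]
      exact nadd (nmul hz hz) (nmul (nmul (nmul h4n ht1) hw) hw')
    rw [norm_mul] at h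
    by_contra hcon
    push Not at hcon
    nlinarith
  obtain ⟨n, hn, -⟩ := nat_exp hg0 0 (hone _ hg1)
  refine mem_iUnion.2 ⟨(ρ, κ, a, i, j, k, e, n), ?_⟩
  simp only [SJ, SS, mem_preimage, h10, TT, mem_ofPred_eq]
  refine ⟨⟨⟨ha, ?_, ?_, hy⟩, hi, hj⟩, he, ?_, ?_, hk1⟩
  · rw [norm_mul, neg_add, zpow_add₀ hp0.ne', ← ha]; gcongr
  · rw [norm_mul, neg_add, zpow_add₀ hp0.ne', ← ha]; gcongr
  · rw [norm_mul, neg_add, zpow_add₀ hp0.ne', ← ha, hk]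
  · rw [mul_div_cancel_left₀ _ n1, hgg]
    refine ⟨⟨g, rfl⟩, ?_⟩
    rw [norm_mul, hn, ← zpow_add₀ hp0.ne']; congr 1; ring

end partSeven

section partEight
open Metric Set ENNReal
variable {p : ℕ} [Fact p.Prime]

/-- the summand -/
noncomputable def wt (q τ : ℝ) (β : ℕ → ℝ) (x : JJ) : ℝ :=
  mT q x.1 x.2.1 x.2.2.1 x.2.2.2.1 x.2.2.2.2.1 x.2.2.2.2.2.1 x.2.2.2.2.2.2.1 x.2.2.2.2.2.2.2 *
    (β (x.2.2.2.2.2.2.2 - min (min x.2.2.2.1 x.2.2.2.2.2.2.1) (x.2.2.2.2.1 + x.2.2.2.2.2.1)) *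
     β (x.2.2.2.2.2.2.2 - min (min x.2.2.2.2.1 x.2.2.2.2.2.2.1) (x.2.2.2.1 + x.2.2.2.2.2.1)) *
      τ ^ (x.2.2.1 + x.2.2.2.2.2.2.2))

lemma nu_ne : ∀ᵐ x ∂(nu p), x ≠ 0 := by
  rw [ae_iff]
  simp

lemma ae_fst {α β : Type*} [MeasurableSpace α] [MeasurableSpace β] {μ : Measure α} {ν : Measure β} [SFinite ν]
    {P : α → Prop} (h : ∀ᵐ x ∂μ, P x) : ∀ᵐ x ∂(μ.prod ν), P x.1 :=
  Measure.quasiMeasurePreserving_fst.ae h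
lemma ae_snd {α β : Type*} [MeasurableSpace α] [MeasurableSpace β] {μ : Measure α} {ν : Measure β} [SFinite ν]
    {P : β → Prop} (h : ∀ᵐ x ∂ν, P x) : ∀ᵐ x ∂(μ.prod ν), P x.2 :=
  Measure.quasiMeasurePreserving_snd.ae h

lemma nuC_ne : ∀ᵐ u ∂(nuC p), u.1.1.1.1 ≠ 0 ∧ u.1.1.2.1 ≠ 0 ∧ u.1.1.2.2 ≠ 0 ∧ u.1.2 ≠ 0 ∧ u.2 ≠ 0 := by
  have h := nu_ne (p := p)
  have h5 : ∀ᵐ u ∂(nuC p), u.2 ≠ 0 := ae_snd h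
  have h4 : ∀ᵐ u ∂(nuC p), u.1.2 ≠ 0 := ae_fst (P := fun x : B6 p × ℚ_[p] => x.2 ≠ 0) (ae_snd h)
  have h3 : ∀ᵐ u ∂(nuC p), u.1.1.2.2 ≠ 0 := ae_fst (P := fun x : B6 p × ℚ_[p] => x.1.2.2 ≠ 0)
    (ae_fst (P := fun x : B6 p => x.2.2 ≠ 0) (ae_snd (P := fun x : ℚ_[p] × ℚ_[p] => x.2 ≠ 0) (ae_snd h)))
  have h2 : ∀ᵐ u ∂(nuC p), u.1.1.2.1 ≠ 0 := ae_fst (P := fun x : B6 p × ℚ_[p] => x.1.2.1 ≠ 0)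
    (ae_fst (P := fun x : B6 p => x.2.1 ≠ 0) (ae_snd (P := fun x : ℚ_[p] × ℚ_[p] => x.1 ≠ 0) (ae_fst h)))
  have h1 : ∀ᵐ u ∂(nuC p), u.1.1.1.1 ≠ 0 := ae_fst (P := fun x : B6 p × ℚ_[p] => x.1.1.1 ≠ 0)
    (ae_fst (P := fun x : B6 p => x.1.1 ≠ 0)
      (ae_fst (P := fun x : ℚ_[p] × ℚ_[p] × ℚ_[p] × ℚ_[p] => x.1 ≠ 0) (ae_fst h)))
  filter_upwards [h1, h2, h3, h4, h5] with u a b c d e using ⟨a, b, c, d, e⟩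

lemma mT_nonneg (hp : Odd p) (ρ κ : Fin 2) (a i j k e n : ℕ) : 0 ≤ mT (p:ℝ) ρ κ a i j k e n := by
  have h1 : (0:ℝ) ≤ 1 - (p:ℝ)⁻¹ := sub_nonneg.2 (inv_le_one_of_one_le₀ hp1.le)
  have hk := kap_nonneg hp (i+j+k) e n
  have hp' := hp0 (p := p)
  unfold mT
  split_ifs
  · positivity
  · exact le_rfl

theorem main_int (hp : Odd p) (d : ℤ_[p]) (hd : ∃ c : ℤ_[p]ˣ, d = (c : ℤ_[p]) ^ 2) (β : ℕ → ℝ)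
    (μ : Measure (VV p)) [μ.IsAddHaarMeasure]
    (hμ : μ {v : VV p | (∀ i j, ‖v.1 i j‖ ≤ 1) ∧ (∀ i j, ‖v.2 i j‖ ≤ 1)} = 1) (s A : ℝ)
    (hsum : HasSum (wt p ((p:ℝ) ^ (-2 * (s-2))) β) A) :
    IntegrableOn (fs p d β s) (Vd p d) μ ∧ ∫ v in Vd p d, fs p d β s v ∂μ = A := by
  have hd1 : ‖(d:ℚ_[p])‖ = 1 := by
    obtain ⟨c, rfl⟩ := hd
    have := PadicInt.norm_units c
    rw [PadicInt.coe_pow, norm_pow, ← PadicInt.norm_def, this, one_pow]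
  have hmeas : ∀ x, MeasurableSet (SJ p x) := fun x => (Phi_mp _ _ μ hμ).measurable (meas_TT hp _ _ _ _ _ _ _ _)
  have hval : ∀ x, μ (SJ p x) = ENNReal.ofReal (mT p x.1 x.2.1 x.2.2.1 x.2.2.2.1 x.2.2.2.2.1 x.2.2.2.2.2.1 x.2.2.2.2.2.2.1 x.2.2.2.2.2.2.2) := by
    intro x
    rw [← nuC_TT hp, ← (Phi_mp x.1 x.2.1 μ hμ).measure_preimage (meas_TT hp _ _ _ _ _ _ _ _).nullMeasurableSet]
    rfl
  have hreal : ∀ x, μ.real (SJ p x) = mT p x.1 x.2.1 x.2.2.1 x.2.2.2.1 x.2.2.2.2.1 x.2.2.2.2.2.1 x.2.2.2.2.2.2.1 x.2.2.2.2.2.2.2 := by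
    intro x
    rw [Measure.real, hval, ENNReal.toReal_ofReal (mT_nonneg hp _ _ _ _ _ _ _ _)]
  set F : JJ → ℝ := fun x => (β (x.2.2.2.2.2.2.2 - min (min x.2.2.2.1 x.2.2.2.2.2.2.1) (x.2.2.2.2.1 + x.2.2.2.2.2.1)) *
     β (x.2.2.2.2.2.2.2 - min (min x.2.2.2.2.1 x.2.2.2.2.2.2.1) (x.2.2.2.1 + x.2.2.2.2.2.1)) *
      ((p:ℝ) ^ (-2 * (s-2))) ^ (x.2.2.1 + x.2.2.2.2.2.2.2)) with hF
  have hfs : ∀ x, ∀ v ∈ SJ p x, fs p d β s v = F x := fun x v hv => SS_fs hp hv d hd1 β s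
  have hae : Vd p d =ᵐ[μ] ⋃ x, SJ p x := by
    have h0 : ∀ᵐ v ∂μ, ∀ ρ κ, (Phi ρ κ v).1.1.1.1 ≠ 0 ∧ (Phi ρ κ v).1.1.2.1 ≠ 0 ∧ (Phi ρ κ v).1.1.2.2 ≠ 0 ∧
      (Phi ρ κ v).1.2 ≠ 0 ∧ (Phi ρ κ v).2 ≠ 0 := by
      rw [ae_all_iff]; intro ρ
      rw [ae_all_iff]; intro κ
      exact (Phi_mp ρ κ μ hμ).quasiMeasurePreserving.ae nuC_ne
    filter_upwards [h0] with v hv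
    refine propext ⟨fun h => cover d hd v h hv, fun h => ?_⟩
    obtain ⟨x, hx⟩ := mem_iUnion.1 h
    exact SS_Vd hx d hd
  have hcong : ∀ x, ∫ v in SJ p x, fs p d β s v ∂μ = wt p ((p:ℝ) ^ (-2 * (s-2))) β x := by
    intro x
    rw [setIntegral_congr_fun (g := fun _ => F x) (hmeas x) (hfs x), setIntegral_const, hreal]
    rfl
  have hcongn : ∀ x, ∫ v in SJ p x, ‖fs p d β s v‖ ∂μ = |wt p ((p:ℝ) ^ (-2 * (s-2))) β x| := by
    intro x
    rw [setIntegral_congr_fun (g := fun _ => |F x|) (hmeas x) (fun v hv => by rw [hfs x v hv, Real.norm_eq_abs]), setIntegral_const, hreal]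
    rw [show wt p ((p:ℝ) ^ (-2 * (s-2))) β x = mT p x.1 x.2.1 x.2.2.1 x.2.2.2.1 x.2.2.2.2.1 x.2.2.2.2.2.1
        x.2.2.2.2.2.2.1 x.2.2.2.2.2.2.2 * F x from rfl,
      abs_mul (mT p _ _ _ _ _ _ _ _) (F x), abs_of_nonneg (mT_nonneg hp _ _ _ _ _ _ _ _), smul_eq_mul]
  have hIntg : IntegrableOn (fs p d β s) (⋃ x, SJ p x) μ := by
    refine integrableOn_iUnion_of_summable_integral_norm (fun x => ?_) ?_
    · refine (integrableOn_congr_fun (hfs x) (hmeas x)).2 ?_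
      refine integrableOn_const ?_
      rw [hval]; exact ENNReal.ofReal_ne_top
    · simp_rw [hcongn]
      exact hsum.summable.abs
  refine ⟨hIntg.congr_set_ae hae, ?_⟩
  rw [setIntegral_congr_set hae]
  have h1 := hasSum_integral_iUnion hmeas SJ_disj hIntg
  simp_rw [hcong] at h1
  exact h1.unique hsum

end partEight

section partNine

lemma hcg {ι : Type*} {f g : ι → ℝ} {a b : ℝ} (h : HasSum f a) (hfg : ∀ x, g x = f x) (hab : a = b) : HasSum g b := by
  obtain rfl : g = f := funext hfg
  exact hab ▸ h

lemma hmul {ι κ : Type*} {f : ι → ℝ} {g : κ → ℝ} {a b : ℝ} (hf : HasSum f a) (hg : HasSum g b) :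
    HasSum (fun x : ι × κ => f x.1 * g x.2) (a * b) :=
  hf.mul hg (summable_mul_of_summable_norm hf.summable.norm hg.summable.norm)

lemma fib {X Y : Type*} {f : X × Y → ℝ} {g : X → ℝ} {A : ℝ} (hs : Summable f)
    (h : ∀ x, HasSum (fun y => f (x, y)) (g x)) (hg : HasSum g A) : HasSum f A := by
  have := hs.hasSum.prod_fiberwise h
  rw [hg.unique this]; exact hs.hasSum

lemma reg {α X : Type*} (f : α → ℝ) (P : α → Prop) [DecidablePred P] (φ : X → α) (g : X → ℝ) {s : ℝ}
    (hinj : Function.Injective φ) (hr : ∀ a, P a → ∃ x, φ x = a) (hP : ∀ x, P (φ x)) (hg : ∀ x, f (φ x) = g x)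
    (h : HasSum g s) : HasSum (fun a => if P a then f a else 0) s := by
  rw [← hinj.hasSum_iff]
  · convert h using 1
    funext x
    simp [hP, hg]
  · intro a ha
    rw [if_neg]
    intro hPa
    exact ha (hr a hPa)

lemma split_x {f : ℕ × ℕ → ℝ} {A B : ℝ} (h : HasSum f A) (h0 : HasSum (fun r => f (r, 0)) B) :
    HasSum (fun x : ℕ × ℕ => f (x.1, x.2 + 1)) (A - B) := by
  have h1 : HasSum (fun a : ℕ × ℕ => if a.2 = 0 then f a else 0) B := by
    refine reg f _ (fun r : ℕ => (r, 0)) _ ?_ ?_ ?_ (fun _ => rfl) h0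
    · intro a b hab; simpa using hab
    · rintro ⟨a, b⟩ hb; exact ⟨a, by simpa using hb.symm⟩
    · intro x; rfl
  have h2 := h.sub h1
  have hinj : Function.Injective (fun x : ℕ × ℕ => (x.1, x.2 + 1)) := by
    rintro ⟨a, b⟩ ⟨c, d⟩ hh; simpa using hh
  rw [← hinj.hasSum_iff] at h2
  · exact hcg h2 (fun x => by simp) rfl
  · rintro ⟨a, b⟩ hx
    rcases b with _ | b
    · simp
    · exact absurd ⟨(a, b), rfl⟩ hx

lemma split_r {f : ℕ × ℕ → ℝ} {A B : ℝ} (h : HasSum f A) (h0 : HasSum (fun r => f (0, r)) B) :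
    HasSum (fun x : ℕ × ℕ => f (x.1 + 1, x.2)) (A - B) := by
  have h1 : HasSum (fun x : ℕ × ℕ => f (x.2, x.1)) A := (Equiv.prodComm ℕ ℕ).hasSum_iff.2 h
  exact (Equiv.prodComm ℕ ℕ).hasSum_iff.2 (split_x h1 h0)

lemma split_one {f : ℕ → ℝ} {A : ℝ} (h : HasSum f A) : HasSum (fun n => f (n + 1)) (A - f 0) := by
  have := (hasSum_nat_add_iff' 1).2 h
  simpa using this

lemma geo {Y : ℝ} (h0 : 0 ≤ Y) (h1 : Y < 1) : HasSum (fun n : ℕ => Y ^ n) (1 - Y)⁻¹ :=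
  hasSum_geometric_of_lt_one h0 h1

lemma geoq {q : ℝ} (hq : 1 < q) : HasSum (fun n : ℕ => q⁻¹ ^ (n + 1)) (q - 1)⁻¹ := by
  have := (geo (inv_nonneg.2 (by linarith : 0 ≤ q)) (inv_lt_one_of_one_lt₀ hq)).mul_right q⁻¹
  refine hcg this (fun n => pow_succ _ _) ?_
  have h1 : q ≠ 0 := by positivity
  have h2 : q - 1 ≠ 0 := by linarith
  have h3 : 1 - q⁻¹ ≠ 0 := by
    rw [show 1 - q⁻¹ = (q - 1) / q by field_simp]
    exact div_ne_zero h2 h1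
  field_simp

/-- weights -/
noncomputable def om (q : ℝ) (k : ℕ) : ℝ := if k = 0 then 1 else 1 + q⁻¹

lemma om_zero (q : ℝ) : om q 0 = 1 := by simp [om]
lemma om_succ (q : ℝ) (k : ℕ) : om q (k+1) = 1 + q⁻¹ := by simp [om]

structure Ker (q lam : ℝ) (K : ℕ → ℕ → ℝ) : Prop where
  sym : ∀ l m, K l m = K m l
  recu : ∀ l m, q * K (l+2) m - lam * K (l+1) m + K l m = 0
  bd : ∃ C, ∀ l m, |K l m| ≤ C * 3 ^ (l + m)

/-- `q - λ Y + Y²` -/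
noncomputable def D1 (q lam Y : ℝ) : ℝ := q - lam * Y + Y ^ 2

lemma D1_ne {q lam Y : ℝ} (hq : 3 ≤ q) (hlam : |lam| ≤ q + 1) (hY : 0 < Y) (hY1 : 9 * q ^ 3 * Y < 1) : D1 q lam Y ≠ 0 := by
  have h1 := abs_le.1 hlam
  have h2 : 9 * Y < 1 := by nlinarith [pow_le_pow_left₀ (by norm_num) hq 3]
  unfold D1
  nlinarith [sq_nonneg Y]

lemma seqsum {q lam Y : ℝ} (hq : 3 ≤ q) (hlam : |lam| ≤ q + 1) (hY : 0 < Y) (hY1 : 9 * q ^ 3 * Y < 1) (a : ℕ → ℝ)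
    (hrec : ∀ l, q * a (l+2) - lam * a (l+1) + a l = 0) (C : ℝ) (hC : ∀ l, |a l| ≤ C * 3 ^ l) :
    HasSum (fun x => Y ^ x * a x) (((q - lam * Y) * a 0 + q * Y * a 1) / D1 q lam Y) := by
  have hD := D1_ne hq hlam hY hY1
  have h2 : 9 * Y < 1 := by nlinarith [pow_le_pow_left₀ (by norm_num) hq 3]
  have hs : Summable (fun x => Y ^ x * a x) := by
    refine Summable.of_norm_bounded (g := fun x : ℕ => C * (3 * Y) ^ x)
      ((geo (by positivity) (by linarith)).summable.mul_left C) ?_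
    intro x
    rw [norm_mul, Real.norm_eq_abs, Real.norm_eq_abs, abs_of_nonneg (by positivity : 0 ≤ Y ^ x), mul_pow]
    have := mul_le_mul_of_nonneg_left (hC x) (by positivity : 0 ≤ Y ^ x)
    linarith
  obtain ⟨S, hS⟩ := hs
  have h1 := (split_one hS).mul_left Y⁻¹
  have h1' : HasSum (fun x => Y ^ x * a (x+1)) (Y⁻¹ * (S - Y ^ 0 * a 0)) := by
    exact hcg h1 (fun x => by field_simp; ring) rfl
  have h3 := (split_one h1').mul_left Y⁻¹
  have h3' : HasSum (fun x => Y ^ x * a (x+2)) (Y⁻¹ * ((Y⁻¹ * (S - Y ^ 0 * a 0)) - Y ^ 0 * a 1)) := by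
    exact hcg h3 (fun x => by field_simp; ring) rfl
  have h4 := ((h3'.mul_left q).sub (h1'.mul_left lam)).add hS
  have h5 : HasSum (fun x : ℕ => (0:ℝ)) (q * (Y⁻¹ * ((Y⁻¹ * (S - Y ^ 0 * a 0)) - Y ^ 0 * a 1)) - lam * (Y⁻¹ * (S - Y ^ 0 * a 0)) + S) := by
    exact hcg h4 (fun x => by linear_combination (-Y ^ x) * hrec x) rfl
  have h6 := h5.unique hasSum_zero
  refine hcg hS (fun _ => rfl) (Eq.symm ?_)
  rw [div_eq_iff hD, D1]
  field_simp at h6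
  linear_combination -h6

section
variable {q lam Y : ℝ} (hq : 3 ≤ q) (hlam : |lam| ≤ q + 1) (hY : 0 < Y) (hY1 : 9 * q ^ 3 * Y < 1) {K : ℕ → ℕ → ℝ}
  (hK : Ker q lam K) {p0 p1 : ℝ} (hp0 : HasSum (fun r => Y ^ r * K r r) p0) (hp1 : HasSum (fun r => Y ^ r * K (r+1) r) p1)

/-- the double sum -/
noncomputable def GG (q lam Y p0 p1 : ℝ) : ℝ := ((q - lam * Y) * p0 + q * Y * p1) / D1 q lam Y

lemma ker_g0 (hq : 3 ≤ q) (hlam : |lam| ≤ q + 1) (hY : 0 < Y) (hY1 : 9 * q ^ 3 * Y < 1) (hK : Ker q lam K) : HasSum (fun x => Y ^ x * K x 0) (GG q lam Y (K 0 0) (K 1 0)) := by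
  obtain ⟨C, hC⟩ := hK.bd
  exact seqsum hq hlam hY hY1 (fun x => K x 0) (fun l => hK.recu l 0) C (fun l => by simpa using hC l 0)

lemma ker_g (hq : 3 ≤ q) (hlam : |lam| ≤ q + 1) (hY : 0 < Y) (hY1 : 9 * q ^ 3 * Y < 1) (hK : Ker q lam K) (hp0 : HasSum (fun r => Y ^ r * K r r) p0) (hp1 : HasSum (fun r => Y ^ r * K (r+1) r) p1) : HasSum (fun x : ℕ × ℕ => Y ^ (x.1 + x.2) * K (x.1 + x.2) x.1) (GG q lam Y p0 p1) := by
  obtain ⟨C, hC⟩ := hK.bd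
  have h2 : 9 * Y < 1 := by nlinarith [pow_le_pow_left₀ (by norm_num) hq 3]
  refine fib (g := fun r => Y ^ r * (((q - lam * Y) * K r r + q * Y * K (r+1) r) / D1 q lam Y)) ?_ ?_ ?_
  · refine Summable.of_norm_bounded (g := fun x : ℕ × ℕ => C * ((9 * Y) ^ x.1 * (3 * Y) ^ x.2))
      ((hmul (geo (by positivity) (by linarith)) (geo (by positivity) (by linarith))).summable.mul_left C) ?_
    rintro ⟨r, x⟩
    rw [norm_mul, Real.norm_eq_abs, Real.norm_eq_abs, abs_of_nonneg (by positivity)]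
    have := mul_le_mul_of_nonneg_left (hC (r+x) r) (by positivity : 0 ≤ Y ^ (r+x))
    refine this.trans (le_of_eq ?_)
    dsimp only
    rw [mul_pow, mul_pow, show (9:ℝ) = 3 ^ 2 by norm_num, ← pow_mul]; ring
  · intro r
    have := (seqsum hq hlam hY hY1 (fun x => K (r + x) r) (fun l => hK.recu (r + l) r) (C * 3 ^ (r + r))
      (fun l => (hC (r+l) r).trans (le_of_eq (by ring)))).mul_left (Y ^ r)
    exact hcg this (fun x => by dsimp only; ring) rfl
  · have := (((hp0.mul_left (q - lam * Y)).add (hp1.mul_left (q * Y))).div_const (D1 q lam Y))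
    exact hcg this (fun x => by ring) rfl

end
end partNine

section partTen

/-- the B/C summand -/
noncomputable def EE (q Y : ℝ) (K : ℕ → ℕ → ℝ) (x : ℕ × ℕ × ℕ) : ℝ :=
  if (x.1 + x.2.1 + x.2.2) % 2 = 0 then
    om q x.2.2 * (Y ^ ((x.1 + x.2.1 + x.2.2) / 2) *
      K ((x.1 + x.2.1 + x.2.2) / 2 - min x.1 (x.2.1 + x.2.2)) ((x.1 + x.2.1 + x.2.2) / 2 - min x.2.1 (x.1 + x.2.2)))
  else 0

/-- the A summand -/
noncomputable def WA (q Y : ℝ) (K : ℕ → ℕ → ℝ) (x : ℕ × ℕ × ℕ × ℕ) : ℝ :=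
  if 2 * x.2.2.2 < x.1 + x.2.1 + x.2.2.1 then
    om q x.2.2.1 * (q⁻¹ ^ (x.1 + x.2.1 + x.2.2.1 - 2 * x.2.2.2) * (Y ^ x.2.2.2 *
      K (x.2.2.2 - min (min x.1 x.2.2.2) (x.2.1 + x.2.2.1)) (x.2.2.2 - min (min x.2.1 x.2.2.2) (x.1 + x.2.2.1))))
  else 0

variable {q lam Y : ℝ} (hq : 3 ≤ q) (hlam : |lam| ≤ q + 1) (hY : 0 < Y) (hY1 : 9 * q ^ 3 * Y < 1) {K : ℕ → ℕ → ℝ}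
  (hK : Ker q lam K) {p0 p1 : ℝ} (hp0 : HasSum (fun r => Y ^ r * K r r) p0) (hp1 : HasSum (fun r => Y ^ r * K (r+1) r) p1)

lemma fst_zero {f : ℕ × ℕ → ℝ} {B : ℝ} (h0 : HasSum (fun r => f (r, 0)) B) :
    HasSum (fun a : ℕ × ℕ => if a.2 = 0 then f a else 0) B := by
  refine reg f _ (fun r : ℕ => (r, 0)) _ ?_ ?_ ?_ (fun _ => rfl) h0
  · intro a b hab; simpa using hab
  · rintro ⟨a, b⟩ hb; exact ⟨a, by simpa using hb.symm⟩
  · intro x; rfl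

set_option maxHeartbeats 1000000 in
lemma bc_sum (hq : 3 ≤ q) (hlam : |lam| ≤ q + 1) (hY : 0 < Y) (hY1 : 9 * q ^ 3 * Y < 1) (hK : Ker q lam K) (hp0 : HasSum (fun r => Y ^ r * K r r) p0) (hp1 : HasSum (fun r => Y ^ r * K (r+1) r) p1) : HasSum (EE q Y K) ((1 - Y)⁻¹ * ((1 + q⁻¹) * (4 * GG q lam Y p0 p1 - 2 * GG q lam Y (K 0 0) (K 1 0) - p0)
    - 2 * p0 * q⁻¹ + K 0 0 * q⁻¹)) := by
  have hYl : Y < 1 := by nlinarith [pow_le_pow_left₀ (by norm_num) hq 3]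
  have hu := geo hY.le hYl
  have g := ker_g hq hlam hY hY1 hK hp0 hp1
  have g0 := ker_g0 hq hlam hY hY1 hK
  set G := GG q lam Y p0 p1
  set G0 := GG q lam Y (K 0 0) (K 1 0)
  -- b1
  have hb1 : HasSum (fun x : ℕ × ℕ => om q (2 * x.1 + x.2) * (Y ^ (x.1 + x.2) * K (x.1 + x.2) x.1))
      ((1 + q⁻¹) * G - q⁻¹ * K 0 0) := by
    refine hcg ((g.mul_left (1 + q⁻¹)).sub ((hasSum_ite_eq ((0:ℕ), (0:ℕ)) (K 0 0)).mul_left q⁻¹)) ?_ rfl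
    rintro ⟨r, x⟩
    by_cases h : r = 0 ∧ x = 0
    · obtain ⟨rfl, rfl⟩ := h
      simp [om]; ring
    · have : ¬ ((r, x) = ((0:ℕ), (0:ℕ))) := by simpa using h
      rw [if_neg this, om, if_neg (by dsimp only; omega)]; ring
  have gr : HasSum (fun x : ℕ × ℕ => Y ^ (x.1 + 1 + x.2) * K (x.1 + 1 + x.2) (x.1 + 1)) (G - G0) :=
    split_r g (by simpa using g0)
  have p0s : HasSum (fun r : ℕ => Y ^ (r + 1) * K (r + 1) (r + 1)) (p0 - K 0 0) := by
    have := split_one hp0; simpa using this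
  have hb2 : HasSum (fun x : ℕ × ℕ => om q x.2 * (Y ^ (x.1 + 1 + x.2) * K (x.1 + 1 + x.2) (x.1 + 1)))
      ((1 + q⁻¹) * (G - G0) - q⁻¹ * (p0 - K 0 0)) := by
    refine hcg ((gr.mul_left (1 + q⁻¹)).sub ((fst_zero (f := fun x : ℕ × ℕ => Y ^ (x.1 + 1 + x.2) * K (x.1 + 1 + x.2) (x.1 + 1)) p0s).mul_left q⁻¹)) ?_ rfl
    rintro ⟨r, x⟩
    by_cases h : x = 0
    · subst h
      simp only [om, if_true]; ring
    · simp only [om, if_neg h]; ring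
  have gx : HasSum (fun x : ℕ × ℕ => Y ^ (x.1 + (x.2 + 1)) * K (x.1 + (x.2 + 1)) x.1) (G - p0) :=
    split_x g (by simpa using hp0)
  have r1 := reg (EE q Y K) (fun x => (x.1 + x.2.1 + x.2.2) % 2 = 0 ∧ x.1 ≤ x.2.1 ∧ x.2.1 ≤ x.1 + x.2.2)
    (fun y : ℕ × ℕ × ℕ => (y.1, y.1 + y.2.2, 2 * y.2.1 + y.2.2)) (fun y => Y ^ y.1 * (om q (2 * y.2.1 + y.2.2) * (Y ^ (y.2.1 + y.2.2) * K (y.2.1 + y.2.2) y.2.1)))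
    (by rintro ⟨u, r, x⟩ ⟨u', r', x'⟩ h; simp only [Prod.mk.injEq] at h ⊢; omega)
    (by rintro ⟨i, j, k⟩ ⟨h1, h2, h3⟩
        dsimp only at h1 h2 h3
        obtain ⟨x, rfl⟩ := Nat.exists_eq_add_of_le h2
        obtain ⟨r, rfl⟩ : ∃ r, k = 2 * r + x := ⟨(k - x) / 2, by omega⟩
        exact ⟨(i, r, x), rfl⟩)
    (by rintro ⟨u, r, x⟩; dsimp only; omega)
    (by rintro ⟨u, r, x⟩
        have h2 : (u + (u + x) + (2 * r + x)) / 2 = u + r + x := by omega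
        have h3 : u + r + x - min u (u + x + (2 * r + x)) = r + x := by omega
        have h4 : u + r + x - min (u + x) (u + (2 * r + x)) = r := by omega
        simp only [EE, h2, h3, h4]
        rw [if_pos (by omega)]; ring)
    (hmul hu hb1)
  have r2 := reg (EE q Y K) (fun x => (x.1 + x.2.1 + x.2.2) % 2 = 0 ∧ x.1 + x.2.2 < x.2.1)
    (fun y : ℕ × ℕ × ℕ => (y.1, y.1 + 2 * (y.2.1 + 1) + y.2.2, y.2.2)) (fun y => Y ^ y.1 * (om q (y.2.2) * (Y ^ (y.2.1 + 1 + y.2.2) * K (y.2.1 + 1 + y.2.2) (y.2.1 + 1))))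
    (by rintro ⟨u, r, x⟩ ⟨u', r', x'⟩ h; simp only [Prod.mk.injEq] at h ⊢; omega)
    (by rintro ⟨i, j, k⟩ ⟨h1, h2⟩
        dsimp only at h1 h2
        obtain ⟨r, rfl⟩ : ∃ r, j = i + 2 * (r + 1) + k := ⟨(j - i - k) / 2 - 1, by omega⟩
        exact ⟨(i, r, k), rfl⟩)
    (by rintro ⟨u, r, x⟩; dsimp only; omega)
    (by rintro ⟨u, r, x⟩
        have h2 : (u + (u + 2 * (r + 1) + x) + x) / 2 = u + (r + 1) + x := by omega
        have h3 : u + (r + 1) + x - min u (u + 2 * (r + 1) + x + x) = r + 1 + x := by omega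
        have h4 : u + (r + 1) + x - min (u + 2 * (r + 1) + x) (u + x) = r + 1 := by omega
        simp only [EE, h2, h3, h4]
        rw [if_pos (by omega)]; ring)
    (hmul hu hb2)
  have r3 := reg (EE q Y K) (fun x => (x.1 + x.2.1 + x.2.2) % 2 = 0 ∧ x.2.1 < x.1 ∧ x.1 ≤ x.2.1 + x.2.2)
    (fun y : ℕ × ℕ × ℕ => (y.1 + y.2.2 + 1, y.1, 2 * y.2.1 + y.2.2 + 1)) (fun y => Y ^ y.1 * ((1 + q⁻¹) * (Y ^ (y.2.1 + (y.2.2 + 1)) * K (y.2.1 + (y.2.2 + 1)) y.2.1)))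
    (by rintro ⟨u, r, x⟩ ⟨u', r', x'⟩ h; simp only [Prod.mk.injEq] at h ⊢; omega)
    (by rintro ⟨i, j, k⟩ ⟨h1, h2, h3⟩
        dsimp only at h1 h2 h3
        obtain ⟨x, rfl⟩ : ∃ x, i = j + x + 1 := ⟨i - j - 1, by omega⟩
        obtain ⟨r, rfl⟩ : ∃ r, k = 2 * r + x + 1 := ⟨(k - x - 1) / 2, by omega⟩
        exact ⟨(j, r, x), rfl⟩)
    (by rintro ⟨u, r, x⟩; dsimp only; omega)
    (by rintro ⟨u, r, x⟩
        have h2 : (u + x + 1 + u + (2 * r + x + 1)) / 2 = u + r + x + 1 := by omega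
        have h3 : u + r + x + 1 - min (u + x + 1) (u + (2 * r + x + 1)) = r := by omega
        have h4 : u + r + x + 1 - min u (u + x + 1 + (2 * r + x + 1)) = r + (x + 1) := by omega
        simp only [EE, h2, h3, h4, om_succ]
        rw [if_pos (by omega), hK.sym]; ring)
    (hmul hu (gx.mul_left (1 + q⁻¹)))
  have r4 := reg (EE q Y K) (fun x => (x.1 + x.2.1 + x.2.2) % 2 = 0 ∧ x.2.1 + x.2.2 < x.1)
    (fun y : ℕ × ℕ × ℕ => (y.1 + 2 * (y.2.1 + 1) + y.2.2, y.1, y.2.2)) (fun y => Y ^ y.1 * (om q (y.2.2) * (Y ^ (y.2.1 + 1 + y.2.2) * K (y.2.1 + 1 + y.2.2) (y.2.1 + 1))))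
    (by rintro ⟨u, r, x⟩ ⟨u', r', x'⟩ h; simp only [Prod.mk.injEq] at h ⊢; omega)
    (by rintro ⟨i, j, k⟩ ⟨h1, h2⟩
        dsimp only at h1 h2
        obtain ⟨r, rfl⟩ : ∃ r, i = j + 2 * (r + 1) + k := ⟨(i - j - k) / 2 - 1, by omega⟩
        exact ⟨(j, r, k), rfl⟩)
    (by rintro ⟨u, r, x⟩; dsimp only; omega)
    (by rintro ⟨u, r, x⟩
        have h2 : (u + 2 * (r + 1) + x + u + x) / 2 = u + (r + 1) + x := by omega
        have h3 : u + (r + 1) + x - min u (u + 2 * (r + 1) + x + x) = r + 1 + x := by omega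
        have h4 : u + (r + 1) + x - min (u + 2 * (r + 1) + x) (u + x) = r + 1 := by omega
        simp only [EE, h2, h3, h4]
        rw [if_pos (by omega), hK.sym]; ring)
    (hmul hu hb2)
  refine hcg (((r1.add r2).add r3).add r4) ?_ (by ring)
  rintro ⟨i, j, k⟩
  dsimp only
  by_cases h : (i + j + k) % 2 = 0
  · by_cases ha : i ≤ j
    · by_cases hb : j ≤ i + k
      · rw [if_pos (by omega), if_neg (by omega), if_neg (by omega), if_neg (by omega)]; ring
      · rw [if_neg (by omega), if_pos (by omega), if_neg (by omega), if_neg (by omega)]; ring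
    · by_cases hb : i ≤ j + k
      · rw [if_neg (by omega), if_neg (by omega), if_pos (by omega), if_neg (by omega)]; ring
      · rw [if_neg (by omega), if_neg (by omega), if_neg (by omega), if_pos (by omega)]; ring
  · rw [if_neg (by omega), if_neg (by omega), if_neg (by omega), if_neg (by omega), EE, if_neg h]; ring

end partTen

section partEleven

variable {q lam Y : ℝ} (hq : 3 ≤ q) (hlam : |lam| ≤ q + 1) (hY : 0 < Y) (hY1 : 9 * q ^ 3 * Y < 1) {K : ℕ → ℕ → ℝ}
  (hK : Ker q lam K) {p0 p1 : ℝ} (hp0 : HasSum (fun r => Y ^ r * K r r) p0) (hp1 : HasSum (fun r => Y ^ r * K (r+1) r) p1)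

lemma Y_lt (hq : 3 ≤ q) (hY : 0 < Y) (hY1 : 9 * q ^ 3 * Y < 1) : Y < 1 := by
  nlinarith [pow_le_pow_left₀ (by norm_num) hq 3]

lemma om_sum (hq : 3 ≤ q) : HasSum (fun k : ℕ => om q k * q⁻¹ ^ k) (1 + (1 + q⁻¹) * (q - 1)⁻¹) := by
  have hg := geo (inv_nonneg.2 (by linarith : 0 ≤ q)) (inv_lt_one_of_one_lt₀ (by linarith : 1 < q))
  refine hcg ((hg.mul_left (1 + q⁻¹)).sub ((hasSum_ite_eq (0:ℕ) (1:ℝ)).mul_left q⁻¹)) ?_ ?_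
  · intro k
    rcases k with _ | k
    · simp [om]
    · simp [om]
  · have h1 : q ≠ 0 := by positivity
    have h2 : q - 1 ≠ 0 := by linarith
    have h3 : 1 - q⁻¹ ≠ 0 := by
      rw [show 1 - q⁻¹ = (q - 1) / q by field_simp]
      exact div_ne_zero h2 h1
    have h4 : (1 - q⁻¹)⁻¹ = q * (q - 1)⁻¹ := by field_simp
    rw [h4]; field_simp; ring

lemma A0_sum (hq : 3 ≤ q) (hY : 0 < Y) (hY1 : 9 * q ^ 3 * Y < 1) : HasSum (fun x => if x.2.2.2 ≤ x.1 ∧ x.2.2.2 ≤ x.2.1 then WA q Y K x else 0)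
    ((1 - Y)⁻¹ * (((1 - q⁻¹)⁻¹ * ((1 - q⁻¹)⁻¹ * (1 + (1 + q⁻¹) * (q - 1)⁻¹)) - 1) * K 0 0)) := by
  have hu := geo hY.le (Y_lt hq hY hY1)
  have hg := geo (inv_nonneg.2 (by linarith : 0 ≤ q)) (inv_lt_one_of_one_lt₀ (by linarith : 1 < q))
  have h1 := (((hmul hg (hmul hg (om_sum hq))).sub (hasSum_ite_eq ((0:ℕ), (0:ℕ), (0:ℕ)) (1:ℝ))).mul_right (K 0 0))
  refine reg (WA q Y K) _ (fun y : ℕ × ℕ × ℕ × ℕ => (y.1 + y.2.1, y.1 + y.2.2.1, y.2.2.2, y.1)) _ ?_ ?_ ?_ ?_ (hmul hu h1)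
  · rintro ⟨u, a, b, k⟩ ⟨u', a', b', k'⟩ h; simp only [Prod.mk.injEq] at h ⊢; omega
  · rintro ⟨i, j, k, e⟩ ⟨h1, h2⟩
    dsimp only at h1 h2
    obtain ⟨a, rfl⟩ := Nat.exists_eq_add_of_le h1
    obtain ⟨b, rfl⟩ := Nat.exists_eq_add_of_le h2
    exact ⟨(e, a, b, k), rfl⟩
  · rintro ⟨u, a, b, k⟩; dsimp only; omega
  · rintro ⟨u, a, b, k⟩
    have h3 : u - min (min (u + a) u) (u + b + k) = 0 := by omega
    have h4 : u - min (min (u + b) u) (u + a + k) = 0 := by omega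
    have h5 : u + a + (u + b) + k - 2 * u = a + b + k := by omega
    simp only [WA, h3, h4, h5]
    by_cases h : (a, b, k) = (0, 0, 0)
    · simp only [Prod.mk.injEq] at h
      obtain ⟨rfl, rfl, rfl⟩ := h
      simp [om]; intro h; omega
    · rw [if_neg h, if_pos]
      · ring
      · simp only [Prod.mk.injEq] at h; omega

set_option maxHeartbeats 2000000 in
lemma A1_sum (hq : 3 ≤ q) (hlam : |lam| ≤ q + 1) (hY : 0 < Y) (hY1 : 9 * q ^ 3 * Y < 1) (hK : Ker q lam K) (hp0 : HasSum (fun r => Y ^ r * K r r) p0) (hp1 : HasSum (fun r => Y ^ r * K (r+1) r) p1) : HasSum (fun x => if x.1 < x.2.2.2 ∧ x.2.2.2 ≤ x.2.1 then WA q Y K x else 0)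
    ((1 - Y)⁻¹ * ((q - 1)⁻¹ * ((p0 - K 0 0) + (1 + q⁻¹) * (GG q lam Y p0 p1 - p0)
     + (1 - q⁻¹)⁻¹ * ((1 + q⁻¹) * (GG q lam Y (K 0 0) (K 1 0) - K 0 0))))) := by
  have hu := geo hY.le (Y_lt hq hY hY1)
  have hg := geo (inv_nonneg.2 (by linarith : 0 ≤ q)) (inv_lt_one_of_one_lt₀ (by linarith : 1 < q))
  have hg1 := geoq (by linarith : 1 < q)
  have g := ker_g hq hlam hY hY1 hK hp0 hp1
  have g0 := ker_g0 hq hlam hY hY1 hK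
  set G := GG q lam Y p0 p1
  set G0 := GG q lam Y (K 0 0) (K 1 0)
  have p0s : HasSum (fun r : ℕ => Y ^ (r + 1) * K (r + 1) (r + 1)) (p0 - K 0 0) := by
    have := split_one hp0; simpa using this
  have g0s : HasSum (fun r : ℕ => Y ^ (r + 1) * K (r + 1) 0) (G0 - K 0 0) := by
    have := split_one g0; simpa using this
  have gx : HasSum (fun x : ℕ × ℕ => Y ^ (x.1 + (x.2 + 1)) * K (x.1 + (x.2 + 1)) x.1) (G - p0) :=
    split_x g (by simpa using hp0)
  have r1 := reg (WA q Y K) (fun x => (x.1 < x.2.2.2 ∧ x.2.2.2 ≤ x.2.1) ∧ x.2.2.1 = 0 ∧ 2 * x.2.2.2 < x.1 + x.2.1 + x.2.2.1)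
    (fun y : ℕ × ℕ × ℕ => (y.1, y.1 + y.2.2 + 1 + (y.2.2 + 2 + y.2.1), 0, y.1 + y.2.2 + 1))
    (fun y => Y ^ y.1 * (q⁻¹ ^ (y.2.1 + 1) * (Y ^ (y.2.2 + 1) * K (y.2.2 + 1) (y.2.2 + 1))))
    (by rintro ⟨u, v, r⟩ ⟨u', v', r'⟩ h; simp only [Prod.mk.injEq] at h ⊢; omega)
    (by rintro ⟨i, j, k, e⟩ ⟨⟨h1, h2⟩, h3, h4⟩
        dsimp only at h1 h2 h3 h4
        subst h3
        obtain ⟨r, rfl⟩ : ∃ r, e = i + r + 1 := ⟨e - i - 1, by omega⟩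
        obtain ⟨v, rfl⟩ : ∃ v, j = i + r + 1 + (r + 2 + v) := ⟨j - (i + r + 1) - (r + 2), by omega⟩
        exact ⟨(i, v, r), rfl⟩)
    (by rintro ⟨u, v, r⟩; dsimp only; omega)
    (by rintro ⟨u, v, r⟩
        have h3 : u + r + 1 - min (min u (u + r + 1)) (u + r + 1 + (r + 2 + v) + 0) = r + 1 := by omega
        have h4 : u + r + 1 - min (min (u + r + 1 + (r + 2 + v)) (u + r + 1)) (u + 0) = r + 1 := by omega
        have h5 : u + (u + r + 1 + (r + 2 + v)) + 0 - 2 * (u + r + 1) = v + 1 := by omega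
        simp only [WA, h3, h4, h5, om_zero]
        rw [if_pos (by omega)]; ring)
    (hmul hu (hmul hg1 p0s))
  have r2 := reg (WA q Y K) (fun x => (x.1 < x.2.2.2 ∧ x.2.2.2 ≤ x.2.1) ∧ 0 < x.2.2.1 ∧ x.1 + x.2.2.1 ≤ x.2.2.2 ∧ 2 * x.2.2.2 < x.1 + x.2.1 + x.2.2.1)
    (fun y : ℕ × ℕ × ℕ × ℕ => (y.1, y.1 + y.2.2.1 + (y.2.2.2 + 1) + (y.2.2.1 + 1 + y.2.1), y.2.2.2 + 1, y.1 + y.2.2.1 + (y.2.2.2 + 1)))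
    (fun y => Y ^ y.1 * (q⁻¹ ^ (y.2.1 + 1) * ((1 + q⁻¹) * (Y ^ (y.2.2.1 + (y.2.2.2 + 1)) * K (y.2.2.1 + (y.2.2.2 + 1)) (y.2.2.1)))))
    (by rintro ⟨u, v, r, x⟩ ⟨u', v', r', x'⟩ h; simp only [Prod.mk.injEq] at h ⊢; omega)
    (by rintro ⟨i, j, k, e⟩ ⟨⟨h1, h2⟩, h3, h4, h5⟩
        dsimp only at h1 h2 h3 h4 h5
        obtain ⟨x, rfl⟩ : ∃ x, k = x + 1 := ⟨k - 1, by omega⟩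
        obtain ⟨r, rfl⟩ : ∃ r, e = i + r + (x + 1) := ⟨e - i - (x + 1), by omega⟩
        obtain ⟨v, rfl⟩ : ∃ v, j = i + r + (x + 1) + (r + 1 + v) := ⟨j - (i + r + (x + 1)) - (r + 1), by omega⟩
        exact ⟨(i, v, r, x), rfl⟩)
    (by rintro ⟨u, v, r, x⟩; dsimp only; omega)
    (by rintro ⟨u, v, r, x⟩
        have h3 : u + r + (x + 1) - min (min u (u + r + (x + 1))) (u + r + (x + 1) + (r + 1 + v) + (x + 1)) = r + (x + 1) := by omega
        have h4 : u + r + (x + 1) - min (min (u + r + (x + 1) + (r + 1 + v)) (u + r + (x + 1))) (u + (x + 1)) = r := by omega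
        have h5 : u + (u + r + (x + 1) + (r + 1 + v)) + (x + 1) - 2 * (u + r + (x + 1)) = v + 1 := by omega
        simp only [WA, h3, h4, h5, om_succ]
        rw [if_pos (by omega)]; ring)
    (hmul hu (hmul hg1 (gx.mul_left (1 + q⁻¹))))
  have r3 := reg (WA q Y K) (fun x => (x.1 < x.2.2.2 ∧ x.2.2.2 ≤ x.2.1) ∧ x.2.2.2 < x.1 + x.2.2.1 ∧ 2 * x.2.2.2 < x.1 + x.2.1 + x.2.2.1)
    (fun y : ℕ × ℕ × ℕ × ℕ => (y.1, y.1 + y.2.2.2 + 1 + y.2.2.1, y.2.2.2 + 1 + y.2.1 + 1, y.1 + y.2.2.2 + 1))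
    (fun y => Y ^ y.1 * (q⁻¹ ^ (y.2.1 + 1) * (q⁻¹ ^ (y.2.2.1) * ((1 + q⁻¹) * (Y ^ (y.2.2.2 + 1) * K (y.2.2.2 + 1) 0)))))
    (by rintro ⟨u, v, b, l⟩ ⟨u', v', b', l'⟩ h; simp only [Prod.mk.injEq] at h ⊢; omega)
    (by rintro ⟨i, j, k, e⟩ ⟨⟨h1, h2⟩, h3, h4⟩
        dsimp only at h1 h2 h3 h4
        obtain ⟨l, rfl⟩ : ∃ l, e = i + l + 1 := ⟨e - i - 1, by omega⟩
        obtain ⟨b, rfl⟩ := Nat.exists_eq_add_of_le h2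
        obtain ⟨v, rfl⟩ : ∃ v, k = l + 1 + v + 1 := ⟨k - (l + 2), by omega⟩
        exact ⟨(i, v, b, l), rfl⟩)
    (by rintro ⟨u, v, b, l⟩; dsimp only; omega)
    (by rintro ⟨u, v, b, l⟩
        have h3 : u + l + 1 - min (min u (u + l + 1)) (u + l + 1 + b + (l + 1 + v + 1)) = l + 1 := by omega
        have h4 : u + l + 1 - min (min (u + l + 1 + b) (u + l + 1)) (u + (l + 1 + v + 1)) = 0 := by omega
        have h5 : u + (u + l + 1 + b) + (l + 1 + v + 1) - 2 * (u + l + 1) = v + 1 + b := by omega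
        simp only [WA, h3, h4, h5, om_succ]
        rw [if_pos (by omega)]; ring)
    (hmul hu (hmul hg1 (hmul hg (g0s.mul_left (1 + q⁻¹)))))
  refine hcg ((r1.add r2).add r3) ?_ (by ring)
  rintro ⟨i, j, k, e⟩
  dsimp only
  by_cases h : i < e ∧ e ≤ j
  · rw [if_pos h]
    by_cases hN : 2 * e < i + j + k
    · by_cases h3 : e < i + k
      · rw [if_neg (by omega), if_neg (by omega), if_pos (by omega)]; ring
      · by_cases h4 : k = 0
        · rw [if_pos (by omega), if_neg (by omega), if_neg (by omega)]; ring
        · rw [if_neg (by omega), if_pos (by omega), if_neg (by omega)]; ring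
    · rw [if_neg (by omega), if_neg (by omega), if_neg (by omega), WA, if_neg hN]; ring
  · rw [if_neg h, if_neg (by omega), if_neg (by omega), if_neg (by omega)]; ring

lemma WA_swap (hK : Ker q lam K) (i j k e : ℕ) : WA q Y K (i, j, k, e) = WA q Y K (j, i, k, e) := by
  simp only [WA, hK.sym (e - min (min i e) (j + k)), add_comm i j]

def swp : (ℕ × ℕ × ℕ × ℕ) ≃ (ℕ × ℕ × ℕ × ℕ) where
  toFun x := (x.2.1, x.1, x.2.2)
  invFun x := (x.2.1, x.1, x.2.2)
  left_inv _ := rfl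
  right_inv _ := rfl

set_option maxHeartbeats 2000000 in
lemma A2_sum (hq : 3 ≤ q) (hlam : |lam| ≤ q + 1) (hY : 0 < Y) (hY1 : 9 * q ^ 3 * Y < 1) (hK : Ker q lam K) (hp0 : HasSum (fun r => Y ^ r * K r r) p0) (hp1 : HasSum (fun r => Y ^ r * K (r+1) r) p1) : HasSum (fun x => if x.2.1 < x.2.2.2 ∧ x.2.2.2 ≤ x.1 then WA q Y K x else 0)
    ((1 - Y)⁻¹ * ((q - 1)⁻¹ * ((p0 - K 0 0) + (1 + q⁻¹) * (GG q lam Y p0 p1 - p0)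
     + (1 - q⁻¹)⁻¹ * ((1 + q⁻¹) * (GG q lam Y (K 0 0) (K 1 0) - K 0 0))))) := by
  refine hcg (swp.hasSum_iff.2 (A1_sum hq hlam hY hY1 hK hp0 hp1)) ?_ rfl
  rintro ⟨i, j, k, e⟩
  simp only [Function.comp, swp, Equiv.coe_fn_mk]
  rw [WA_swap hK]
  rfl

set_option maxHeartbeats 2000000 in
lemma A3_sum (hq : 3 ≤ q) (hlam : |lam| ≤ q + 1) (hY : 0 < Y) (hY1 : 9 * q ^ 3 * Y < 1) (hK : Ker q lam K) (hp0 : HasSum (fun r => Y ^ r * K r r) p0) (hp1 : HasSum (fun r => Y ^ r * K (r+1) r) p1) : HasSum (fun x => if x.1 < x.2.2.2 ∧ x.2.1 < x.2.2.2 then WA q Y K x else 0)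
    ((1 - Y)⁻¹ * ((q - 1)⁻¹ * ((1 + q⁻¹) * (2 * (GG q lam Y p0 p1 - GG q lam Y (K 0 0) (K 1 0)) - (p0 - K 0 0))))) := by
  have hu := geo hY.le (Y_lt hq hY hY1)
  have hg1 := geoq (by linarith : 1 < q)
  have g := ker_g hq hlam hY hY1 hK hp0 hp1
  have g0 := ker_g0 hq hlam hY hY1 hK
  set G := GG q lam Y p0 p1
  set G0 := GG q lam Y (K 0 0) (K 1 0)
  have p0s : HasSum (fun r : ℕ => Y ^ (r + 1) * K (r + 1) (r + 1)) (p0 - K 0 0) := by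
    have := split_one hp0; simpa using this
  have gr : HasSum (fun x : ℕ × ℕ => Y ^ (x.1 + 1 + x.2) * K (x.1 + 1 + x.2) (x.1 + 1)) (G - G0) :=
    split_r g (by simpa using g0)
  have grx : HasSum (fun x : ℕ × ℕ => Y ^ (x.1 + 1 + (x.2 + 1)) * K (x.1 + 1 + (x.2 + 1)) (x.1 + 1)) (G - G0 - (p0 - K 0 0)) :=
    split_x gr (by simpa using p0s)
  have r1 := reg (WA q Y K) (fun x => (x.1 < x.2.2.2 ∧ x.2.1 < x.2.2.2) ∧ x.1 ≤ x.2.1 ∧ 2 * x.2.2.2 < x.1 + x.2.1 + x.2.2.1)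
    (fun y : ℕ × ℕ × ℕ × ℕ => (y.1, y.1 + y.2.2.2, 2 * (y.2.2.1 + 1) + y.2.2.2 + y.2.1 + 1, y.1 + (y.2.2.1 + 1 + y.2.2.2)))
    (fun y => Y ^ y.1 * (q⁻¹ ^ (y.2.1 + 1) * ((1 + q⁻¹) * (Y ^ (y.2.2.1 + 1 + y.2.2.2) * K (y.2.2.1 + 1 + y.2.2.2) (y.2.2.1 + 1)))))
    (by rintro ⟨u, v, r, x⟩ ⟨u', v', r', x'⟩ h; simp only [Prod.mk.injEq] at h ⊢; omega)
    (by rintro ⟨i, j, k, e⟩ ⟨⟨h1, h2⟩, h3, h4⟩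
        dsimp only at h1 h2 h3 h4
        obtain ⟨x, rfl⟩ := Nat.exists_eq_add_of_le h3
        obtain ⟨r, rfl⟩ : ∃ r, e = i + (r + 1 + x) := ⟨e - i - x - 1, by omega⟩
        obtain ⟨v, rfl⟩ : ∃ v, k = 2 * (r + 1) + x + v + 1 := ⟨k - (2 * (r + 1) + x + 1), by omega⟩
        exact ⟨(i, v, r, x), rfl⟩)
    (by rintro ⟨u, v, r, x⟩; dsimp only; omega)
    (by rintro ⟨u, v, r, x⟩
        have h3 : u + (r + 1 + x) - min (min u (u + (r + 1 + x))) (u + x + (2 * (r + 1) + x + v + 1)) = r + 1 + x := by omega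
        have h4 : u + (r + 1 + x) - min (min (u + x) (u + (r + 1 + x))) (u + (2 * (r + 1) + x + v + 1)) = r + 1 := by omega
        have h5 : u + (u + x) + (2 * (r + 1) + x + v + 1) - 2 * (u + (r + 1 + x)) = v + 1 := by omega
        simp only [WA, h3, h4, h5, om_succ]
        rw [if_pos (by omega)]; ring)
    (hmul hu (hmul hg1 (gr.mul_left (1 + q⁻¹))))
  have r2 := reg (WA q Y K) (fun x => (x.1 < x.2.2.2 ∧ x.2.1 < x.2.2.2) ∧ x.2.1 < x.1 ∧ 2 * x.2.2.2 < x.1 + x.2.1 + x.2.2.1)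
    (fun y : ℕ × ℕ × ℕ × ℕ => (y.1 + (y.2.2.2 + 1), y.1, 2 * (y.2.2.1 + 1) + (y.2.2.2 + 1) + y.2.1 + 1, y.1 + (y.2.2.1 + 1 + (y.2.2.2 + 1))))
    (fun y => Y ^ y.1 * (q⁻¹ ^ (y.2.1 + 1) * ((1 + q⁻¹) * (Y ^ (y.2.2.1 + 1 + (y.2.2.2 + 1)) * K (y.2.2.1 + 1 + (y.2.2.2 + 1)) (y.2.2.1 + 1)))))
    (by rintro ⟨u, v, r, x⟩ ⟨u', v', r', x'⟩ h; simp only [Prod.mk.injEq] at h ⊢; omega)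
    (by rintro ⟨i, j, k, e⟩ ⟨⟨h1, h2⟩, h3, h4⟩
        dsimp only at h1 h2 h3 h4
        obtain ⟨x, rfl⟩ : ∃ x, i = j + (x + 1) := ⟨i - j - 1, by omega⟩
        obtain ⟨r, rfl⟩ : ∃ r, e = j + (r + 1 + (x + 1)) := ⟨e - j - x - 2, by omega⟩
        obtain ⟨v, rfl⟩ : ∃ v, k = 2 * (r + 1) + (x + 1) + v + 1 := ⟨k - (2 * (r + 1) + x + 2), by omega⟩
        exact ⟨(j, v, r, x), rfl⟩)
    (by rintro ⟨u, v, r, x⟩; dsimp only; omega)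
    (by rintro ⟨u, v, r, x⟩
        rw [WA_swap hK]
        have h3 : u + (r + 1 + (x + 1)) - min (min u (u + (r + 1 + (x + 1)))) (u + (x + 1) + (2 * (r + 1) + (x + 1) + v + 1)) = r + 1 + (x + 1) := by omega
        have h4 : u + (r + 1 + (x + 1)) - min (min (u + (x + 1)) (u + (r + 1 + (x + 1)))) (u + (2 * (r + 1) + (x + 1) + v + 1)) = r + 1 := by omega
        have h5 : u + (u + (x + 1)) + (2 * (r + 1) + (x + 1) + v + 1) - 2 * (u + (r + 1 + (x + 1))) = v + 1 := by omega
        simp only [WA, h3, h4, h5, om_succ]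
        rw [if_pos (by omega)]; ring)
    (hmul hu (hmul hg1 (grx.mul_left (1 + q⁻¹))))
  refine hcg (r1.add r2) ?_ (by ring)
  rintro ⟨i, j, k, e⟩
  dsimp only
  by_cases h : i < e ∧ j < e
  · rw [if_pos h]
    by_cases hN : 2 * e < i + j + k
    · by_cases h3 : i ≤ j
      · rw [if_pos (by omega), if_neg (by omega)]; ring
      · rw [if_neg (by omega), if_pos (by omega)]; ring
    · rw [if_neg (by omega), if_neg (by omega), WA, if_neg hN]; ring
  · rw [if_neg h, if_neg (by omega), if_neg (by omega)]; ring

set_option maxHeartbeats 2000000 in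
lemma A_sum (hq : 3 ≤ q) (hlam : |lam| ≤ q + 1) (hY : 0 < Y) (hY1 : 9 * q ^ 3 * Y < 1) (hK : Ker q lam K) (hp0 : HasSum (fun r => Y ^ r * K r r) p0) (hp1 : HasSum (fun r => Y ^ r * K (r+1) r) p1) : HasSum (WA q Y K) ((1 - Y)⁻¹ * (((1 - q⁻¹)⁻¹ * ((1 - q⁻¹)⁻¹ * (1 + (1 + q⁻¹) * (q - 1)⁻¹)) - 1) * K 0 0
    + 2 * ((q - 1)⁻¹ * ((p0 - K 0 0) + (1 + q⁻¹) * (GG q lam Y p0 p1 - p0)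
     + (1 - q⁻¹)⁻¹ * ((1 + q⁻¹) * (GG q lam Y (K 0 0) (K 1 0) - K 0 0))))
    + (q - 1)⁻¹ * ((1 + q⁻¹) * (2 * (GG q lam Y p0 p1 - GG q lam Y (K 0 0) (K 1 0)) - (p0 - K 0 0))))) := by
  refine hcg ((((A0_sum hq hY hY1).add (A1_sum hq hlam hY hY1 hK hp0 hp1)).add (A2_sum hq hlam hY hY1 hK hp0 hp1)).add
    (A3_sum hq hlam hY hY1 hK hp0 hp1)) ?_ (by ring)
  rintro ⟨i, j, k, e⟩
  dsimp only
  by_cases hi : i < e <;> by_cases hj : j < e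
  · rw [if_neg (by omega), if_neg (by omega), if_neg (by omega), if_pos (by omega)]; ring
  · rw [if_neg (by omega), if_pos (by omega), if_neg (by omega), if_neg (by omega)]; ring
  · rw [if_neg (by omega), if_neg (by omega), if_pos (by omega), if_neg (by omega)]; ring
  · rw [if_pos (by omega), if_neg (by omega), if_neg (by omega), if_neg (by omega)]; ring

end partEleven

section partTwelve

set_option maxRecDepth 10000 in
set_option maxHeartbeats 4000000 in
lemma final_alg {q lam Y P0 P1 P2 u0 u1 b : ℝ} (h0 : q ≠ 0) (h1 : q - 1 ≠ 0) (hY : 1 - Y ≠ 0) (hY' : 1 + Y ≠ 0) (hqY : q - Y ≠ 0)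
    (hD : q - lam * Y + Y ^ 2 ≠ 0) (hE : q * (1 + Y) ^ 2 - Y * lam ^ 2 ≠ 0)
    (hb : b = (lam - 2) / (q - 1)) (e0 : P0 = 1 + q * Y * P2) (e1 : (1 + Y) * P1 = b + Y * lam * P2)
    (e2 : P2 * ((1 - Y) * (q * (1 + Y) ^ 2 - Y * lam ^ 2)) = (1 + Y) * (q * b ^ 2 + Y) - 2 * Y * lam * b) :
    (1 - q⁻¹) ^ 4 * (1 + q⁻¹) * (1 - Y / q)⁻¹ * (
      ((1 - Y)⁻¹ * ((1 + q⁻¹) * (4 * GG q lam Y (P0 / 2 - u0 / q) (P1 / 2 - u1 / q)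
          - 2 * GG q lam Y (1 / 2 * (1 - q⁻¹) * P0 - 1 / (2 * q)) (1 / 2 * (1 - q⁻¹) * P1 - b / (2 * q)) - (P0 / 2 - u0 / q))
        - 2 * (P0 / 2 - u0 / q) * q⁻¹ + (1 / 2 * (1 - q⁻¹) * P0 - 1 / (2 * q)) * q⁻¹))
      + (1 - q⁻¹) * ((1 - Y)⁻¹ * (((1 - q⁻¹)⁻¹ * ((1 - q⁻¹)⁻¹ * (1 + (1 + q⁻¹) * (q - 1)⁻¹)) - 1) * 1
    + 2 * ((q - 1)⁻¹ * ((u0 - 1) + (1 + q⁻¹) * (GG q lam Y u0 u1 - u0)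
     + (1 - q⁻¹)⁻¹ * ((1 + q⁻¹) * (GG q lam Y 1 b - 1))))
    + (q - 1)⁻¹ * ((1 + q⁻¹) * (2 * (GG q lam Y u0 u1 - GG q lam Y 1 b) - (u0 - 1))))))
    = (1/2) * (1 - q⁻¹)⁻¹ * (1 - q⁻¹ ^ 2) ^ 3 * (1 - Y)⁻¹ *
      (1 - (q⁻¹ * lam ^ 2 - 1) * Y + (q⁻¹ * lam ^ 2 - 1) * Y ^ 2 - Y ^ 3)⁻¹ *
      (1 + (1 + q⁻¹ + Y / q - 2 * q⁻¹ * lam) * Y) := by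
  have r1 : (1 - q⁻¹)⁻¹ = q / (q - 1) := by
    have : 1 - q⁻¹ ≠ 0 := by
      rw [show 1 - q⁻¹ = (q - 1) / q by field_simp]; exact div_ne_zero h1 h0
    field_simp
  have r2 : (1 - Y / q)⁻¹ = q / (q - Y) := by
    rw [show 1 - Y / q = (q - Y) / q by field_simp, inv_div]
  have r3 : (1 - (q⁻¹ * lam ^ 2 - 1) * Y + (q⁻¹ * lam ^ 2 - 1) * Y ^ 2 - Y ^ 3)⁻¹ = q / ((1 - Y) * (q * (1 + Y) ^ 2 - Y * lam ^ 2)) := by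
    rw [← inv_div]; congr 1; field_simp; ring
  rw [r1, r2, r3]
  simp only [GG, D1]
  obtain rfl : P2 = ((1 + Y) * (q * b ^ 2 + Y) - 2 * Y * lam * b) / ((1 - Y) * (q * (1 + Y) ^ 2 - Y * lam ^ 2)) := by
    rw [eq_div_iff (mul_ne_zero hY hE)]; exact e2
  obtain rfl : P1 = (b + Y * lam * (((1 + Y) * (q * b ^ 2 + Y) - 2 * Y * lam * b) / ((1 - Y) * (q * (1 + Y) ^ 2 - Y * lam ^ 2)))) / (1 + Y) := by
    rw [eq_div_iff hY']; linear_combination e1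
  subst e0
  subst hb
  clear e1 e2 r1 r2 r3
  obtain ⟨D, hDD⟩ : ∃ D, D = q - lam * Y + Y ^ 2 := ⟨_, rfl⟩
  obtain ⟨E, hEE⟩ : ∃ E, E = q * (1 + Y) ^ 2 - Y * lam ^ 2 := ⟨_, rfl⟩
  rw [← hDD] at hD ⊢
  rw [← hEE] at hE ⊢
  field_simp
  rw [hDD, hEE]
  ring
end partTwelve

section partThirteen

lemma beta_bd {q lam : ℝ} (hq : 3 ≤ q) (hlam : |lam| ≤ q + 1) {β : ℕ → ℝ} (hβ0 : β 0 = 1) (hβ1 : β 1 = (lam - 2) / (q - 1))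
    (hrec : ∀ k, q * β (k + 2) - lam * β (k + 1) + β k = 0) (l : ℕ) : |β l| ≤ 3 ^ l := by
  have key : ∀ l, |β l| ≤ 3 ^ l ∧ |β (l+1)| ≤ 3 ^ (l+1) := by
    intro l
    induction l with
    | zero =>
      refine ⟨by simp [hβ0], ?_⟩
      rw [zero_add, hβ1, abs_div, abs_of_pos (by linarith : 0 < q - 1), div_le_iff₀ (by linarith)]
      have h := abs_le.1 hlam
      rw [abs_le]; constructor <;> linarith
    | succ k ih =>
      refine ⟨ih.2, ?_⟩
      have h1 : q * β (k+2) = lam * β (k+1) - β k := by linear_combination hrec k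
      have h2 : q * |β (k+2)| ≤ (q + 1) * 3 ^ (k+1) + 3 ^ k := by
        calc q * |β (k+2)| = |q * β (k+2)| := by rw [abs_mul, abs_of_pos (by linarith : 0 < q)]
          _ = |lam * β (k+1) - β k| := by rw [h1]
          _ ≤ |lam * β (k+1)| + |β k| := abs_sub _ _
          _ ≤ _ := by
            rw [abs_mul]
            exact add_le_add (mul_le_mul hlam ih.2 (abs_nonneg _) (by linarith)) ih.1
      have h3 : (0:ℝ) < 3 ^ k := by positivity
      have h4 : q * |β (k+2)| ≤ q * 3 ^ (k+2) := by
        refine h2.trans ?_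
        rw [pow_succ, pow_add]
        nlinarith
      exact le_of_mul_le_mul_left h4 (by linarith)
  exact (key l).1

section
variable {q lam : ℝ} {β : ℕ → ℝ} {T : ℝ}

lemma bb_bd (hb : ∀ l, |β l| ≤ 3 ^ l) (l m : ℕ) : |β l * β m| ≤ 3 ^ (l + m) := by
  rw [abs_mul, pow_add]
  exact mul_le_mul (hb l) (hb m) (abs_nonneg _) (by positivity)

lemma ker_bb (hb : ∀ l, |β l| ≤ 3 ^ l) (hrec : ∀ k, q * β (k + 2) - lam * β (k + 1) + β k = 0) :
    Ker q lam (fun l m => β l * β m) where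
  sym l m := mul_comm _ _
  recu l m := by linear_combination (β m) * hrec l
  bd := ⟨1, fun l m => by rw [one_mul]; exact bb_bd hb l m⟩

lemma bsum (hb : ∀ l, |β l| ≤ 3 ^ l) (hT : 0 < T) (hT1 : 9 * T < 1) (l m : ℕ) :
    Summable (fun n => T ^ n * (β (l + n) * β (m + n))) := by
  refine Summable.of_norm_bounded (g := fun n : ℕ => 3 ^ (l + m) * (9 * T) ^ n)
    ((geo (by positivity) hT1).summable.mul_left _) ?_
  intro n
  rw [norm_mul, Real.norm_eq_abs, Real.norm_eq_abs, abs_of_nonneg (by positivity)]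
  refine (mul_le_mul_of_nonneg_left (bb_bd hb _ _) (by positivity)).trans (le_of_eq ?_)
  rw [mul_pow, show (9:ℝ) = 3 ^ 2 by norm_num, ← pow_mul]; ring

/-- the shifted correlation -/
noncomputable def HH (β : ℕ → ℝ) (T : ℝ) (l m : ℕ) : ℝ := ∑' n, T ^ n * (β (l + n) * β (m + n))

lemma HH_has (hb : ∀ l, |β l| ≤ 3 ^ l) (hT : 0 < T) (hT1 : 9 * T < 1) (l m : ℕ) :
    HasSum (fun n => T ^ n * (β (l + n) * β (m + n))) (HH β T l m) := (bsum hb hT hT1 l m).hasSum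

lemma HH_step (hb : ∀ l, |β l| ≤ 3 ^ l) (hT : 0 < T) (hT1 : 9 * T < 1) (l m : ℕ) :
    HH β T l m = β l * β m + T * HH β T (l+1) (m+1) := by
  have h1 := split_one (HH_has hb hT hT1 l m)
  have h2 := (HH_has hb hT hT1 (l+1) (m+1)).mul_left T
  have h3 := h1.unique (hcg h2 (fun n => by
    rw [show l + 1 + n = l + (n + 1) by ring, show m + 1 + n = m + (n + 1) by ring]; ring) rfl)
  simp at h3
  linarith

lemma HH_sym (l m : ℕ) : HH β T l m = HH β T m l := by
  unfold HH; congr 1; funext n; ring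

lemma HH_rec (hb : ∀ l, |β l| ≤ 3 ^ l) (hT : 0 < T) (hT1 : 9 * T < 1)
    (hrec : ∀ k, q * β (k + 2) - lam * β (k + 1) + β k = 0) (l m : ℕ) :
    q * HH β T (l+2) m - lam * HH β T (l+1) m + HH β T l m = 0 := by
  have h := (((HH_has hb hT hT1 (l+2) m).mul_left q).sub ((HH_has hb hT hT1 (l+1) m).mul_left lam)).add (HH_has hb hT hT1 l m)
  refine h.unique (hcg hasSum_zero (fun n => ?_) rfl)
  rw [show l + 2 + n = (l + n) + 2 by ring, show l + 1 + n = (l + n) + 1 by ring]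
  linear_combination T ^ n * β (m + n) * hrec (l + n)

lemma HH_bd (hb : ∀ l, |β l| ≤ 3 ^ l) (hT : 0 < T) (hT1 : 9 * T < 1) (l m : ℕ) :
    |HH β T l m| ≤ (1 - 9 * T)⁻¹ * 3 ^ (l + m) := by
  have h := HH_has hb hT hT1 l m
  rw [← Real.norm_eq_abs, ← h.tsum_eq]
  refine tsum_of_norm_bounded ((geo (by positivity) hT1).mul_right (3 ^ (l+m))) ?_
  intro n
  rw [norm_mul, Real.norm_eq_abs, Real.norm_eq_abs, abs_of_nonneg (by positivity)]
  refine (mul_le_mul_of_nonneg_left (bb_bd hb _ _) (by positivity)).trans (le_of_eq ?_)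
  rw [mul_pow, show (9:ℝ) = 3 ^ 2 by norm_num, ← pow_mul]; ring

/-- the kernel for the B/C part -/
noncomputable def KK (q Y : ℝ) (β : ℕ → ℝ) (l m : ℕ) : ℝ :=
  1 / 2 * (1 - q⁻¹) * HH β (q * Y) l m - β l * β m / (2 * q)

variable {Y : ℝ} (hq : 3 ≤ q) (hY : 0 < Y) (hY1 : 9 * q ^ 3 * Y < 1) (hb : ∀ l, |β l| ≤ 3 ^ l)
  (hrec : ∀ k, q * β (k + 2) - lam * β (k + 1) + β k = 0)

lemma Z_lt (hq : 3 ≤ q) (hY : 0 < Y) (hY1 : 9 * q ^ 3 * Y < 1) : 9 * (q * Y) < 1 := by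
  have : 1 ≤ q ^ 2 := one_le_pow₀ (by linarith)
  have h : 0 < q * Y := by positivity
  nlinarith

lemma Y9_lt (hq : 3 ≤ q) (hY : 0 < Y) (hY1 : 9 * q ^ 3 * Y < 1) : 9 * Y < 1 := by
  have := Z_lt hq hY hY1
  nlinarith

lemma ker_KK (hq : 3 ≤ q) (hY : 0 < Y) (hY1 : 9 * q ^ 3 * Y < 1) (hb : ∀ l, |β l| ≤ 3 ^ l)
  (hrec : ∀ k, q * β (k + 2) - lam * β (k + 1) + β k = 0) : Ker q lam (KK q Y β) := by
  have hZ : 0 < q * Y := by positivity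
  have hZ1 := Z_lt hq hY hY1
  refine ⟨fun l m => by rw [KK, KK, HH_sym, mul_comm (β l)], fun l m => ?_,
    |1 / 2 * (1 - q⁻¹)| * (1 - 9 * (q * Y))⁻¹ + 1 / (2 * q), fun l m => ?_⟩
  · unfold KK
    linear_combination (1 / 2 * (1 - q⁻¹)) * HH_rec hb hZ hZ1 hrec l m - (β m / (2 * q)) * hrec l
  · unfold KK
    refine (abs_sub _ _).trans ?_
    rw [abs_mul, abs_div, abs_of_pos (by positivity : 0 < 2 * q), add_mul, mul_assoc _ (_⁻¹)]
    refine add_le_add (mul_le_mul_of_nonneg_left (HH_bd hb hZ hZ1 l m) (abs_nonneg _)) ?_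
    rw [div_mul_eq_mul_div, one_mul]
    exact div_le_div_of_nonneg_right (bb_bd hb l m) (by positivity)

lemma HH_diag (hq : 3 ≤ q) (hY : 0 < Y) (hY1 : 9 * q ^ 3 * Y < 1) (hb : ∀ l, |β l| ≤ 3 ^ l) (c : ℕ) :
    HasSum (fun r => Y ^ r * HH β (q * Y) (r + c) r) ((q * HH β (q * Y) c 0 - HH β Y c 0) / (q - 1)) := by
  have hZ : 0 < q * Y := by positivity
  have hZ1 := Z_lt hq hY hY1
  have hs : Summable (fun r => Y ^ r * HH β (q * Y) (r + c) r) := by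
    refine Summable.of_norm_bounded (g := fun n : ℕ => (1 - 9 * (q * Y))⁻¹ * 3 ^ c * (9 * Y) ^ n)
      ((geo (by positivity) (Y9_lt hq hY hY1)).summable.mul_left _) ?_
    intro n
    rw [norm_mul, Real.norm_eq_abs, Real.norm_eq_abs, abs_of_nonneg (by positivity)]
    refine (mul_le_mul_of_nonneg_left (HH_bd hb hZ hZ1 _ _) (by positivity)).trans (le_of_eq ?_)
    rw [mul_pow, show (9:ℝ) = 3 ^ 2 by norm_num, ← pow_mul]; ring
  obtain ⟨S, hS⟩ := hs
  have h1 := (split_one hS).mul_left q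
  have h2 := HH_has hb hY (Y9_lt hq hY hY1) c 0
  have h3 := hS.unique (hcg (h2.add h1) (fun n => by
    rw [HH_step hb hZ hZ1, zero_add, add_right_comm n 1 c, add_comm n c]; ring) rfl)
  refine hcg hS (fun _ => rfl) ?_
  rw [eq_div_iff (by linarith)]
  simp at h3
  linarith

lemma KK_diag (hq : 3 ≤ q) (hY : 0 < Y) (hY1 : 9 * q ^ 3 * Y < 1) (hb : ∀ l, |β l| ≤ 3 ^ l) (c : ℕ) :
    HasSum (fun r => Y ^ r * KK q Y β (r + c) r) (HH β (q * Y) c 0 / 2 - HH β Y c 0 / q) := by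
  have h1 := (HH_diag hq hY hY1 hb c).mul_left (1 / 2 * (1 - q⁻¹))
  have h2 := (HH_has hb hY (Y9_lt hq hY hY1) c 0).div_const (2 * q)
  have hq0 : q ≠ 0 := by linarith
  have hq1 : q - 1 ≠ 0 := by linarith
  refine hcg (h1.sub h2) (fun n => ?_) ?_
  · rw [KK, zero_add, add_comm n c]; ring
  · field_simp; ring

lemma P_rel (hb : ∀ l, |β l| ≤ 3 ^ l) (hT : 0 < T) (hT1 : 9 * T < 1)
    (hrec : ∀ k, q * β (k + 2) - lam * β (k + 1) + β k = 0) (hβ0 : β 0 = 1) :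
    HH β T 0 0 = 1 + T * HH β T 1 1 ∧ (q + T) * HH β T 1 0 = q * β 1 + T * lam * HH β T 1 1 ∧
    HH β T 1 1 * ((q - T) * ((q + T) ^ 2 - T * lam ^ 2)) = (q + T) * (q ^ 2 * β 1 ^ 2 + T) - 2 * T * lam * q * β 1 := by
  have a0 := HH_step hb hT hT1 0 0
  have a1 := HH_step hb hT hT1 1 0
  have a2 := HH_step hb hT hT1 1 1
  have r0 := HH_rec hb hT hT1 hrec 0 1
  have r1 := HH_rec hb hT hT1 hrec 0 2
  have r2 := HH_rec hb hT hT1 hrec 0 0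
  have s1 := HH_sym (β := β) (T := T) 0 1
  have s2 := HH_sym (β := β) (T := T) 0 2
  have s3 := HH_sym (β := β) (T := T) 1 2
  norm_num at *
  rw [hβ0] at a0 a1
  generalize HH β T 0 0 = h00 at *
  generalize HH β T 1 0 = h10 at *
  generalize HH β T 1 1 = h11 at *
  generalize HH β T 2 1 = h21 at *
  generalize HH β T 2 2 = h22 at *
  generalize HH β T 2 0 = h20 at *
  generalize HH β T 0 1 = h01 at *
  generalize HH β T 1 2 = h12 at *
  generalize HH β T 0 2 = h02 at *
  subst s1 s2 s3
  have e1 : (q + T) * h01 = q * β 1 + T * lam * h11 := by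
    linear_combination q * a1 + T * r0
  refine ⟨by linear_combination a0, e1, ?_⟩
  -- q²(h11 - b²) = T q² h22
  have e2 : q ^ 2 * (h11 - β 1 ^ 2) = T * (lam ^ 2 * h11 - 2 * lam * h01 + h00) := by
    linear_combination q ^ 2 * a2 + T * q * r1 + T * lam * r0 - T * r2
  linear_combination (q + T) * e2 - 2 * T * lam * e1 + T * (q + T) * a0
end
end partThirteen

section partFourteen

variable {q lam Y : ℝ} {β : ℕ → ℝ}

lemma kap_eq (q : ℝ) (N e n : ℕ) : kap q N e n =
  if 2 * e < N then (if n = e then (1 - q⁻¹) * q⁻¹ ^ N else 0)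
  else if N < 2 * e then (if N = 2 * n then 1/2 * (1 - q⁻¹) * q⁻¹ ^ N else 0)
  else if n = e then 1/2 * (1 - q⁻¹) * q⁻¹ ^ N - q⁻¹ ^ (N+1)
  else if e < n then 1/2 * (1 - q⁻¹) * q⁻¹ ^ (2 * n)
  else 0 := by
  have h : ∀ m : ℕ, q ^ (-(m:ℤ)) = q⁻¹ ^ m := fun m => by
    rw [_root_.zpow_neg, zpow_natCast, inv_pow]
  have h1 := h N
  have h2 := h (N+1)
  have h3 := h (2 * n)
  push_cast at h2 h3
  unfold kap
  rw [h1, h2, h3]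

lemma kap_bd (hq : 3 ≤ q) (N e n : ℕ) : |kap q N e n| ≤ q⁻¹ ^ N := by
  have hr : 0 < q⁻¹ := by positivity
  have hr1 : q⁻¹ ≤ 1 / 3 := by
    rw [← one_div]; exact one_div_le_one_div_of_le (by norm_num) hq
  have hN : 0 < q⁻¹ ^ N := by positivity
  rw [kap_eq]
  generalize q⁻¹ = r at *
  rw [abs_le]
  split_ifs with h1 h2 h3 h4 h5 h6
  · constructor <;> nlinarith
  · constructor <;> linarith
  · constructor <;> nlinarith
  · constructor <;> linarith
  · rw [pow_succ]; constructor <;> nlinarith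
  · have h7 : r ^ (2 * n) ≤ r ^ N := pow_le_pow_of_le_one hr.le (by linarith) (by omega)
    have h8 : 0 < r ^ (2 * n) := by positivity
    constructor <;> nlinarith
  · constructor <;> linarith

/-- the core summand, without the weight `om` -/
noncomputable def CC (q Y : ℝ) (β : ℕ → ℝ) (i j k e n : ℕ) : ℝ :=
  q⁻¹ ^ e * kap q (i + j + k) e n *
    (β (n - min (min i e) (j + k)) * β (n - min (min j e) (i + k)) * (q ^ 3 * Y) ^ n)

lemma CC_bd (hq : 3 ≤ q) (hY : 0 < Y) (hb : ∀ l, |β l| ≤ 3 ^ l) (i j k e n : ℕ) :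
    |CC q Y β i j k e n| ≤ (q⁻¹ ^ i * (q⁻¹ ^ j * q⁻¹ ^ k)) * (q⁻¹ ^ e * (9 * q ^ 3 * Y) ^ n) := by
  have hq0 : 0 < q := by linarith
  have h3 : |β (n - min (min i e) (j + k)) * β (n - min (min j e) (i + k))| ≤ 9 ^ n := by
    refine (bb_bd hb _ _).trans ?_
    rw [show (9:ℝ) = 3 ^ 2 by norm_num, ← pow_mul]
    exact pow_le_pow_right₀ (by norm_num) (by omega)
  unfold CC
  rw [abs_mul, abs_mul, abs_mul _ ((q ^ 3 * Y) ^ n), abs_of_nonneg (by positivity : 0 ≤ q⁻¹ ^ e),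
    abs_of_nonneg (by positivity : 0 ≤ (q ^ 3 * Y) ^ n)]
  calc _ ≤ q⁻¹ ^ e * q⁻¹ ^ (i + j + k) * (9 ^ n * (q ^ 3 * Y) ^ n) := by
        refine mul_le_mul ?_ ?_ (by positivity) (by positivity)
        · exact mul_le_mul_of_nonneg_left (kap_bd hq _ _ _) (by positivity)
        · exact mul_le_mul_of_nonneg_right h3 (by positivity)
    _ = _ := by rw [mul_assoc 9, mul_pow 9]; ring

lemma CC_summable (hq : 3 ≤ q) (hY : 0 < Y) (hY1 : 9 * q ^ 3 * Y < 1) (hb : ∀ l, |β l| ≤ 3 ^ l) :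
    Summable (fun x : (ℕ × ℕ × ℕ) × (ℕ × ℕ) => CC q Y β x.1.1 x.1.2.1 x.1.2.2 x.2.1 x.2.2) := by
  have hq0 : 0 < q := by linarith
  have hg := geo (inv_nonneg.2 (by linarith : 0 ≤ q)) (inv_lt_one_of_one_lt₀ (by linarith : 1 < q))
  have hn := geo (by positivity : 0 ≤ 9 * q ^ 3 * Y) hY1
  refine Summable.of_norm_bounded (hmul (hmul hg (hmul hg hg)) (hmul hg hn)).summable ?_
  rintro ⟨⟨i, j, k⟩, e, n⟩
  exact CC_bd hq hY hb i j k e n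

lemma om_bd (hq : 3 ≤ q) (k : ℕ) : |om q k| ≤ 2 := by
  have hr : 0 < q⁻¹ := by positivity
  have hr1 : q⁻¹ ≤ 1 / 3 := by
    rw [← one_div]; exact one_div_le_one_div_of_le (by norm_num) hq
  unfold om
  split_ifs <;> rw [abs_le] <;> constructor <;> linarith

/-- A part -/
lemma partA (hq : 3 ≤ q) {A : ℝ} (hA : HasSum (WA q Y (fun l m => β l * β m)) A) :
    HasSum (fun x : (ℕ × ℕ × ℕ) × (ℕ × ℕ) => if 2 * x.2.1 < x.1.1 + x.1.2.1 + x.1.2.2 ∧ x.2.2 = x.2.1 then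
      om q x.1.2.2 * CC q Y β x.1.1 x.1.2.1 x.1.2.2 x.2.1 x.2.2 else 0) ((1 - q⁻¹) * A) := by
  have hq0 : q ≠ 0 := by linarith
  have hinj : Function.Injective (fun x : ℕ × ℕ × ℕ × ℕ => (((x.1, x.2.1, x.2.2.1), (x.2.2.2, x.2.2.2)) : (ℕ × ℕ × ℕ) × (ℕ × ℕ))) := by
    rintro ⟨a, b, c, d⟩ ⟨a', b', c', d'⟩ h
    simp only [Prod.mk.injEq] at h ⊢
    tauto
  rw [← hinj.hasSum_iff]
  · refine hcg (hA.mul_left (1 - q⁻¹)) ?_ rfl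
    rintro ⟨i, j, k, e⟩
    simp only [Function.comp, WA, and_true]
    split_ifs with h
    · rw [CC, kap_eq, if_pos h, if_pos rfl]
      obtain ⟨N, hN⟩ : ∃ N, i + j + k = 2 * e + N := ⟨i + j + k - 2 * e, by omega⟩
      rw [hN, show 2 * e + N - 2 * e = N by omega, mul_pow, ← pow_mul, inv_pow, inv_pow, inv_pow]
      field_simp
      rw [show q ^ (3 * e) = q ^ e * q ^ (2 * e) by rw [← pow_add]; ring_nf, pow_add]
      ring
    · simp
  · rintro ⟨⟨i, j, k⟩, e, n⟩ hx
    rw [if_neg]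
    rintro ⟨h1, h2⟩
    dsimp only at h1 h2
    subst h2
    exact hx ⟨(i, j, k, n), rfl⟩

lemma fibBC (hq : 3 ≤ q) (hY : 0 < Y) (hY1 : 9 * q ^ 3 * Y < 1) (hb : ∀ l, |β l| ≤ 3 ^ l) (i j k : ℕ) :
    HasSum (fun y : ℕ × ℕ => if i + j + k ≤ 2 * y.1 then om q k * CC q Y β i j k y.1 y.2 else 0)
      (EE q Y (KK q Y β) (i, j, k)) := by
  have hq0 : q ≠ 0 := by linarith
  have hq1 : q - 1 ≠ 0 := by linarith
  by_cases hpar : (i + j + k) % 2 = 0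
  swap
  · rw [EE, if_neg hpar]
    refine hcg hasSum_zero ?_ rfl
    rintro ⟨e, n⟩
    dsimp only
    split_ifs with h
    · rw [CC, kap_eq, if_neg (by omega), if_pos (by omega), if_neg (by omega)]; ring
    · rfl
  obtain ⟨e0, he0⟩ : ∃ e0, i + j + k = 2 * e0 := ⟨(i + j + k) / 2, by omega⟩
  obtain ⟨l1, hl1⟩ : ∃ l1, e0 = min i (j + k) + l1 := ⟨e0 - min i (j + k), by omega⟩
  obtain ⟨l2, hl2⟩ : ∃ l2, e0 = min j (i + k) + l2 := ⟨e0 - min j (i + k), by omega⟩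
  have m1 : ∀ e m, e0 ≤ e → e0 + m - min (min i e) (j + k) = l1 + m := by intro e m h; omega
  have m2 : ∀ e m, e0 ≤ e → e0 + m - min (min j e) (i + k) = l2 + m := by intro e m h; omega
  have hEE : EE q Y (KK q Y β) (i, j, k) = om q k * (Y ^ e0 * KK q Y β l1 l2) := by
    simp only [EE]
    rw [if_pos hpar, he0, show 2 * e0 / 2 = e0 by omega, show e0 - min i (j + k) = l1 by omega,
      show e0 - min j (i + k) = l2 by omega]
  rw [hEE]
  clear hEE
  have hY3 : ∀ x : ℝ, q⁻¹ ^ e0 * (q⁻¹ ^ (2 * e0) * (q ^ 3 * Y) ^ e0) * x = Y ^ e0 * x := by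
    intro x
    rw [pow_mul, ← mul_pow, ← mul_pow]
    congr 2
    field_simp
  have R1 : HasSum (fun y : ℕ × ℕ => if e0 < y.1 ∧ y.2 = e0 then om q k * CC q Y β i j k y.1 y.2 else 0)
      (om q k * (Y ^ e0 * (1 / 2 * (1 - q⁻¹) * (β l1 * β l2))) * (q - 1)⁻¹) := by
    refine reg _ _ (fun v : ℕ => (e0 + (v + 1), e0)) (fun v => om q k * (Y ^ e0 * (1 / 2 * (1 - q⁻¹) * (β l1 * β l2))) * q⁻¹ ^ (v + 1)) ?_ ?_ ?_ ?_ ?_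
    · intro a b hab; simpa using hab
    · rintro ⟨e, n⟩ ⟨h1, h2⟩
      dsimp only at h1 h2
      exact ⟨e - e0 - 1, by rw [Prod.mk.injEq]; omega⟩
    · intro v; dsimp only; omega
    · intro v
      have k1 := m1 (e0 + (v + 1)) 0 (by omega)
      have k2 := m2 (e0 + (v + 1)) 0 (by omega)
      simp only [add_zero] at k1 k2
      dsimp only
      rw [CC, kap_eq, if_neg (by omega), if_pos (by omega), if_pos (by omega), k1, k2, ← hY3, he0, pow_add]
      ring
    · exact (geoq (by linarith)).mul_left _
  have R2 : HasSum (fun y : ℕ × ℕ => if y.1 = e0 ∧ e0 ≤ y.2 then om q k * CC q Y β i j k y.1 y.2 else 0)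
      (om q k * (Y ^ e0 * (1 / 2 * (1 - q⁻¹))) * HH β (q * Y) l1 l2 - om q k * (Y ^ e0 * (q⁻¹ * (β l1 * β l2)))) := by
    refine reg _ _ (fun m : ℕ => (e0, e0 + m)) (fun m => om q k * (Y ^ e0 * (1 / 2 * (1 - q⁻¹))) * ((q * Y) ^ m * (β (l1 + m) * β (l2 + m)))
       - if m = 0 then om q k * (Y ^ e0 * (q⁻¹ * (β l1 * β l2))) else 0) ?_ ?_ ?_ ?_ ?_
    · intro a b hab; simpa using hab
    · rintro ⟨e, n⟩ ⟨h1, h2⟩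
      dsimp only at h1 h2
      exact ⟨n - e0, by rw [Prod.mk.injEq]; omega⟩
    · intro v; dsimp only; omega
    · intro m
      have k1 := m1 e0 m le_rfl
      have k2 := m2 e0 m le_rfl
      dsimp only
      rw [CC, kap_eq, if_neg (by omega), if_neg (by omega), k1, k2]
      rcases m with _ | m
      · rw [if_pos (by omega), if_pos rfl, he0, ← hY3, ← hY3]
        simp only [add_zero, pow_zero]
        rw [pow_succ]
        ring
      · rw [if_neg (by omega), if_pos (by omega), if_neg (by omega), ← hY3]
        have : q⁻¹ ^ (2 * (e0 + (m+1))) * (q ^ 3 * Y) ^ (e0 + (m + 1)) = (q⁻¹ ^ (2 * e0) * (q ^ 3 * Y) ^ e0) * (q * Y) ^ (m+1) := by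
          rw [mul_add, pow_add, pow_add, pow_mul _ 2 (m+1), show q * Y = q⁻¹ ^ 2 * (q ^ 3 * Y) by field_simp, mul_pow (q⁻¹ ^ 2)]
          ring
        linear_combination (om q k * q⁻¹ ^ e0 * (1 / 2 * (1 - q⁻¹)) * β (l1 + (m+1)) * β (l2 + (m+1))) * this
    · exact ((HH_has hb (by positivity) (Z_lt hq hY hY1) l1 l2).mul_left _).sub (hasSum_ite_eq 0 _)
  refine hcg (R1.add R2) ?_ ?_
  · rintro ⟨e, n⟩
    dsimp only
    by_cases h : i + j + k ≤ 2 * e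
    · rw [if_pos h]
      by_cases h2 : e = e0
      · rw [if_neg (by omega)]
        by_cases h3 : e0 ≤ n
        · rw [if_pos ⟨h2, h3⟩]; ring
        · rw [if_neg (by omega), CC, kap_eq, if_neg (by omega), if_neg (by omega), if_neg (by omega), if_neg (by omega)]; ring
      · rw [if_neg (by omega : ¬ (e = e0 ∧ e0 ≤ n))]
        by_cases h3 : n = e0
        · rw [if_pos (by omega)]; ring
        · rw [if_neg (by omega), CC, kap_eq, if_neg (by omega), if_pos (by omega), if_neg (by omega)]; ring
    · rw [if_neg h, if_neg (by omega), if_neg (by omega)]; ring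
  · unfold KK
    field_simp
    ring

lemma core_sum (hq : 3 ≤ q) (hY : 0 < Y) (hY1 : 9 * q ^ 3 * Y < 1) (hb : ∀ l, |β l| ≤ 3 ^ l) {A B : ℝ}
    (hA : HasSum (WA q Y (fun l m => β l * β m)) A) (hB : HasSum (EE q Y (KK q Y β)) B) :
    HasSum (fun x : (ℕ × ℕ × ℕ) × (ℕ × ℕ) => om q x.1.2.2 * CC q Y β x.1.1 x.1.2.1 x.1.2.2 x.2.1 x.2.2) (B + (1 - q⁻¹) * A) := by
  have hs := CC_summable hq hY hY1 hb
  have h2 : HasSum (fun x : (ℕ × ℕ × ℕ) × (ℕ × ℕ) => if x.1.1 + x.1.2.1 + x.1.2.2 ≤ 2 * x.2.1 then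
      om q x.1.2.2 * CC q Y β x.1.1 x.1.2.1 x.1.2.2 x.2.1 x.2.2 else 0) B := by
    refine fib ?_ (fun x => fibBC hq hY hY1 hb x.1 x.2.1 x.2.2) hB
    refine Summable.of_norm_bounded (hs.norm.mul_left 2) ?_
    intro x
    split_ifs
    · rw [norm_mul]
      exact mul_le_mul_of_nonneg_right (om_bd hq _) (norm_nonneg _)
    · rw [norm_zero]; positivity
  refine hcg (h2.add (partA hq hA)) ?_ rfl
  rintro ⟨⟨i, j, k⟩, e, n⟩
  dsimp only
  by_cases h : i + j + k ≤ 2 * e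
  · rw [if_pos h, if_neg (by omega)]; ring
  · rw [if_neg h]
    by_cases h3 : n = e
    · rw [if_pos (by omega)]; ring
    · rw [if_neg (by omega), CC, kap_eq, if_pos (by omega), if_neg h3]; ring

end partFourteen

section partFifteen

variable {q lam Y : ℝ} {β : ℕ → ℝ}

/-- reorder the indices -/
def reJ : JJ ≃ ((ℕ × ℕ × ℕ) × (ℕ × ℕ)) × (Fin 2 × Fin 2 × ℕ) where
  toFun x := (((x.2.2.2.1, x.2.2.2.2.1, x.2.2.2.2.2.1), (x.2.2.2.2.2.2.1, x.2.2.2.2.2.2.2)), (x.1, x.2.1, x.2.2.1))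
  invFun y := (y.2.1, y.2.2.1, y.2.2.2, y.1.1.1, y.1.1.2.1, y.1.1.2.2, y.1.2.1, y.1.2.2)
  left_inv _ := rfl
  right_inv _ := rfl

lemma wt_sum (hq : 3 ≤ q) (hY : 0 < Y) (hY1 : 9 * q ^ 3 * Y < 1) (hb : ∀ l, |β l| ≤ 3 ^ l) {S : ℝ}
    (hS : HasSum (fun x : (ℕ × ℕ × ℕ) × (ℕ × ℕ) => om q x.1.2.2 * CC q Y β x.1.1 x.1.2.1 x.1.2.2 x.2.1 x.2.2) S) :
    HasSum (wt q (q ^ 3 * Y) β) ((1 - q⁻¹) ^ 4 * (1 + q⁻¹) * (1 - Y / q)⁻¹ * S) := by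
  have hq0 : 0 < q := by linarith
  have hX0 : 0 ≤ Y / q := by positivity
  have hX1 : Y / q < 1 := by
    rw [div_lt_one hq0]; have := Y_lt hq hY hY1; linarith
  have hX := geo hX0 hX1
  have hk : HasSum (fun κ : Fin 2 => q⁻¹ ^ κ.val) (1 + q⁻¹) := by
    have := hasSum_fintype (fun κ : Fin 2 => q⁻¹ ^ κ.val)
    simpa [Fin.sum_univ_two] using this
  have hr : ∀ k : ℕ, HasSum (fun ρ : Fin 2 => if ρ.val ≤ k then q⁻¹ ^ ρ.val else 0) (om q k) := by
    intro k
    have := hasSum_fintype (fun ρ : Fin 2 => if ρ.val ≤ k then q⁻¹ ^ ρ.val else 0)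
    rw [Fin.sum_univ_two] at this
    refine hcg this (fun _ => rfl) ?_
    rcases k with _ | k
    · simp [om]
    · simp [om]
  have hs := CC_summable hq hY hY1 hb
  let f : ((ℕ × ℕ × ℕ) × (ℕ × ℕ)) × (Fin 2 × Fin 2 × ℕ) → ℝ := fun y =>
    ((if y.2.1.val ≤ y.1.1.2.2 then q⁻¹ ^ y.2.1.val else 0) * (q⁻¹ ^ y.2.2.1.val * (Y / q) ^ y.2.2.2)) *
      ((1 - q⁻¹) ^ 4 * CC q Y β y.1.1.1 y.1.1.2.1 y.1.1.2.2 y.1.2.1 y.1.2.2)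
  have hf : HasSum f ((1 - q⁻¹) ^ 4 * (1 + q⁻¹) * (1 - Y / q)⁻¹ * S) := by
    refine fib (g := fun x => (om q x.1.2.2 * ((1 + q⁻¹) * (1 - Y / q)⁻¹)) *
       ((1 - q⁻¹) ^ 4 * CC q Y β x.1.1 x.1.2.1 x.1.2.2 x.2.1 x.2.2)) ?_ ?_ ?_
    · have hb2 := hmul (hs.norm.mul_left |(1 - q⁻¹) ^ 4|).hasSum (hmul hk (hmul hk hX))
      refine Summable.of_norm_bounded hb2.summable ?_
      rintro ⟨x, ρ, κ, a⟩
      simp only [f]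
      rw [norm_mul, norm_mul ((1 - q⁻¹) ^ 4), mul_comm]
      refine mul_le_mul_of_nonneg_left ?_ (by positivity)
      rw [norm_mul, Real.norm_eq_abs (_ * _), abs_of_nonneg (by positivity : 0 ≤ q⁻¹ ^ κ.val * (Y / q) ^ a)]
      refine mul_le_mul_of_nonneg_right ?_ (by positivity)
      split_ifs
      · rw [Real.norm_eq_abs, abs_of_nonneg (by positivity)]
      · rw [norm_zero]; positivity
    · intro x
      exact (hmul (hr x.1.2.2) (hmul hk hX)).mul_right _
    · refine hcg (hS.mul_left ((1 - q⁻¹) ^ 4 * (1 + q⁻¹) * (1 - Y / q)⁻¹)) (fun x => by ring) rfl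
  refine hcg (reJ.hasSum_iff.2 hf) ?_ rfl
  rintro ⟨ρ, κ, a, i, j, k, e, n⟩
  simp only [Function.comp, reJ, Equiv.coe_fn_mk, f, wt, mT, CC]
  have hXa : (Y / q) ^ a = (q ^ (-4:ℤ)) ^ a * (q ^ 3 * Y) ^ a := by
    rw [← mul_pow]
    congr 1
    rw [show (-4:ℤ) = -((4:ℕ):ℤ) by norm_num, _root_.zpow_neg, zpow_natCast]
    field_simp
  rw [hXa, pow_add]
  split_ifs <;> ring

lemma wt_total (hq : 3 ≤ q) (hlam : |lam| ≤ q + 1) (hY : 0 < Y) (hY1 : 9 * q ^ 3 * Y < 1)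
    (hβ0 : β 0 = 1) (hβ1 : β 1 = (lam - 2) / (q - 1))
    (hrec : ∀ k, q * β (k + 2) - lam * β (k + 1) + β k = 0) :
    HasSum (wt q (q ^ 3 * Y) β) ((1/2) * (1 - q⁻¹)⁻¹ * (1 - q⁻¹ ^ 2) ^ 3 * (1 - Y)⁻¹ *
      (1 - (q⁻¹ * lam ^ 2 - 1) * Y + (q⁻¹ * lam ^ 2 - 1) * Y ^ 2 - Y ^ 3)⁻¹ *
      (1 + (1 + q⁻¹ + Y / q - 2 * q⁻¹ * lam) * Y)) := by
  have hb := beta_bd hq hlam hβ0 hβ1 hrec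
  have hq0 : 0 < q := by linarith
  have hYl := Y_lt hq hY hY1
  have hZ : 0 < q * Y := by positivity
  have hZ1 := Z_lt hq hY hY1
  have hY9 := Y9_lt hq hY hY1
  have hu0 : HasSum (fun r => Y ^ r * (β r * β r)) (HH β Y 0 0) :=
    hcg (HH_has hb hY hY9 0 0) (fun r => by rw [zero_add]) rfl
  have hu1 : HasSum (fun r => Y ^ r * (β (r+1) * β r)) (HH β Y 1 0) :=
    hcg (HH_has hb hY hY9 1 0) (fun r => by rw [zero_add, add_comm 1 r]) rfl
  have hA := A_sum hq hlam hY hY1 (ker_bb hb hrec) hu0 hu1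
  have hB := bc_sum hq hlam hY hY1 (ker_KK hq hY hY1 hb hrec) (KK_diag hq hY hY1 hb 0) (KK_diag hq hY hY1 hb 1)
  have h := wt_sum hq hY hY1 hb (core_sum hq hY hY1 hb hA hB)
  obtain ⟨r0, r1, r2⟩ := P_rel hb hZ hZ1 hrec hβ0
  have hl2 : lam ^ 2 ≤ (q + 1) ^ 2 := by
    rw [← sq_abs lam]; exact pow_le_pow_left₀ (abs_nonneg _) hlam 2
  have hE : q * (1 + Y) ^ 2 - Y * lam ^ 2 ≠ 0 := by
    have h1 : Y * lam ^ 2 ≤ Y * (q + 1) ^ 2 := mul_le_mul_of_nonneg_left hl2 hY.le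
    have h2 : Y * (q + 1) ^ 2 ≤ 1 := by
      have : (q + 1) ^ 2 ≤ 9 * q ^ 3 := by nlinarith [sq_nonneg q, pow_pos hq0 3, mul_pos hq0 hq0]
      nlinarith
    nlinarith
  refine hcg h (fun _ => rfl) ?_
  rw [← final_alg (P0 := HH β (q * Y) 0 0) (P1 := HH β (q * Y) 1 0) (P2 := HH β (q * Y) 1 1) (u0 := HH β Y 0 0) (u1 := HH β Y 1 0)
    hq0.ne' (by linarith) (by linarith) (by linarith) (by linarith) (D1_ne hq hlam hY hY1) hE hβ1 r0 ?_ ?_]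
  · simp only [KK, hβ0, hβ1, mul_one]
  · have := r1
    have h5 : q * ((1 + Y) * HH β (q * Y) 1 0) = q * (β 1 + Y * lam * HH β (q * Y) 1 1) := by linear_combination r1
    exact mul_left_cancel₀ hq0.ne' h5
  · refine mul_left_cancel₀ (pow_ne_zero 2 hq0.ne') ?_
    linear_combination r2

theorem final_thm (p : ℕ) [Fact p.Prime] (hp : Odd p) (q lam : ℝ) (hq : q = p) (hlam : |lam| ≤ q + 1)
    (β : ℕ → ℝ) (hβ0 : β 0 = 1) (hβ1 : β 1 = (lam - 2) / (q - 1))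
    (hrec : ∀ k, q * β (k + 2) - lam * β (k + 1) + β k = 0) (s : ℝ) (hs : 3 < s) :
    HasSum (wt (p:ℝ) ((p:ℝ) ^ (-2 * (s-2))) β)
      ((1/2) * (1 - q⁻¹)⁻¹ * (1 - q⁻¹ ^ 2) ^ 3 * (1 - q ^ (1 - 2 * s))⁻¹ *
      (1 - (q⁻¹ * lam ^ 2 - 1) * q ^ (1 - 2 * s) + (q⁻¹ * lam ^ 2 - 1) * q ^ (2 - 4 * s) - q ^ (3 - 6 * s))⁻¹ *
      (1 + (1 + q⁻¹ + q ^ (-(2 * s)) - 2 * q⁻¹ * lam) * q ^ (1 - 2 * s))) := by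
  subst hq
  have hp3 : (3:ℝ) ≤ p := by
    have h2 := (Fact.out : p.Prime).two_le
    have : 3 ≤ p := by rcases hp with ⟨k, hk⟩; omega
    exact_mod_cast this
  have hp0 : (0:ℝ) < p := by linarith
  set q : ℝ := (p:ℝ)
  have e1 : q ^ (2 - 4 * s) = (q ^ (1 - 2 * s)) ^ 2 := by
    rw [← Real.rpow_natCast, ← Real.rpow_mul hp0.le]; congr 1; push_cast; ring
  have e2 : q ^ (3 - 6 * s) = (q ^ (1 - 2 * s)) ^ 3 := by
    rw [← Real.rpow_natCast, ← Real.rpow_mul hp0.le]; congr 1; push_cast; ring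
  have e3 : q ^ (-(2 * s)) = q ^ (1 - 2 * s) / q := by
    rw [eq_div_iff hp0.ne', ← Real.rpow_add_one hp0.ne']; congr 1; ring
  have e4 : q ^ (-2 * (s - 2)) = q ^ 3 * q ^ (1 - 2 * s) := by
    rw [← Real.rpow_natCast, ← Real.rpow_add hp0]; congr 1; push_cast; ring
  rw [e1, e2, e3, e4]
  refine wt_total hp3 hlam (Real.rpow_pos_of_pos hp0 _) ?_ hβ0 hβ1 hrec
  rw [mul_assoc, ← e4]
  have h6 : q ^ (-2 * (s - 2)) < q ^ (-2:ℝ) := Real.rpow_lt_rpow_of_exponent_lt (by linarith) (by linarith)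
  have h7 : q ^ (-2:ℝ) ≤ 1 / 9 := by
    rw [Real.rpow_neg hp0.le, ← one_div]
    refine one_div_le_one_div_of_le (by norm_num) ?_
    rw [Real.rpow_two]; nlinarith
  linarith

end partFifteen

/-- the split unramified case (`d` a square in `ℤ_pˣ`): explicit value of
the local zeta integral `∫_{V_d(ℤ_p)} f_s`. -/
theorem stmt17 (p : ℕ) [Fact p.Prime] (hp : Odd p) (q lam : ℝ) (hq : q = p)
    (hlam : |lam| ≤ q + 1)
    (d : ℤ_[p]) (hdval : ‖(d : ℚ_[p])‖ = 1 ∨ ‖(d : ℚ_[p])‖ = (p : ℝ)⁻¹)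
    (hd : ∃ c : ℤ_[p]ˣ, d = (c : ℤ_[p]) ^ 2)
    (β : ℕ → ℝ) (hβ0 : β 0 = 1) (hβ1 : β 1 = (lam - 2) / (q - 1))
    (hrec : ∀ k : ℕ, q * β (k + 2) - lam * β (k + 1) + β k = 0)
    (μ : Measure (VV p)) [μ.IsAddHaarMeasure]
    (hμ : μ {v : VV p | (∀ i j, ‖v.1 i j‖ ≤ 1) ∧ (∀ i j, ‖v.2 i j‖ ≤ 1)} = 1) :
    ∃ s₀ : ℝ, ∀ s : ℝ, s₀ < s →
      IntegrableOn (fs p d β s) (Vd p d) μ ∧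
      ∫ v in Vd p d, fs p d β s v ∂μ =
        (1 / 2) * (1 - q⁻¹)⁻¹ * (1 - q⁻¹ ^ 2) ^ 3 * (1 - q ^ (1 - 2 * s))⁻¹ *
          (1 - (q⁻¹ * lam ^ 2 - 1) * q ^ (1 - 2 * s) +
              (q⁻¹ * lam ^ 2 - 1) * q ^ (2 - 4 * s) - q ^ (3 - 6 * s))⁻¹ *
          (1 + (1 + q⁻¹ + q ^ (-(2 * s)) - 2 * q⁻¹ * lam) * q ^ (1 - 2 * s)) := by
  exact ⟨3, fun s hs => main_int hp d hd β μ hμ s _ (final_thm p hp q lam hq hlam β hβ0 hβ1 hrec s hs)⟩
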